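/- Let u be a monotone traveling wave solution of the balanced Allen-Cahn equation in the plane. Then there exists λ₁ ∈ ℝ such that for every λ > λ₁ the reflected function u_λ(x,y) := u(2λ − x, y) satisfies u_λ(x,y) > u(x,y) for all (x,y) with x > λ and y ∈ ℝ. -/

import Mathlib

open Real Filter MeasureTheory Metric

noncomputable def pdx (u : ℝ → ℝ → ℝ) (x y : ℝ) : ℝ := deriv (fun t => u t y) x

noncomputable def pdy (u : ℝ → ℝ → ℝ) (x y : ℝ) : ℝ := deriv (fun t => u x t) y

noncomputable def pdxx (u : ℝ → ℝ → ℝ) (x y : ℝ) : ℝ := deriv (fun t => pdx u t y) x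

noncomputable def pdyy (u : ℝ → ℝ → ℝ) (x y : ℝ) : ℝ := deriv (fun t => pdy u x t) y

/-- `F` is a balanced double-well potential. -/
def BalancedDoubleWell (F : ℝ → ℝ) : Prop :=
  ContDiff ℝ 3 F ∧ deriv F (-1) = 0 ∧ deriv F 1 = 0 ∧
  0 < deriv (deriv F) (-1) ∧ 0 < deriv (deriv F) 1 ∧
  (∀ s ∈ Set.Ioo (-1 : ℝ) 0, 0 < deriv F s) ∧
  (∀ s ∈ Set.Ioo (0 : ℝ) 1, deriv F s < 0) ∧
  F (-1) = 0 ∧ F 1 = 0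

/-- `u` is a `C³` solution of `Δu + c uᵧ = F'(u)` on `ℝ²` with `|u| ≤ 1`
which is monotone in `y`. -/
def IsSolution (F : ℝ → ℝ) (c : ℝ) (u : ℝ → ℝ → ℝ) : Prop :=
  ContDiff ℝ 3 (fun p : ℝ × ℝ => u p.1 p.2) ∧
  (∀ x y : ℝ, pdxx u x y + pdyy u x y + c * pdy u x y = deriv F (u x y)) ∧
  (∀ x y : ℝ, |u x y| ≤ 1) ∧
  (∀ x y : ℝ, 0 < pdy u x y)

/-- A monotone traveling wave solution connecting `-1` to `1`. -/
def IsTravelingWave (F : ℝ → ℝ) (c : ℝ) (u : ℝ → ℝ → ℝ) : Prop :=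
  IsSolution F c u ∧
  (∀ x : ℝ, Tendsto (fun y => u x y) atTop (nhds 1)) ∧
  (∀ x : ℝ, Tendsto (fun y => u x y) atBot (nhds (-1)))

/-!
Since `u_y > 0` decays at infinity, the energy and momentum identities give `u_x² / 2 - F(u) → 0`
at infinity. So, outside a vertical strip, `u_x` is bounded away from zero wherever `u` stays away
from the wells `±1`, and a comparison of energy fluxes determines its sign there. Each horizontal
slice of `u` at a large height therefore rises through the intermediate values once and falls
through them once.

Near the wells `F` is convex, so the maximum principle compares `u` with a reflection of itself once
they are compared at the intermediate values. This is achieved by sliding: the reflection is larger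
after a large shift in `y`, and the shift is then lowered to zero. The plane is exhausted by the
regions below heights `n`, on top of which only `u(x, n) < u(2λ - x, n) + d` is available. Raising
the reflection by `d` there breaks the supersolution property at the intermediate values, which is
restored by bending the axis with `y`, because `u_x` is bounded away from zero. The inequality on
top holds for infinitely many `n`: otherwise, the opposite reflection inequality would hold about
every vertical line, against `u → -1` as `|x| → ∞`.
-/

/-! ### Partial derivatives of functions of two variables -/

section PartialDerivatives

variable {f : ℝ → ℝ → ℝ}

theorem pdx_eq_fderiv {p : ℝ × ℝ} (hf : DifferentiableAt ℝ (fun p : ℝ × ℝ => f p.1 p.2) p) :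
    pdx f p.1 p.2 = fderiv ℝ (fun p : ℝ × ℝ => f p.1 p.2) p (1, 0) := by
  have hline : HasDerivAt (fun r : ℝ => (r, p.2)) ((1 : ℝ), (0 : ℝ)) p.1 :=
    (hasDerivAt_id _).prodMk (hasDerivAt_const _ _)
  exact (hf.hasFDerivAt.comp_hasDerivAt p.1 hline).deriv

theorem pdy_eq_fderiv {p : ℝ × ℝ} (hf : DifferentiableAt ℝ (fun p : ℝ × ℝ => f p.1 p.2) p) :
    pdy f p.1 p.2 = fderiv ℝ (fun p : ℝ × ℝ => f p.1 p.2) p (0, 1) := by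
  have hline : HasDerivAt (fun r : ℝ => (p.1, r)) ((0 : ℝ), (1 : ℝ)) p.2 :=
    (hasDerivAt_const _ _).prodMk (hasDerivAt_id _)
  exact (hf.hasFDerivAt.comp_hasDerivAt p.2 hline).deriv

theorem hasDerivAt_comp_curve {a b : ℝ → ℝ} {a' b' t : ℝ}
    (hf : DifferentiableAt ℝ (fun p : ℝ × ℝ => f p.1 p.2) (a t, b t))
    (ha : HasDerivAt a a' t) (hb : HasDerivAt b b' t) :
    HasDerivAt (fun s => f (a s) (b s)) (a' * pdx f (a t) (b t) + b' * pdy f (a t) (b t)) t := by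
  refine (hf.hasFDerivAt.comp_hasDerivAt t (ha.prodMk hb)).congr_deriv ?_
  have hsplit : ((a', b') : ℝ × ℝ) = a' • (1, 0) + b' • (0, 1) := by simp
  rw [hsplit, map_add, map_smul, map_smul, ← pdx_eq_fderiv hf, ← pdy_eq_fderiv hf, smul_eq_mul,
    smul_eq_mul]

theorem hasDerivAt_pdx {x y : ℝ} (hf : DifferentiableAt ℝ (fun p : ℝ × ℝ => f p.1 p.2) (x, y)) :
    HasDerivAt (fun t => f t y) (pdx f x y) x := by
  simpa using hasDerivAt_comp_curve hf (hasDerivAt_id x) (hasDerivAt_const x y)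

theorem hasDerivAt_pdy {x y : ℝ} (hf : DifferentiableAt ℝ (fun p : ℝ × ℝ => f p.1 p.2) (x, y)) :
    HasDerivAt (fun t => f x t) (pdy f x y) y := by
  simpa using hasDerivAt_comp_curve hf (hasDerivAt_const y x) (hasDerivAt_id y)

theorem contDiff_pdx {n : ℕ} (hf : ContDiff ℝ (n + 1) (fun p : ℝ × ℝ => f p.1 p.2)) :
    ContDiff ℝ n (fun p : ℝ × ℝ => pdx f p.1 p.2) := by
  have hd : Differentiable ℝ (fun p : ℝ × ℝ => f p.1 p.2) := hf.differentiable (by simp)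
  simp_rw [fun p => pdx_eq_fderiv (hd p)]
  exact (hf.fderiv_right le_rfl).clm_apply contDiff_const

theorem contDiff_pdy {n : ℕ} (hf : ContDiff ℝ (n + 1) (fun p : ℝ × ℝ => f p.1 p.2)) :
    ContDiff ℝ n (fun p : ℝ × ℝ => pdy f p.1 p.2) := by
  have hd : Differentiable ℝ (fun p : ℝ × ℝ => f p.1 p.2) := hf.differentiable (by simp)
  simp_rw [fun p => pdy_eq_fderiv (hd p)]
  exact (hf.fderiv_right le_rfl).clm_apply contDiff_const

theorem pdx_pdy_comm (hf : ContDiff ℝ 2 (fun p : ℝ × ℝ => f p.1 p.2)) (x y : ℝ) :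
    pdx (pdy f) x y = pdy (pdx f) x y := by
  have hd : Differentiable ℝ (fun p : ℝ × ℝ => f p.1 p.2) := hf.differentiable (by simp)
  have hx := (contDiff_pdx (n := 1) hf).differentiable one_ne_zero (x, y)
  have hy := (contDiff_pdy (n := 1) hf).differentiable one_ne_zero (x, y)
  have hdd : DifferentiableAt ℝ (fderiv ℝ (fun p : ℝ × ℝ => f p.1 p.2)) (x, y) :=
    (hf.fderiv_right (m := 1) (by norm_num)).differentiable one_ne_zero _
  have hsymm : IsSymmSndFDerivAt ℝ (fun p : ℝ × ℝ => f p.1 p.2) (x, y) :=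
    hf.contDiffAt.isSymmSndFDerivAt (by simp)
  refine (pdx_eq_fderiv hy).trans (Eq.trans ?_ (pdy_eq_fderiv hx).symm)
  simp_rw [fun p => pdx_eq_fderiv (hd p), fun p => pdy_eq_fderiv (hd p)]
  rw [fderiv_clm_apply hdd (differentiableAt_const _),
    fderiv_clm_apply hdd (differentiableAt_const _)]
  simpa using hsymm (1, 0) (0, 1)

theorem pdyy_pdx (hf : ContDiff ℝ 3 (fun p : ℝ × ℝ => f p.1 p.2)) (x y : ℝ) :
    pdyy (pdx f) x y = pdx (pdyy f) x y := by
  have hcomm : pdy (pdx f) = pdx (pdy f) :=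
    funext₂ fun a b => (pdx_pdy_comm (hf.of_le (by norm_num)) a b).symm
  change pdy (pdy (pdx f)) x y = pdx (pdy (pdy f)) x y
  rw [hcomm, pdx_pdy_comm (contDiff_pdy (n := 2) hf)]

theorem pdxx_pdy (hf : ContDiff ℝ 3 (fun p : ℝ × ℝ => f p.1 p.2)) (x y : ℝ) :
    pdxx (pdy f) x y = pdy (pdxx f) x y := by
  have hcomm : pdx (pdy f) = pdy (pdx f) :=
    funext₂ fun a b => pdx_pdy_comm (hf.of_le (by norm_num)) a b
  change pdx (pdx (pdy f)) x y = pdy (pdx (pdx f)) x y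
  rw [hcomm, pdx_pdy_comm (contDiff_pdx (n := 2) hf)]

theorem pdx_comp_neg (f : ℝ → ℝ → ℝ) (x y : ℝ) :
    pdx (fun x y => f (-x) y) x y = -pdx f (-x) y :=
  deriv_comp_neg (fun t => f t y) x

theorem pdxx_comp_neg (f : ℝ → ℝ → ℝ) (x y : ℝ) :
    pdxx (fun x y => f (-x) y) x y = pdxx f (-x) y := by
  simp only [pdxx, pdx_comp_neg, deriv.fun_neg, deriv_comp_neg (fun t => pdx f t y), neg_neg]

theorem continuous_slice_fst (hf : Continuous (fun p : ℝ × ℝ => f p.1 p.2)) (y : ℝ) :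
    Continuous (fun x => f x y) :=
  hf.comp (by fun_prop : Continuous fun t : ℝ => (t, y))

theorem continuous_slice_snd (hf : Continuous (fun p : ℝ × ℝ => f p.1 p.2)) (x : ℝ) :
    Continuous (fun y => f x y) :=
  hf.comp (by fun_prop : Continuous fun t : ℝ => (x, t))

theorem integral_divergence {g : ℝ → ℝ → ℝ}
    (hf : ContDiff ℝ 1 (fun p : ℝ × ℝ => f p.1 p.2))
    (hg : ContDiff ℝ 1 (fun p : ℝ × ℝ => g p.1 p.2)) (a b p q : ℝ) :
    ∫ x in a..b, ∫ y in p..q, (pdx f x y + pdy g x y) =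
      ((∫ x in a..b, g x q) - ∫ x in a..b, g x p) +
        ((∫ y in p..q, f b y) - ∫ y in p..q, f a y) := by
  have hdf := hf.differentiable one_ne_zero
  have hdg := hg.differentiable one_ne_zero
  have hfc : Continuous (fun p : ℝ × ℝ => fderiv ℝ (fun p : ℝ × ℝ => f p.1 p.2) p (1, 0)) :=
    (hf.continuous_fderiv one_ne_zero).clm_apply continuous_const
  have hgc : Continuous (fun p : ℝ × ℝ => fderiv ℝ (fun p : ℝ × ℝ => g p.1 p.2) p (0, 1)) :=
    (hg.continuous_fderiv one_ne_zero).clm_apply continuous_const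
  simp_rw [fun x y => pdx_eq_fderiv (hdf (x, y)), fun x y => pdy_eq_fderiv (hdg (x, y))]
  rw [integral2_divergence_prod_of_hasFDerivAt (fun p : ℝ × ℝ => f p.1 p.2)
    (fun p : ℝ × ℝ => g p.1 p.2) _ _ a p b q hf.continuous.continuousOn hg.continuous.continuousOn
    (fun x _ => (hdf x).hasFDerivAt) (fun x _ => (hdg x).hasFDerivAt)
    ((hfc.add hgc).continuousOn.integrableOn_compact (isCompact_uIcc.prod isCompact_uIcc))]
  ring

end PartialDerivatives

/-! ### Second order jets and minimum principles -/

/-- `g` is differentiable near `x`, with first and second derivatives `a` and `b` at `x`. This is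
all the regularity which the second derivative test at `x` requires. -/
def HasJet2 (g : ℝ → ℝ) (x a b : ℝ) : Prop :=
  ∃ d : ℝ → ℝ, (∀ᶠ t in nhds x, HasDerivAt g (d t) t) ∧ d x = a ∧ HasDerivAt d b x

namespace HasJet2

variable {g h : ℝ → ℝ} {x a b a' b' : ℝ}

theorem of_hasDerivAt {d : ℝ → ℝ} (hg : ∀ t, HasDerivAt g (d t) t) (hd : HasDerivAt d b x) :
    HasJet2 g x (d x) b :=
  ⟨d, Eventually.of_forall hg, rfl, hd⟩

theorem const (r : ℝ) : HasJet2 (fun _ => r) x 0 0 :=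
  of_hasDerivAt (d := fun _ => 0) (fun _ => hasDerivAt_const _ _) (hasDerivAt_const _ _)

theorem add (hg : HasJet2 g x a b) (hh : HasJet2 h x a' b') :
    HasJet2 (fun t => g t + h t) x (a + a') (b + b') := by
  obtain ⟨d, hgd, rfl, hd⟩ := hg
  obtain ⟨e, hhe, rfl, he⟩ := hh
  exact ⟨fun t => d t + e t, by filter_upwards [hgd, hhe] with t ht ht' using ht.add ht', rfl,
    hd.add he⟩

theorem const_mul (r : ℝ) (hg : HasJet2 g x a b) :
    HasJet2 (fun t => r * g t) x (r * a) (r * b) := by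
  obtain ⟨d, hgd, rfl, hd⟩ := hg
  exact ⟨fun t => r * d t, by filter_upwards [hgd] with t ht using ht.const_mul r, rfl,
    hd.const_mul r⟩

theorem comp_add (s : ℝ) (hg : HasJet2 g (x + s) a b) : HasJet2 (fun t => g (t + s)) x a b := by
  obtain ⟨d, hgd, rfl, hd⟩ := hg
  have hshift : Tendsto (fun t => t + s) (nhds x) (nhds (x + s)) :=
    (continuous_id.add continuous_const).tendsto x
  refine ⟨fun t => d (t + s), ?_, rfl, hd.comp_add_const x s⟩
  filter_upwards [hshift.eventually hgd] with t ht using ht.comp_add_const t s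

theorem comp_const_sub (s : ℝ) (hg : HasJet2 g (s - x) a b) :
    HasJet2 (fun t => g (s - t)) x (-a) b := by
  obtain ⟨d, hgd, rfl, hd⟩ := hg
  have hreflect : Tendsto (fun t => s - t) (nhds x) (nhds (s - x)) :=
    (continuous_const.sub continuous_id).tendsto x
  refine ⟨fun t => -d (s - t), ?_, rfl, ?_⟩
  · filter_upwards [hreflect.eventually hgd] with t ht using ht.comp_const_sub s t
  · simpa using (hd.comp_const_sub s x).fun_neg

theorem fst_eq_zero (hg : HasJet2 g x a b) (hm : IsLocalMin g x) : a = 0 := by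
  obtain ⟨d, hgd, rfl, -⟩ := hg
  exact hm.hasDerivAt_eq_zero hgd.self_of_nhds

theorem snd_nonneg (hg : HasJet2 g x a b) (hm : IsLocalMin g x) : 0 ≤ b := by
  by_contra! hb
  have ha := hg.fst_eq_zero hm
  obtain ⟨d, hgd, rfl, hd⟩ := hg
  have hderiv : deriv g =ᶠ[nhds x] d := hgd.mono fun t ht => ht.deriv
  have hderiv2 : deriv (deriv g) x = b := by rw [hderiv.deriv_eq, hd.deriv]
  have hmax : IsLocalMax g x := isLocalMax_of_deriv_deriv_neg (hderiv2 ▸ hb)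
    (by rw [hderiv.self_of_nhds, ha]) hgd.self_of_nhds.continuousAt
  have hconst : g =ᶠ[nhds x] fun _ => g x := by
    filter_upwards [hm, hmax] with t hle hge using le_antisymm hge hle
  have hzero : deriv (deriv g) x = 0 := by rw [hconst.deriv.deriv_eq]; simp
  linarith

end HasJet2

/-- `f` has second order jets at `(x, y)` along both coordinate lines, and
`f_xx + f_yy + c f_y = l` there. -/
def HasDriftLaplacian (c : ℝ) (f : ℝ → ℝ → ℝ) (x y l : ℝ) : Prop :=
  ∃ a b a' b', HasJet2 (fun t => f t y) x a b ∧ HasJet2 (fun t => f x t) y a' b' ∧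
    b + b' + c * a' = l

namespace HasDriftLaplacian

variable {c : ℝ} {f g : ℝ → ℝ → ℝ} {x y l m : ℝ}

theorem of_contDiff (hf : ContDiff ℝ 2 (fun p : ℝ × ℝ => f p.1 p.2)) (x y : ℝ) :
    HasDriftLaplacian c f x y (pdxx f x y + pdyy f x y + c * pdy f x y) := by
  have hd := hf.differentiable two_ne_zero
  have hx := (contDiff_pdx (n := 1) hf).differentiable one_ne_zero
  have hy := (contDiff_pdy (n := 1) hf).differentiable one_ne_zero
  exact ⟨_, _, _, _,
    HasJet2.of_hasDerivAt (fun t => hasDerivAt_pdx (hd (t, y))) (hasDerivAt_pdx (hx (x, y))),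
    HasJet2.of_hasDerivAt (fun t => hasDerivAt_pdy (hd (x, t))) (hasDerivAt_pdy (hy (x, y))), rfl⟩

theorem add (hf : HasDriftLaplacian c f x y l) (hg : HasDriftLaplacian c g x y m) :
    HasDriftLaplacian c (fun x y => f x y + g x y) x y (l + m) := by
  obtain ⟨_, _, _, _, hfx, hfy, rfl⟩ := hf
  obtain ⟨_, _, _, _, hgx, hgy, rfl⟩ := hg
  exact ⟨_, _, _, _, hfx.add hgx, hfy.add hgy, by ring⟩

theorem const_mul (r : ℝ) (hf : HasDriftLaplacian c f x y l) :
    HasDriftLaplacian c (fun x y => r * f x y) x y (r * l) := by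
  obtain ⟨_, _, _, _, hfx, hfy, rfl⟩ := hf
  exact ⟨_, _, _, _, hfx.const_mul r, hfy.const_mul r, by ring⟩

theorem sub (hf : HasDriftLaplacian c f x y l) (hg : HasDriftLaplacian c g x y m) :
    HasDriftLaplacian c (fun x y => f x y - g x y) x y (l - m) := by
  simpa only [sub_eq_add_neg, neg_one_mul] using hf.add (hg.const_mul (-1))

theorem translate (s t : ℝ) (hf : HasDriftLaplacian c f (x + s) (y + t) l) :
    HasDriftLaplacian c (fun x y => f (x + s) (y + t)) x y l := by
  obtain ⟨_, _, _, _, hfx, hfy, rfl⟩ := hf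
  exact ⟨_, _, _, _, hfx.comp_add s, hfy.comp_add t, rfl⟩

theorem reflect (s t : ℝ) (hf : HasDriftLaplacian c f (s - x) (y + t) l) :
    HasDriftLaplacian c (fun x y => f (s - x) (y + t)) x y l := by
  obtain ⟨_, _, _, _, hfx, hfy, rfl⟩ := hf
  exact ⟨_, _, _, _, hfx.comp_const_sub s, hfy.comp_add t, rfl⟩

theorem nonneg_of_isLocalMin (hf : HasDriftLaplacian c f x y l)
    (hm : IsLocalMin (fun p : ℝ × ℝ => f p.1 p.2) (x, y)) : 0 ≤ l := by
  obtain ⟨a, b, a', b', hfx, hfy, rfl⟩ := hf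
  have hmx : IsLocalMin (fun t => f t y) x :=
    hm.comp_tendsto (g := fun t => (t, y)) ((Continuous.prodMk_left y).tendsto x)
  have hmy : IsLocalMin (fun t => f x t) y :=
    hm.comp_tendsto (g := fun t => (x, t)) ((Continuous.prodMk_right x).tendsto y)
  rw [hfy.fst_eq_zero hmy, mul_zero, add_zero]
  exact add_nonneg (hfx.snd_nonneg hmx) (hfy.snd_nonneg hmy)

end HasDriftLaplacian

theorem nonneg_of_driftLaplacian_neg_of_isCompact {c : ℝ} {D : Set (ℝ × ℝ)} {f : ℝ → ℝ → ℝ}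
    (hD : IsCompact D) (hf : ContinuousOn (fun p : ℝ × ℝ => f p.1 p.2) D)
    (hneg : ∀ x y, (x, y) ∈ D → f x y < 0 →
      D ∈ nhds (x, y) ∧ ∃ l < 0, HasDriftLaplacian c f x y l)
    {x y : ℝ} (hxy : (x, y) ∈ D) : 0 ≤ f x y := by
  obtain ⟨⟨a, b⟩, hab, hmin⟩ := hD.exists_isMinOn ⟨_, hxy⟩ hf
  by_contra! hlt
  have hle : f a b ≤ f x y := hmin hxy
  obtain ⟨hnhds, l, hl, hL⟩ := hneg a b hab (hle.trans_lt hlt)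
  exact hl.not_ge (hL.nonneg_of_isLocalMin (hmin.isLocalMin hnhds))

theorem mul_le_abs_of_abs_le_one {c t : ℝ} (ht : |t| ≤ 1) : c * t ≤ |c| :=
  (le_abs_self _).trans (by rw [abs_mul]; exact mul_le_of_le_one_right (abs_nonneg c) ht)

section CoercivePenalty

theorem hasJet2_sqrt_one_add_sq (x : ℝ) :
    ∃ a b, HasJet2 (fun t => √(1 + t ^ 2)) x a b ∧ |a| ≤ 1 ∧ b ≤ 1 := by
  have hpos : ∀ t : ℝ, 0 < 1 + t ^ 2 := fun t => by positivity
  have hsqrt : ∀ t : ℝ, 0 < √(1 + t ^ 2) := fun t => Real.sqrt_pos.2 (hpos t)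
  have hfst : ∀ t : ℝ, HasDerivAt (fun t => √(1 + t ^ 2)) (t / √(1 + t ^ 2)) t := by
    intro t
    have hinner : HasDerivAt (fun t : ℝ => 1 + t ^ 2) (2 * t) t := by
      simpa using (hasDerivAt_pow 2 t).const_add 1
    convert hinner.sqrt (hpos t).ne' using 1
    field_simp
  have hsnd := (hasDerivAt_id x).fun_div (hfst x) (hsqrt x).ne'
  refine ⟨_, _, HasJet2.of_hasDerivAt hfst hsnd, ?_, ?_⟩
  · rw [abs_div, abs_of_pos (hsqrt x), div_le_one (hsqrt x)]
    exact Real.abs_le_sqrt (by linarith)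
  · have hsq : √(1 + x ^ 2) ^ 2 = 1 + x ^ 2 := Real.sq_sqrt (hpos x).le
    have hone : 1 ≤ √(1 + x ^ 2) := Real.one_le_sqrt.2 (by nlinarith)
    have hnum : 1 * √(1 + x ^ 2) - id x * (x / √(1 + x ^ 2)) = 1 / √(1 + x ^ 2) := by
      simp only [id]
      field_simp
      linarith
    rw [hnum, div_div]
    exact (div_le_one (by positivity)).2 (by nlinarith [one_le_pow₀ hone (n := 2)])

/-- A smooth coercive function with bounded drift Laplacian; adding a small multiple of it to a
function bounded from below forces a minimum to be attained. -/
noncomputable def coercivePenalty (x y : ℝ) : ℝ := √(1 + x ^ 2) + √(1 + y ^ 2)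

theorem coercivePenalty_nonneg (x y : ℝ) : 0 ≤ coercivePenalty x y := by
  unfold coercivePenalty; positivity

theorem continuous_coercivePenalty :
    Continuous (fun p : ℝ × ℝ => coercivePenalty p.1 p.2) := by
  unfold coercivePenalty; fun_prop

theorem norm_le_coercivePenalty (p : ℝ × ℝ) : ‖p‖ ≤ coercivePenalty p.1 p.2 :=
  max_le ((Real.abs_le_sqrt (by linarith)).trans (le_add_of_nonneg_right (Real.sqrt_nonneg _)))
    ((Real.abs_le_sqrt (by linarith)).trans (le_add_of_nonneg_left (Real.sqrt_nonneg _)))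

theorem hasDriftLaplacian_coercivePenalty (c x y : ℝ) :
    ∃ l ≤ 2 + |c|, HasDriftLaplacian c coercivePenalty x y l := by
  obtain ⟨a, b, hx, -, hb⟩ := hasJet2_sqrt_one_add_sq x
  obtain ⟨a', b', hy, ha', hb'⟩ := hasJet2_sqrt_one_add_sq y
  refine ⟨b + b' + c * a', by linarith [mul_le_abs_of_abs_le_one (c := c) ha'], _, _, _, _,
    by simpa [coercivePenalty] using hx.add (HasJet2.const (√(1 + y ^ 2))),
    by simpa [coercivePenalty] using (HasJet2.const (√(1 + x ^ 2))).add hy, rfl⟩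

theorem exists_isMinOn_add_coercivePenalty {D : Set (ℝ × ℝ)} {f : ℝ × ℝ → ℝ} {m ε : ℝ}
    (hD : IsClosed D) (hf : ContinuousOn f D) (hm : ∀ p ∈ D, m ≤ f p) (hε : 0 < ε)
    (hne : D.Nonempty) : ∃ p ∈ D, IsMinOn (fun p => f p + ε * coercivePenalty p.1 p.2) D p := by
  obtain ⟨q, hq⟩ := hne
  refine (hf.add (continuous_coercivePenalty.continuousOn.const_smul ε)).exists_isMinOn' hD hq ?_
  rw [eventually_inf_principal]
  filter_upwards [(tendsto_norm_cocompact_atTop (E := ℝ × ℝ)).eventually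
    (eventually_ge_atTop ((f q + ε * coercivePenalty q.1 q.2 - m) / ε))] with p hp hpD
  rw [div_le_iff₀ hε] at hp
  have hpen := mul_le_mul_of_nonneg_left (norm_le_coercivePenalty p) hε.le
  change f q + ε * coercivePenalty q.1 q.2 ≤ f p + ε * coercivePenalty p.1 p.2
  linarith [hm p hpD]

end CoercivePenalty

theorem nonneg_of_driftLaplacian_le_of_isClosed {c μ m : ℝ} {D : Set (ℝ × ℝ)} {f : ℝ → ℝ → ℝ}
    (hD : IsClosed D) (hf : ContinuousOn (fun p : ℝ × ℝ => f p.1 p.2) D)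
    (hm : ∀ x y, (x, y) ∈ D → m ≤ f x y) (hμ : 0 < μ)
    (hneg : ∀ x y, (x, y) ∈ D → f x y < 0 →
      D ∈ nhds (x, y) ∧ ∃ l ≤ μ * f x y, HasDriftLaplacian c f x y l)
    {x y : ℝ} (hxy : (x, y) ∈ D) : 0 ≤ f x y := by
  by_contra! hlt
  obtain ⟨ε, hε, hsmall⟩ := exists_pos_mul_lt
    (lt_min (show 0 < -f x y / 2 by linarith) (mul_pos hμ (show 0 < -f x y / 2 by linarith)))
    (max (coercivePenalty x y) (2 + |c|))
  obtain ⟨hvalue, hlaplacian⟩ := lt_min_iff.1 hsmall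
  obtain ⟨⟨a, b⟩, hab, hmin⟩ := exists_isMinOn_add_coercivePenalty
    (f := fun p => f p.1 p.2) hD hf (fun p hp => hm p.1 p.2 hp) hε ⟨_, hxy⟩
  have hle : f a b + ε * coercivePenalty a b ≤ f x y + ε * coercivePenalty x y := hmin hxy
  have hpen : ε * coercivePenalty x y ≤ max (coercivePenalty x y) (2 + |c|) * ε := by
    rw [mul_comm]; gcongr; exact le_max_left _ _
  have hfab : f a b < f x y / 2 := by
    linarith [mul_nonneg hε.le (coercivePenalty_nonneg a b)]
  obtain ⟨hnhds, l, hl, hL⟩ := hneg a b hab (by linarith)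
  obtain ⟨l', hl', hL'⟩ := hasDriftLaplacian_coercivePenalty c a b
  have hl0 := (hL.add (hL'.const_mul ε)).nonneg_of_isLocalMin (hmin.isLocalMin hnhds)
  have hεl' : ε * l' ≤ max (coercivePenalty x y) (2 + |c|) * ε := by
    rw [mul_comm]; gcongr; exact hl'.trans (le_max_right _ _)
  have hμf := mul_lt_mul_of_pos_left hfab hμ
  linarith

/-! ### Interior gradient estimate -/

section GradientEstimate

/-- The upper barrier on `[0, 1] × [-1, 1]` for functions bounded by `M`, nonpositive on the side
`x = 0`, and with drift Laplacian bounded from below in terms of `K`. -/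
noncomputable def gradientBarrier (M K x y : ℝ) : ℝ :=
  M * (y ^ 2 + 2 * x - x ^ 2) + K * (x * (1 - x) / 2)

variable {c M K x y : ℝ}

theorem hasDerivAt_gradientBarrier_fst (M K x y : ℝ) :
    HasDerivAt (fun x => gradientBarrier M K x y)
      (M * (2 - 2 * x) + K * ((1 - 2 * x) / 2)) x := by
  have hcap : HasDerivAt (fun t : ℝ => y ^ 2 + 2 * t - t ^ 2) (2 - 2 * x) x :=
    ((((hasDerivAt_id x).const_mul 2).const_add (y ^ 2)).sub (hasDerivAt_pow 2 x)).congr_deriv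
      (by simp)
  have hparabola : HasDerivAt (fun t : ℝ => t * (1 - t) / 2) ((1 - 2 * x) / 2) x :=
    (((hasDerivAt_id x).mul ((hasDerivAt_id x).const_sub 1)).div_const 2).congr_deriv
      (by simp only [id]; ring)
  exact (hcap.const_mul M).add (hparabola.const_mul K)

theorem hasDriftLaplacian_gradientBarrier (c M K x y : ℝ) :
    HasDriftLaplacian c (gradientBarrier M K) x y (2 * c * (M * y) - K) := by
  have hxx : HasDerivAt (fun t => M * (2 - 2 * t) + K * ((1 - 2 * t) / 2)) (-(2 * M) - K) x :=
    (((((hasDerivAt_id x).const_mul 2).const_sub 2).const_mul M).add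
      (((((hasDerivAt_id x).const_mul 2).const_sub 1).div_const 2).const_mul K)).congr_deriv
      (by ring)
  have hy : ∀ t, HasDerivAt (gradientBarrier M K x) (M * (2 * t)) t := fun t =>
    ((((hasDerivAt_pow 2 t).add_const (2 * x)).sub_const (x ^ 2)).const_mul M).add_const
      (K * (x * (1 - x) / 2)) |>.congr_deriv (by simp)
  have hyy : HasDerivAt (fun t => M * (2 * t)) (M * 2) y := by
    simpa using ((hasDerivAt_id y).const_mul 2).const_mul M
  exact ⟨_, _, _, _,
    HasJet2.of_hasDerivAt (fun t => hasDerivAt_gradientBarrier_fst M K t y) hxx,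
    HasJet2.of_hasDerivAt hy hyy, by ring⟩

theorem gradientBarrier_nonneg (hM : 0 ≤ M) (hK : 0 ≤ K) (hx : x ∈ Set.Icc (0 : ℝ) 1) :
    0 ≤ gradientBarrier M K x y :=
  add_nonneg (mul_nonneg hM (by nlinarith [sq_nonneg y, hx.1, hx.2]))
    (mul_nonneg hK (by nlinarith [hx.1, hx.2]))

theorem lt_one_of_gradientBarrier_lt (hM : 0 ≤ M) (hK : 0 ≤ K) (hx : x ∈ Set.Icc (0 : ℝ) 1)
    (hlt : gradientBarrier M K x y < M) : x < 1 ∧ y ^ 2 < 1 := by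
  have hparabola : 0 ≤ K * (x * (1 - x) / 2) := mul_nonneg hK (by nlinarith [hx.1, hx.2])
  have hcap : y ^ 2 + 2 * x - x ^ 2 < 1 := by
    by_contra! h
    have := mul_le_mul_of_nonneg_left h hM
    simp only [gradientBarrier] at hlt
    linarith
  refine ⟨hx.2.lt_of_ne ?_, by nlinarith [hx.1, hx.2]⟩
  rintro rfl
  linarith [sq_nonneg y]

theorem le_gradientBarrier {g : ℝ → ℝ → ℝ} (hg : Continuous (fun p : ℝ × ℝ => g p.1 p.2))
    (hM0 : 0 ≤ M) (hM : ∀ x ∈ Set.Icc (0 : ℝ) 1, ∀ y ∈ Set.Icc (-1 : ℝ) 1, g x y ≤ M)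
    (hside : ∀ y ∈ Set.Icc (-1 : ℝ) 1, g 0 y ≤ 0) (hK : 0 ≤ K)
    (hL : ∀ x ∈ Set.Icc (0 : ℝ) 1, ∀ y ∈ Set.Icc (-1 : ℝ) 1,
      ∃ l > 2 * |c| * M - K, HasDriftLaplacian c g x y l)
    (hx : x ∈ Set.Icc (0 : ℝ) 1) (hy : y ∈ Set.Icc (-1 : ℝ) 1) :
    g x y ≤ gradientBarrier M K x y := by
  have hbarrier : Continuous (fun p : ℝ × ℝ => gradientBarrier M K p.1 p.2) := by
    unfold gradientBarrier; fun_prop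
  refine sub_nonneg.1 (nonneg_of_driftLaplacian_neg_of_isCompact (c := c)
    (f := fun x y => gradientBarrier M K x y - g x y)
    (isCompact_Icc.prod isCompact_Icc) (hbarrier.sub hg).continuousOn ?_ (x := x) (y := y) ⟨hx, hy⟩)
  rintro x y ⟨hx, hy⟩ hneg
  simp only at hx hy
  have hx0 : 0 < x := hx.1.lt_of_ne <| by
    rintro rfl
    linarith [hside y hy, gradientBarrier_nonneg (y := y) hM0 hK hx]
  obtain ⟨hx1, hy1⟩ := lt_one_of_gradientBarrier_lt hM0 hK hx ((sub_neg.1 hneg).trans_le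
    (hM x hx y hy))
  obtain ⟨hyl, hyr⟩ := abs_lt.1 ((sq_lt_one_iff_abs_lt_one y).1 hy1)
  refine ⟨prod_mem_nhds (Icc_mem_nhds hx0 hx1) (Icc_mem_nhds hyl hyr), ?_⟩
  obtain ⟨l, hl, hLg⟩ := hL x hx y hy
  refine ⟨_, ?_, (hasDriftLaplacian_gradientBarrier c M K x y).sub hLg⟩
  have hdrift := mul_le_mul_of_nonneg_left
    (mul_le_abs_of_abs_le_one (c := c) (abs_le.2 ⟨hy.1, hy.2⟩)) hM0
  linarith

theorem deriv_le_deriv_of_le_right {g h : ℝ → ℝ} {g' h' a : ℝ} (hg : HasDerivAt g g' a)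
    (hh : HasDerivAt h h' a) (heq : g a = h a)
    (hle : ∀ᶠ t in nhdsWithin 0 (Set.Ioi 0), g (a + t) ≤ h (a + t)) : g' ≤ h' := by
  refine le_of_tendsto_of_tendsto hg.tendsto_slope_zero_right hh.tendsto_slope_zero_right ?_
  filter_upwards [hle, self_mem_nhdsWithin] with t ht htpos
  rw [heq]
  exact smul_le_smul_of_nonneg_left (sub_le_sub_right ht _) (inv_nonneg.2 (le_of_lt htpos))

variable {N : ℝ} {f : ℝ → ℝ → ℝ}

/- The odd part of `f` in `x - x₀` vanishes on the line `x = x₀`, so the barrier bounds its slope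
there, which is `f_x`. -/
theorem pdx_le_of_bounds (hf : ContDiff ℝ 2 (fun p : ℝ × ℝ => f p.1 p.2)) (x₀ y₀ : ℝ)
    (hM : ∀ x y, |x - x₀| ≤ 1 → |y - y₀| ≤ 1 → |f x y| ≤ M)
    (hN : ∀ x y, |x - x₀| ≤ 1 → |y - y₀| ≤ 1 →
      |pdxx f x y + pdyy f x y + c * pdy f x y| ≤ N) :
    pdx f x₀ y₀ ≤ 2 * M + (N + 2 * |c| * M) / 2 := by
  have hM0 : 0 ≤ M := (abs_nonneg _).trans (hM x₀ y₀ (by simp) (by simp))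
  have hN0 : 0 ≤ N := (abs_nonneg _).trans (hN x₀ y₀ (by simp) (by simp))
  refine le_of_forall_pos_le_add fun ε hε => ?_
  have hK0 : 0 ≤ N + 2 * |c| * M + 2 * ε := by positivity
  let g : ℝ → ℝ → ℝ := fun x y => 1 / 2 * (f (x + x₀) (y + y₀) - f (x₀ - x) (y + y₀))
  have hg : Continuous (fun p : ℝ × ℝ => g p.1 p.2) :=
    continuous_const.mul ((hf.continuous.comp (f := fun p : ℝ × ℝ => (p.1 + x₀, p.2 + y₀))
      (by fun_prop)).sub (hf.continuous.comp (f := fun p : ℝ × ℝ => (x₀ - p.1, p.2 + y₀))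
      (by fun_prop)))
  have habs : ∀ {t : ℝ}, t ∈ Set.Icc (0 : ℝ) 1 → |t| ≤ 1 := fun ht =>
    abs_le.2 ⟨by linarith [ht.1], ht.2⟩
  have hle : ∀ x ∈ Set.Icc (0 : ℝ) 1, ∀ y ∈ Set.Icc (-1 : ℝ) 1,
      g x y ≤ gradientBarrier M (N + 2 * |c| * M + 2 * ε) x y := by
    refine fun x hx y hy => le_gradientBarrier (c := c) hg hM0 (fun x hx y hy => ?_)
      (fun y _ => by simp [g]) hK0 (fun x hx y hy => ?_) hx hy
    · have hright := abs_le.1 (hM (x + x₀) (y + y₀) (by simpa using habs hx)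
        (by simpa using abs_le.2 hy))
      have hleft := abs_le.1 (hM (x₀ - x) (y + y₀) (by simpa using habs hx)
        (by simpa using abs_le.2 hy))
      simp only [g]; linarith
    · have hright := abs_le.1 (hN (x + x₀) (y + y₀) (by simpa using habs hx)
        (by simpa using abs_le.2 hy))
      have hleft := abs_le.1 (hN (x₀ - x) (y + y₀) (by simpa using habs hx)
        (by simpa using abs_le.2 hy))
      exact ⟨_, by linarith, (((HasDriftLaplacian.of_contDiff hf (x + x₀) (y + y₀)).translate x₀
        y₀).sub ((HasDriftLaplacian.of_contDiff hf (x₀ - x) (y + y₀)).reflect x₀ y₀)).const_mul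
        (1 / 2)⟩
  have hslope : HasDerivAt (fun x => g x 0) (pdx f x₀ y₀) 0 := by
    have hd := hf.differentiable two_ne_zero
    have hright := (hasDerivAt_pdx (hd (0 + x₀, 0 + y₀))).comp_add_const 0 x₀
    have hleft := (hasDerivAt_pdx (hd (x₀ - 0, 0 + y₀))).comp_const_sub x₀ 0
    exact ((hright.sub hleft).const_mul (1 / 2)).congr_deriv (by simp; ring)
  have := deriv_le_deriv_of_le_right hslope
    (hasDerivAt_gradientBarrier_fst M (N + 2 * |c| * M + 2 * ε) 0 0)
    (by simp [g, gradientBarrier]) (by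
      filter_upwards [Ioc_mem_nhdsGT one_pos] with t ht
      rw [zero_add]
      exact hle t ⟨ht.1.le, ht.2⟩ 0 (by norm_num))
  linarith

theorem abs_pdx_le_of_bounds (hf : ContDiff ℝ 2 (fun p : ℝ × ℝ => f p.1 p.2)) (x₀ y₀ : ℝ)
    (hM : ∀ x y, |x - x₀| ≤ 1 → |y - y₀| ≤ 1 → |f x y| ≤ M)
    (hN : ∀ x y, |x - x₀| ≤ 1 → |y - y₀| ≤ 1 →
      |pdxx f x y + pdyy f x y + c * pdy f x y| ≤ N) :
    |pdx f x₀ y₀| ≤ 2 * M + (N + 2 * |c| * M) / 2 := by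
  refine abs_le'.2 ⟨pdx_le_of_bounds hf x₀ y₀ hM hN, ?_⟩
  have hx : pdx (fun x y => -f x y) = fun x y => -pdx f x y := by
    funext x y; simp only [pdx, deriv.fun_neg]
  have hy : pdy (fun x y => -f x y) = fun x y => -pdy f x y := by
    funext x y; simp only [pdy, deriv.fun_neg]
  have hxx : pdxx (fun x y => -f x y) = fun x y => -pdxx f x y := by
    funext x y; simp only [pdxx, hx, deriv.fun_neg]
  have hyy : pdyy (fun x y => -f x y) = fun x y => -pdyy f x y := by
    funext x y; simp only [pdyy, hy, deriv.fun_neg]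
  have hneg := pdx_le_of_bounds (c := c) (f := fun x y => -f x y) hf.neg x₀ y₀
    (fun x y hx hy => by rw [abs_neg]; exact hM x y hx hy)
    (fun x y hx' hy' => by
      rw [hxx, hyy, hy, ← abs_neg]
      convert hN x y hx' hy' using 2
      ring)
  rwa [hx] at hneg

end GradientEstimate

/-! ### One variable estimates -/

theorem abs_sub_le_of_hasDerivAt {f f' : ℝ → ℝ} {a b C : ℝ}
    (h : ∀ t ∈ Set.uIcc a b, HasDerivAt f (f' t) t) (hC : ∀ t ∈ Set.uIcc a b, |f' t| ≤ C) :
    |f b - f a| ≤ C * |b - a| :=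
  (convex_uIcc a b).norm_image_sub_le_of_norm_hasDerivWithin_le
    (fun t ht => (h t ht).hasDerivWithinAt) hC Set.left_mem_uIcc Set.right_mem_uIcc

/- Moving from `x` a distance `|g'| / (2 C)` against the slope lowers `g` by at least
`g' ^ 2 / (4 C)`. -/
theorem sq_deriv_le_of_nonneg {g d e : ℝ → ℝ} {C : ℝ} (hC : 0 < C)
    (hg : ∀ t, HasDerivAt g (d t) t) (hd : ∀ t, HasDerivAt d (e t) t) (hg0 : ∀ t, 0 ≤ g t)
    (he : ∀ t, |e t| ≤ C) (x : ℝ) : d x ^ 2 ≤ 4 * C * g x := by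
  set s := x - d x / (2 * C) with hs
  have htangent : ∀ t, HasDerivAt (fun t => g t - d x * t) (d t - d x) t := fun t =>
    ((hg t).sub ((hasDerivAt_id t).const_mul (d x))).congr_deriv (by simp)
  have hslope : ∀ t ∈ Set.uIcc x s, |d t - d x| ≤ C * |s - x| := fun t ht =>
    (abs_sub_le_of_hasDerivAt (fun t _ => hd t) (fun r _ => he r)).trans
      (mul_le_mul_of_nonneg_left (Set.abs_sub_left_of_mem_uIcc ht) hC.le)
  have hremainder := (abs_le.1 (abs_sub_le_of_hasDerivAt (fun t _ => htangent t) hslope)).2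
  have hquad : C * |s - x| * |s - x| = d x ^ 2 / (4 * C) := by
    rw [mul_assoc, ← sq, sq_abs, hs]; field_simp; ring
  have hlin : d x * s - d x * x = -(d x ^ 2 / (2 * C)) := by rw [hs]; field_simp; ring
  have hhalf : d x ^ 2 / (2 * C) = 2 * (d x ^ 2 / (4 * C)) := by field_simp; ring
  have hgx : d x ^ 2 / (4 * C) ≤ g x := by linarith [hg0 s]
  rw [div_le_iff₀ (by positivity)] at hgx
  linarith

theorem sq_deriv_le_of_abs_le_one {g d e : ℝ → ℝ} {C : ℝ} (hC : 0 < C)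
    (hg : ∀ t, HasDerivAt g (d t) t) (hd : ∀ t, HasDerivAt d (e t) t) (hg1 : ∀ t, |g t| ≤ 1)
    (he : ∀ t, |e t| ≤ C) (x : ℝ) : d x ^ 2 ≤ 4 * C * (1 - |g x|) := by
  rcases abs_choice (g x) with hx | hx <;> rw [hx]
  · rw [← neg_sq]
    exact sq_deriv_le_of_nonneg hC (fun t => (hg t).const_sub 1) (fun t => (hd t).fun_neg)
      (fun t => sub_nonneg.2 (abs_le.1 (hg1 t)).2) (fun t => (abs_neg _).trans_le (he t)) x
  · rw [sub_neg_eq_add]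
    exact sq_deriv_le_of_nonneg hC (fun t => (hg t).const_add 1) hd
      (fun t => by linarith [(abs_le.1 (hg1 t)).1]) he x

/-! ### Monotone fronts -/

/-- `u` is a monotone front: a solution of `Δu + c uᵧ = F'(u)` with speed `c > 0`, increasing in `y`
and connecting `-1` to `1`. All that is asked of the potential is that it is positive strictly
between its zeros `±1` and that these are nondegenerate from the inside, `F''(±1) > 0`. -/
structure IsFront (F : ℝ → ℝ) (c : ℝ) (u : ℝ → ℝ → ℝ) : Prop where
  contDiff_potential : ContDiff ℝ 2 F
  potential_neg_one : F (-1) = 0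
  potential_one : F 1 = 0
  potential_pos : ∀ s ∈ Set.Ioo (-1 : ℝ) 1, 0 < F s
  deriv2_potential_neg_one_pos : 0 < deriv (deriv F) (-1)
  deriv2_potential_one_pos : 0 < deriv (deriv F) 1
  speed_pos : 0 < c
  contDiff : ContDiff ℝ 3 (fun p : ℝ × ℝ => u p.1 p.2)
  pde : ∀ x y, pdxx u x y + pdyy u x y + c * pdy u x y = deriv F (u x y)
  pdy_pos : ∀ x y, 0 < pdy u x y
  tendsto_atTop : ∀ x, Tendsto (fun y => u x y) atTop (nhds 1)
  tendsto_atBot : ∀ x, Tendsto (fun y => u x y) atBot (nhds (-1))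

theorem BalancedDoubleWell.pos {F : ℝ → ℝ} (hF : BalancedDoubleWell F) {s : ℝ}
    (hs : s ∈ Set.Ioo (-1 : ℝ) 1) : 0 < F s := by
  obtain ⟨hsmooth, -, -, -, -, hincr, hdecr, hneg_one, hone⟩ := hF
  rcases le_total s 0 with h | h
  · have hmono : StrictMonoOn F (Set.Icc (-1) 0) :=
      strictMonoOn_of_deriv_pos (convex_Icc _ _) hsmooth.continuous.continuousOn
        (by rwa [interior_Icc])
    exact hneg_one ▸ hmono (by norm_num) ⟨hs.1.le, h⟩ hs.1
  · have hanti : StrictAntiOn F (Set.Icc 0 1) :=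
      strictAntiOn_of_deriv_neg (convex_Icc _ _) hsmooth.continuous.continuousOn
        (by rwa [interior_Icc])
    exact hone ▸ hanti ⟨h, hs.2.le⟩ (by norm_num) hs.2

theorem IsTravelingWave.isFront {F : ℝ → ℝ} {c : ℝ} {u : ℝ → ℝ → ℝ} (hu : IsTravelingWave F c u)
    (hF : BalancedDoubleWell F) (hc : 0 < c) : IsFront F c u where
  contDiff_potential := hF.1.of_le (by norm_num)
  potential_neg_one := hF.2.2.2.2.2.2.2.1
  potential_one := hF.2.2.2.2.2.2.2.2
  potential_pos _ := hF.pos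
  deriv2_potential_neg_one_pos := hF.2.2.2.1
  deriv2_potential_one_pos := hF.2.2.2.2.1
  speed_pos := hc
  contDiff := hu.1.1
  pde := hu.1.2.1
  pdy_pos := hu.1.2.2.2
  tendsto_atTop := hu.2.1
  tendsto_atBot := hu.2.2

namespace IsFront

variable {F : ℝ → ℝ} {c : ℝ} {u : ℝ → ℝ → ℝ}

theorem mirror (hu : IsFront F c u) : IsFront F c (fun x y => u (-x) y) where
  __ := hu
  contDiff := hu.contDiff.comp (g := fun p : ℝ × ℝ => u p.1 p.2)
    (f := fun p : ℝ × ℝ => (-p.1, p.2)) (contDiff_fst.neg.prodMk contDiff_snd)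
  pde x y := by
    rw [pdxx_comp_neg]
    exact hu.pde (-x) y
  pdy_pos x := hu.pdy_pos (-x)
  tendsto_atTop x := hu.tendsto_atTop (-x)
  tendsto_atBot x := hu.tendsto_atBot (-x)

/-! ### Regularity and range of a front -/

theorem contDiff_two (hu : IsFront F c u) : ContDiff ℝ 2 (fun p : ℝ × ℝ => u p.1 p.2) :=
  hu.contDiff.of_le (by norm_num)

theorem contDiff_one (hu : IsFront F c u) : ContDiff ℝ 1 (fun p : ℝ × ℝ => u p.1 p.2) :=
  hu.contDiff.of_le (by norm_num)

theorem continuous (hu : IsFront F c u) : Continuous (fun p : ℝ × ℝ => u p.1 p.2) :=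
  hu.contDiff.continuous

theorem contDiff_two_pdx (hu : IsFront F c u) : ContDiff ℝ 2 (fun p : ℝ × ℝ => pdx u p.1 p.2) :=
  contDiff_pdx (n := 2) hu.contDiff

theorem contDiff_two_pdy (hu : IsFront F c u) : ContDiff ℝ 2 (fun p : ℝ × ℝ => pdy u p.1 p.2) :=
  contDiff_pdy (n := 2) hu.contDiff

theorem contDiff_one_pdx (hu : IsFront F c u) : ContDiff ℝ 1 (fun p : ℝ × ℝ => pdx u p.1 p.2) :=
  hu.contDiff_two_pdx.of_le (by norm_num)

theorem contDiff_one_pdy (hu : IsFront F c u) : ContDiff ℝ 1 (fun p : ℝ × ℝ => pdy u p.1 p.2) :=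
  hu.contDiff_two_pdy.of_le (by norm_num)

theorem hasDerivAt_x (hu : IsFront F c u) (x y : ℝ) :
    HasDerivAt (fun t => u t y) (pdx u x y) x :=
  hasDerivAt_pdx (hu.contDiff_one.differentiable one_ne_zero _)

theorem hasDerivAt_y (hu : IsFront F c u) (x y : ℝ) :
    HasDerivAt (fun t => u x t) (pdy u x y) y :=
  hasDerivAt_pdy (hu.contDiff_one.differentiable one_ne_zero _)

theorem hasDerivAt_xx (hu : IsFront F c u) (x y : ℝ) :
    HasDerivAt (fun t => pdx u t y) (pdxx u x y) x :=
  hasDerivAt_pdx (hu.contDiff_one_pdx.differentiable one_ne_zero _)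

theorem hasDerivAt_xy (hu : IsFront F c u) (x y : ℝ) :
    HasDerivAt (fun t => pdx u x t) (pdy (pdx u) x y) y :=
  hasDerivAt_pdy (hu.contDiff_one_pdx.differentiable one_ne_zero _)

theorem hasDerivAt_yx (hu : IsFront F c u) (x y : ℝ) :
    HasDerivAt (fun t => pdy u t y) (pdy (pdx u) x y) x := by
  rw [← pdx_pdy_comm hu.contDiff_two]
  exact hasDerivAt_pdx (hu.contDiff_one_pdy.differentiable one_ne_zero _)

theorem hasDerivAt_yy (hu : IsFront F c u) (x y : ℝ) :
    HasDerivAt (fun t => pdy u x t) (pdyy u x y) y :=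
  hasDerivAt_pdy (hu.contDiff_one_pdy.differentiable one_ne_zero _)

theorem strictMono (hu : IsFront F c u) (x : ℝ) : StrictMono (fun y => u x y) :=
  strictMono_of_hasDerivAt_pos (hu.hasDerivAt_y x) (hu.pdy_pos x)

theorem lt_one (hu : IsFront F c u) (x y : ℝ) : u x y < 1 :=
  (hu.strictMono x (lt_add_one y)).trans_le
    ((hu.strictMono x).monotone.ge_of_tendsto (hu.tendsto_atTop x) (y + 1))

theorem neg_one_lt (hu : IsFront F c u) (x y : ℝ) : -1 < u x y :=
  ((hu.strictMono x).monotone.le_of_tendsto (hu.tendsto_atBot x) (y - 1)).trans_lt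
    (hu.strictMono x (sub_one_lt y))

theorem mem_Icc (hu : IsFront F c u) (x y : ℝ) : u x y ∈ Set.Icc (-1 : ℝ) 1 :=
  ⟨(hu.neg_one_lt x y).le, (hu.lt_one x y).le⟩

theorem contDiff_deriv (hu : IsFront F c u) : ContDiff ℝ 1 (deriv F) :=
  ((contDiff_succ_iff_deriv (n := 1)).1 hu.contDiff_potential).2.2

theorem hasDerivAt_potential (hu : IsFront F c u) (s : ℝ) : HasDerivAt F (deriv F s) s :=
  (hu.contDiff_potential.differentiable two_ne_zero s).hasDerivAt

theorem hasDerivAt_deriv (hu : IsFront F c u) (s : ℝ) :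
    HasDerivAt (deriv F) (deriv (deriv F) s) s :=
  (hu.contDiff_deriv.differentiable one_ne_zero s).hasDerivAt

theorem continuous_potential (hu : IsFront F c u) : Continuous F :=
  hu.contDiff_potential.continuous

theorem continuous_deriv (hu : IsFront F c u) : Continuous (deriv F) :=
  hu.contDiff_deriv.continuous

theorem continuous_deriv2 (hu : IsFront F c u) : Continuous (deriv (deriv F)) :=
  hu.contDiff_deriv.continuous_deriv_one

theorem potential_nonneg (hu : IsFront F c u) {s : ℝ} (hs : s ∈ Set.Icc (-1 : ℝ) 1) : 0 ≤ F s := by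
  rcases hs.1.eq_or_lt with rfl | hneg_one
  · exact hu.potential_neg_one.ge
  rcases hs.2.eq_or_lt with rfl | hone
  · exact hu.potential_one.ge
  · exact (hu.potential_pos s ⟨hneg_one, hone⟩).le

theorem linearized_pdx (hu : IsFront F c u) (x y : ℝ) :
    pdxx (pdx u) x y + pdyy (pdx u) x y + c * pdy (pdx u) x y =
      deriv (deriv F) (u x y) * pdx u x y := by
  have hxxx : HasDerivAt (fun t => pdxx u t y) (pdx (pdxx u) x y) x :=
    hasDerivAt_pdx ((contDiff_pdx (n := 1) hu.contDiff_two_pdx).differentiable one_ne_zero _)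
  have hyyx : HasDerivAt (fun t => pdyy u t y) (pdx (pdyy u) x y) x :=
    hasDerivAt_pdx ((contDiff_pdy (n := 1) hu.contDiff_two_pdy).differentiable one_ne_zero _)
  have hleft := (hxxx.add hyyx).add ((hu.hasDerivAt_yx x y).const_mul c)
  have hright := (hu.hasDerivAt_deriv (u x y)).comp x (hu.hasDerivAt_x x y)
  rw [pdyy_pdx hu.contDiff]
  exact hleft.unique (hright.congr_of_eventuallyEq (.of_forall fun t => hu.pde t y))

theorem linearized_pdy (hu : IsFront F c u) (x y : ℝ) :
    pdxx (pdy u) x y + pdyy (pdy u) x y + c * pdy (pdy u) x y =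
      deriv (deriv F) (u x y) * pdy u x y := by
  have hxxy : HasDerivAt (fun t => pdxx u x t) (pdy (pdxx u) x y) y :=
    hasDerivAt_pdy ((contDiff_pdx (n := 1) hu.contDiff_two_pdx).differentiable one_ne_zero _)
  have hyyy : HasDerivAt (fun t => pdyy u x t) (pdy (pdyy u) x y) y :=
    hasDerivAt_pdy ((contDiff_pdy (n := 1) hu.contDiff_two_pdy).differentiable one_ne_zero _)
  have hleft := (hxxy.add hyyy).add ((hu.hasDerivAt_yy x y).const_mul c)
  have hright := (hu.hasDerivAt_deriv (u x y)).comp y (hu.hasDerivAt_y x y)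
  rw [pdxx_pdy hu.contDiff]
  exact hleft.unique (hright.congr_of_eventuallyEq (.of_forall fun t => hu.pde x t))

/-! ### Derivative bounds -/

theorem exists_potential_bound (hu : IsFront F c u) : ∃ K, 0 ≤ K ∧
    ∀ s ∈ Set.Icc (-1 : ℝ) 1, |F s| ≤ K ∧ |deriv F s| ≤ K ∧ |deriv (deriv F) s| ≤ K := by
  obtain ⟨K, hK⟩ := isCompact_Icc.exists_bound_of_continuousOn (s := Set.Icc (-1 : ℝ) 1)
    (hu.continuous_potential.prodMk
      (hu.continuous_deriv.prodMk hu.continuous_deriv2)).continuousOn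
  refine ⟨K, (norm_nonneg _).trans (hK 0 (by norm_num)), fun s hs => ?_⟩
  simpa only [norm_prod_le_iff, Real.norm_eq_abs] using hK s hs

theorem abs_pdx_le (hu : IsFront F c u) {K : ℝ}
    (hK : ∀ s ∈ Set.Icc (-1 : ℝ) 1, |deriv F s| ≤ K) (x y : ℝ) :
    |pdx u x y| ≤ 2 + (K + 2 * |c|) / 2 := by
  simpa only [mul_one] using abs_pdx_le_of_bounds hu.contDiff_two x y
    (fun a b _ _ => abs_le.2 (hu.mem_Icc a b))
    (fun a b _ _ => (hu.pde a b).symm ▸ hK _ (hu.mem_Icc a b))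

theorem abs_pdxx_le (hu : IsFront F c u) {K M : ℝ}
    (hK : ∀ s ∈ Set.Icc (-1 : ℝ) 1, |deriv (deriv F) s| ≤ K) (hM : ∀ x y, |pdx u x y| ≤ M)
    (x y : ℝ) : |pdxx u x y| ≤ 2 * M + (K * M + 2 * |c| * M) / 2 := by
  refine abs_pdx_le_of_bounds hu.contDiff_two_pdx x y (fun a b _ _ => hM a b) fun a b _ _ => ?_
  rw [hu.linearized_pdx, abs_mul]
  have hKab := hK _ (hu.mem_Icc a b)
  exact mul_le_mul hKab (hM a b) (abs_nonneg _) ((abs_nonneg _).trans hKab)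

theorem abs_pdy_pdx_le (hu : IsFront F c u) {K m x y : ℝ}
    (hK : ∀ s ∈ Set.Icc (-1 : ℝ) 1, |deriv (deriv F) s| ≤ K)
    (hm : ∀ x' y', |x' - x| ≤ 1 → |y' - y| ≤ 1 → pdy u x' y' ≤ m) :
    |pdy (pdx u) x y| ≤ (2 + (K + 2 * |c|) / 2) * m := by
  have hpdy : ∀ a b, |a - x| ≤ 1 → |b - y| ≤ 1 → |pdy u a b| ≤ m := fun a b ha hb =>
    (abs_of_pos (hu.pdy_pos a b)).trans_le (hm a b ha hb)
  rw [← pdx_pdy_comm hu.contDiff_two]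
  refine (abs_pdx_le_of_bounds (N := K * m) hu.contDiff_two_pdy x y hpdy
    fun a b ha hb => ?_).trans_eq (by ring)
  rw [hu.linearized_pdy, abs_mul]
  have hKab := hK _ (hu.mem_Icc a b)
  exact mul_le_mul hKab (hpdy a b ha hb) (abs_nonneg _) ((abs_nonneg _).trans hKab)

/- Somewhere above `(x, y)`, within distance one, `uᵧ` is at most two, and `uᵧ + c u` has derivative
`F'(u) - uₓₓ` in `y`. -/
theorem pdy_le (hu : IsFront F c u) {K N : ℝ}
    (hK : ∀ s ∈ Set.Icc (-1 : ℝ) 1, |deriv F s| ≤ K) (hN : ∀ x y, |pdxx u x y| ≤ N) (x y : ℝ) :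
    pdy u x y ≤ 2 + 2 * c + (K + N) := by
  obtain ⟨ξ, ⟨hyξ, hξy⟩, hslope⟩ := exists_hasDerivAt_eq_slope (fun t => u x t) (fun t => pdy u x t)
    (lt_add_one y) (continuous_slice_snd hu.continuous x).continuousOn
    (fun t _ => hu.hasDerivAt_y x t)
  rw [add_sub_cancel_left, div_one] at hslope
  have hpdy_add : |(pdy u x ξ + c * u x ξ) - (pdy u x y + c * u x y)| ≤ (K + N) * |ξ - y| := by
    refine abs_sub_le_of_hasDerivAt (f := fun t => pdy u x t + c * u x t)
      (fun t _ => (hu.hasDerivAt_yy x t).add ((hu.hasDerivAt_y x t).const_mul c)) fun t _ => ?_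
    rw [show pdyy u x t + c * pdy u x t = deriv F (u x t) - pdxx u x t by rw [← hu.pde]; ring]
    exact (abs_sub _ _).trans (add_le_add (hK _ (hu.mem_Icc x t)) (hN x t))
  have hKN : 0 ≤ K + N := add_nonneg ((abs_nonneg _).trans (hK _ (hu.mem_Icc x y)))
    ((abs_nonneg _).trans (hN x y))
  have hξ : (K + N) * |ξ - y| ≤ K + N :=
    mul_le_of_le_one_right hKN (abs_le.2 ⟨by linarith, by linarith⟩)
  have hcu : c * (u x ξ - u x y) ≤ c * 2 :=
    mul_le_mul_of_nonneg_left (by linarith [hu.lt_one x ξ, hu.neg_one_lt x y]) hu.speed_pos.le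
  linarith [(abs_le.1 hpdy_add).1, hu.lt_one x (y + 1), hu.neg_one_lt x y]

theorem abs_pdyy_le (hu : IsFront F c u) {K N L : ℝ}
    (hK : ∀ s ∈ Set.Icc (-1 : ℝ) 1, |deriv F s| ≤ K) (hN : ∀ x y, |pdxx u x y| ≤ N)
    (hL : ∀ x y, pdy u x y ≤ L) (x y : ℝ) : |pdyy u x y| ≤ K + N + c * L := by
  rw [show pdyy u x y = deriv F (u x y) - pdxx u x y - c * pdy u x y by rw [← hu.pde]; ring]
  refine (abs_sub _ _).trans
    (add_le_add ((abs_sub _ _).trans (add_le_add (hK _ (hu.mem_Icc x y)) (hN x y))) ?_)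
  rw [abs_of_pos (mul_pos hu.speed_pos (hu.pdy_pos x y))]
  exact mul_le_mul_of_nonneg_left (hL x y) hu.speed_pos.le

end IsFront

/-- `C` bounds the potential, the derivatives of the front `u` and, through a Harnack-type estimate,
`uₓᵧ` in terms of nearby values of `uᵧ`. -/
structure DerivBounds (F : ℝ → ℝ) (u : ℝ → ℝ → ℝ) (C : ℝ) : Prop where
  pos : 0 < C
  potential_le : ∀ s ∈ Set.Icc (-1 : ℝ) 1, F s ≤ C
  abs_deriv_le : ∀ s ∈ Set.Icc (-1 : ℝ) 1, |deriv F s| ≤ C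
  abs_deriv2_le : ∀ s ∈ Set.Icc (-1 : ℝ) 1, |deriv (deriv F) s| ≤ C
  abs_pdx_le : ∀ x y, |pdx u x y| ≤ C
  pdy_le : ∀ x y, pdy u x y ≤ C
  abs_pdxx_le : ∀ x y, |pdxx u x y| ≤ C
  abs_pdyy_le : ∀ x y, |pdyy u x y| ≤ C
  abs_pdy_pdx_le_mul : ∀ x y m, (∀ x' y', |x' - x| ≤ 1 → |y' - y| ≤ 1 → pdy u x' y' ≤ m) →
    |pdy (pdx u) x y| ≤ C * m

theorem IsFront.exists_derivBounds {F : ℝ → ℝ} {c : ℝ} {u : ℝ → ℝ → ℝ} (hu : IsFront F c u) :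
    ∃ C, DerivBounds F u C := by
  obtain ⟨K, hK0, hK⟩ := hu.exists_potential_bound
  have hc := hu.speed_pos
  obtain ⟨M, hM⟩ : ∃ M, ∀ x y, |pdx u x y| ≤ M := ⟨_, hu.abs_pdx_le fun s hs => (hK s hs).2.1⟩
  obtain ⟨N, hN⟩ : ∃ N, ∀ x y, |pdxx u x y| ≤ N :=
    ⟨_, hu.abs_pdxx_le (fun s hs => (hK s hs).2.2) hM⟩
  obtain ⟨L, hL⟩ : ∃ L, ∀ x y, pdy u x y ≤ L := ⟨_, hu.pdy_le (fun s hs => (hK s hs).2.1) hN⟩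
  have hM0 : 0 ≤ M := (abs_nonneg _).trans (hM 0 0)
  have hN0 : 0 ≤ N := (abs_nonneg _).trans (hN 0 0)
  have hL0 : 0 ≤ L := (hu.pdy_pos 0 0).le.trans (hL 0 0)
  have hP0 : 0 ≤ 2 + (K + 2 * |c|) / 2 := by positivity
  have hcL0 : 0 ≤ c * L := by positivity
  refine ⟨(2 + (K + 2 * |c|) / 2) + K + M + N + L + c * L,
    { pos := by positivity
      potential_le := fun s hs => by linarith [(abs_le.1 (hK s hs).1).2]
      abs_deriv_le := fun s hs => by linarith [(hK s hs).2.1]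
      abs_deriv2_le := fun s hs => by linarith [(hK s hs).2.2]
      abs_pdx_le := fun x y => by linarith [hM x y]
      pdy_le := fun x y => by linarith [hL x y]
      abs_pdxx_le := fun x y => by linarith [hN x y]
      abs_pdyy_le := fun x y => by linarith [hu.abs_pdyy_le (fun s hs => (hK s hs).2.1) hN hL x y]
      abs_pdy_pdx_le_mul := fun x y m hm => ?_ }⟩
  have hm0 : 0 ≤ m := (hu.pdy_pos x y).le.trans (hm x y (by simp) (by simp))
  exact (hu.abs_pdy_pdx_le (fun s hs => (hK s hs).2.2) hm).trans
    (mul_le_mul_of_nonneg_right (by linarith) hm0)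

namespace DerivBounds

variable {F : ℝ → ℝ} {c : ℝ} {u : ℝ → ℝ → ℝ} {C : ℝ}

theorem abs_pdy_pdx_le (hC : DerivBounds F u C) (x y : ℝ) : |pdy (pdx u) x y| ≤ C * C :=
  hC.abs_pdy_pdx_le_mul x y C fun x' y' _ _ => hC.pdy_le x' y'

theorem sq_pdx_le (hC : DerivBounds F u C) (hu : IsFront F c u) (x y : ℝ) :
    pdx u x y ^ 2 ≤ 4 * C * (1 - |u x y|) :=
  sq_deriv_le_of_abs_le_one hC.pos (fun t => hu.hasDerivAt_x t y) (fun t => hu.hasDerivAt_xx t y)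
    (fun t => abs_le.2 (hu.mem_Icc t y)) (fun t => hC.abs_pdxx_le t y) x

theorem sq_pdy_le (hC : DerivBounds F u C) (hu : IsFront F c u) (x y : ℝ) :
    pdy u x y ^ 2 ≤ 4 * C * (1 - |u x y|) :=
  sq_deriv_le_of_abs_le_one hC.pos (hu.hasDerivAt_y x) (hu.hasDerivAt_yy x)
    (fun t => abs_le.2 (hu.mem_Icc x t)) (hC.abs_pdyy_le x) y

end DerivBounds

/-! ### Decay at infinity -/

section DecayAtInfinity

theorem tendsto_cocompact_zero_iff {f : ℝ → ℝ → ℝ} :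
    Tendsto (fun p : ℝ × ℝ => f p.1 p.2) (cocompact (ℝ × ℝ)) (nhds 0) ↔
      ∀ ε > 0, ∃ R, ∀ x y, R ≤ ‖(x, y)‖ → |f x y| ≤ ε := by
  rw [← cobounded_eq_cocompact, (hasBasis_cobounded_norm (E := ℝ × ℝ)).tendsto_iff
    nhds_basis_closedBall]
  simp

theorem le_norm_of_near {R r x y x' y' : ℝ} (hR : R + r ≤ ‖(x, y)‖) (hx : |x' - x| ≤ r)
    (hy : |y' - y| ≤ r) : R ≤ ‖(x', y')‖ := by
  have hnear : ‖(x', y') - (x, y)‖ ≤ r := max_le hx hy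
  linarith [norm_le_norm_add_norm_sub' (x, y) (x', y'), norm_sub_rev (x, y) (x', y')]

theorem tendsto_setIntegral_norm_ge {E : Type*} [NormedAddCommGroup E] [MeasurableSpace E]
    [OpensMeasurableSpace E] {μ : Measure E} {f : E → ℝ} (hf : Integrable f μ) :
    Tendsto (fun n : ℕ => ∫ z in {z | (n : ℝ) ≤ ‖z‖}, f z ∂μ) atTop (nhds 0) := by
  have hempty : ⋂ n : ℕ, {z : E | (n : ℝ) ≤ ‖z‖} = ∅ := by
    refine Set.eq_empty_of_forall_notMem fun z hz => ?_
    obtain ⟨n, hn⟩ := exists_nat_gt ‖z‖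
    exact hn.not_ge (Set.mem_iInter.1 hz n)
  simpa only [hempty, Measure.restrict_empty, integral_zero_measure] using
    tendsto_setIntegral_of_antitone (s := fun n : ℕ => {z : E | (n : ℝ) ≤ ‖z‖})
      (fun n => (isClosed_le continuous_const continuous_norm).measurableSet)
      (fun m n hmn z (hz : (n : ℝ) ≤ ‖z‖) => (Nat.cast_le.2 hmn).trans hz) ⟨0, hf.integrableOn⟩

-- If `‖f z‖ > ε` then `‖f‖ ≥ ε / 2` on a ball of fixed measure around `z`.
theorem tendsto_cocompact_zero_of_integrable_norm_pow {E G : Type*} [NormedAddCommGroup E]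
    [ProperSpace E] [MeasurableSpace E] [BorelSpace E] [NormedAddCommGroup G] {μ : Measure E}
    [μ.IsAddHaarMeasure] {f : E → G} {n : ℕ} (hf : UniformContinuous f)
    (hi : Integrable (fun z => ‖f z‖ ^ n) μ) : Tendsto f (cocompact E) (nhds 0) := by
  rw [← cobounded_eq_cocompact, hasBasis_cobounded_norm.tendsto_iff nhds_basis_closedBall]
  intro ε hε
  obtain ⟨δ, hδ, hclose⟩ := Metric.uniformContinuous_iff.1 hf (ε / 2) (half_pos hε)
  have hball : 0 < μ.real (ball 0 δ) :=
    ENNReal.toReal_pos (measure_ball_pos μ 0 hδ).ne' measure_ball_lt_top.ne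
  obtain ⟨k, hk⟩ := ((tendsto_setIntegral_norm_ge hi).eventually_lt_const
    (show 0 < (ε / 2) ^ n * μ.real (ball 0 δ) by positivity)).exists
  refine ⟨k + δ, trivial, fun z hz => mem_closedBall_zero_iff.2 ?_⟩
  by_contra! hlarge
  have hlower : ∀ w ∈ ball z δ, (ε / 2) ^ n ≤ ‖f w‖ ^ n := fun w hw => by
    have hwz := hclose hw
    rw [dist_eq_norm] at hwz
    gcongr
    linarith [norm_le_norm_add_norm_sub' (f z) (f w), norm_sub_rev (f z) (f w)]
  have hsub : ball z δ ⊆ {z | (k : ℝ) ≤ ‖z‖} := fun w hw => by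
    rw [mem_ball, dist_eq_norm] at hw
    have hz' : k + δ ≤ ‖z‖ := hz
    change (k : ℝ) ≤ ‖w‖
    linarith [norm_le_norm_add_norm_sub' z w, norm_sub_rev z w]
  have hge := setIntegral_ge_of_const_le_real measurableSet_ball measure_ball_lt_top.ne hlower
    hi.integrableOn
  have hle := setIntegral_mono_set hi.integrableOn
    (Eventually.of_forall fun z => by positivity) hsub.eventuallyLE
  rw [measureReal_def, Measure.addHaar_ball_center, ← measureReal_def] at hge
  linarith

theorem uniformContinuous_of_hasDerivAt {f fx fy : ℝ → ℝ → ℝ} {A B : ℝ}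
    (hx : ∀ x y, HasDerivAt (fun t => f t y) (fx x y) x)
    (hy : ∀ x y, HasDerivAt (fun t => f x t) (fy x y) y)
    (hA : ∀ x y, |fx x y| ≤ A) (hB : ∀ x y, |fy x y| ≤ B) :
    UniformContinuous (fun p : ℝ × ℝ => f p.1 p.2) := by
  refine (LipschitzWith.of_dist_le' (K := A + B) fun p q => ?_).uniformContinuous
  have hA0 : 0 ≤ A := (abs_nonneg _).trans (hA 0 0)
  have hB0 : 0 ≤ B := (abs_nonneg _).trans (hB 0 0)
  calc dist (f p.1 p.2) (f q.1 q.2)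
      ≤ dist (f p.1 p.2) (f q.1 p.2) + dist (f q.1 p.2) (f q.1 q.2) := dist_triangle _ _ _
    _ ≤ A * dist p.1 q.1 + B * dist p.2 q.2 :=
      add_le_add (abs_sub_le_of_hasDerivAt (fun t _ => hx t p.2) fun t _ => hA t p.2)
        (abs_sub_le_of_hasDerivAt (fun t _ => hy q.1 t) fun t _ => hB q.1 t)
    _ ≤ A * dist p q + B * dist p q := by
      gcongr
      exacts [le_max_left _ _, le_max_right _ _]
    _ = (A + B) * dist p q := by ring

end DecayAtInfinity

/-! ### The energy identity -/

/-- The density `(uₓ² - uᵧ²) / 2 + F(u)` whose integral over horizontal lines is driven by the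
friction `c uᵧ²` alone. -/
noncomputable def energy (F : ℝ → ℝ) (u : ℝ → ℝ → ℝ) (x y : ℝ) : ℝ :=
  (pdx u x y ^ 2 - pdy u x y ^ 2) / 2 + F (u x y)

/-- The flux `uₓ uᵧ` of the energy through vertical lines. -/
noncomputable def flux (u : ℝ → ℝ → ℝ) (x y : ℝ) : ℝ := pdx u x y * pdy u x y

namespace IsFront

variable {F : ℝ → ℝ} {c : ℝ} {u : ℝ → ℝ → ℝ} {C : ℝ}

theorem contDiff_energy (hu : IsFront F c u) :
    ContDiff ℝ 1 (fun p : ℝ × ℝ => energy F u p.1 p.2) :=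
  (((hu.contDiff_one_pdx.pow 2).sub (hu.contDiff_one_pdy.pow 2)).div_const 2).add
    ((hu.contDiff_potential.of_le (by norm_num)).comp hu.contDiff_one)

theorem contDiff_flux (hu : IsFront F c u) : ContDiff ℝ 1 (fun p : ℝ × ℝ => flux u p.1 p.2) :=
  hu.contDiff_one_pdx.mul hu.contDiff_one_pdy

theorem pdx_flux_sub_pdy_energy (hu : IsFront F c u) (x y : ℝ) :
    pdx (flux u) x y - pdy (energy F u) x y = -c * pdy u x y ^ 2 := by
  have hflux : pdx (flux u) x y = pdxx u x y * pdy u x y + pdx u x y * pdy (pdx u) x y :=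
    ((hu.hasDerivAt_xx x y).mul (hu.hasDerivAt_yx x y)).deriv
  have henergy := ((((hu.hasDerivAt_xy x y).pow 2).sub ((hu.hasDerivAt_yy x y).pow 2)).div_const
    2).add ((hu.hasDerivAt_potential (u x y)).comp y (hu.hasDerivAt_y x y))
  rw [hflux, show pdy (energy F u) x y = _ from henergy.deriv, ← hu.pde]
  ring

theorem integral_energy_sub (hu : IsFront F c u) (a b p q : ℝ) :
    (∫ x in a..b, energy F u x q) - ∫ x in a..b, energy F u x p =
      c * (∫ x in a..b, ∫ y in p..q, pdy u x y ^ 2) +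
        ((∫ y in p..q, flux u b y) - ∫ y in p..q, flux u a y) := by
  have hdiv := integral_divergence (g := fun x y => -energy F u x y) hu.contDiff_flux
    hu.contDiff_energy.neg a b p q
  have hneg : ∀ x y, pdy (fun x y => -energy F u x y) x y = -pdy (energy F u) x y := fun x y =>
    deriv.fun_neg
  simp_rw [hneg, ← sub_eq_add_neg, hu.pdx_flux_sub_pdy_energy,
    intervalIntegral.integral_const_mul, intervalIntegral.integral_neg] at hdiv
  linarith

theorem integral_pdy (hu : IsFront F c u) (x p q : ℝ) :
    ∫ y in p..q, pdy u x y = u x q - u x p :=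
  intervalIntegral.integral_eq_sub_of_hasDerivAt (fun y _ => hu.hasDerivAt_y x y)
    ((continuous_slice_snd hu.contDiff_one_pdy.continuous x).intervalIntegrable _ _)

theorem abs_integral_flux_le (hu : IsFront F c u) (hC : DerivBounds F u C) (x : ℝ) {p q : ℝ}
    (hpq : p ≤ q) : |∫ y in p..q, flux u x y| ≤ 2 * C := by
  have hy := continuous_slice_snd hu.contDiff_one_pdy.continuous x
  calc |∫ y in p..q, flux u x y|
      ≤ ∫ y in p..q, |flux u x y| := intervalIntegral.abs_integral_le_integral_abs hpq
    _ ≤ ∫ y in p..q, C * pdy u x y := by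
      refine intervalIntegral.integral_mono_on hpq
        ((continuous_slice_snd hu.contDiff_flux.continuous x).abs.intervalIntegrable _ _)
        ((hy.const_mul C).intervalIntegrable _ _) fun y _ => ?_
      rw [flux, abs_mul, abs_of_pos (hu.pdy_pos x y)]
      exact mul_le_mul_of_nonneg_right (hC.abs_pdx_le x y) (hu.pdy_pos x y).le
    _ = C * (u x q - u x p) := by rw [intervalIntegral.integral_const_mul, hu.integral_pdy]
    _ ≤ C * 2 :=
      mul_le_mul_of_nonneg_left (by linarith [hu.lt_one x q, hu.neg_one_lt x p]) hC.pos.le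
    _ = 2 * C := mul_comm _ _

theorem abs_energy_le (hu : IsFront F c u) (hC : DerivBounds F u C) (x y : ℝ) :
    |energy F u x y| ≤ C ^ 2 + C := by
  have hx : pdx u x y ^ 2 ≤ C ^ 2 := sq_le_sq.2 ((hC.abs_pdx_le x y).trans (le_abs_self C))
  have hy : pdy u x y ^ 2 ≤ C ^ 2 := pow_le_pow_left₀ (hu.pdy_pos x y).le (hC.pdy_le x y) 2
  have hF := hC.potential_le _ (hu.mem_Icc x y)
  have hF0 := hu.potential_nonneg (hu.mem_Icc x y)
  unfold energy
  exact abs_le.2 ⟨by linarith [sq_nonneg (pdx u x y)], by linarith [sq_nonneg (pdy u x y)]⟩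

theorem potential_eq_zero (hu : IsFront F c u) {s : ℝ} (hs : |s| = 1) : F s = 0 := by
  rcases eq_or_eq_neg_of_abs_eq hs with rfl | rfl
  exacts [hu.potential_one, hu.potential_neg_one]

theorem tendsto_energy (hu : IsFront F c u) (x : ℝ) {l : Filter ℝ} {s : ℝ} (hs : |s| = 1)
    (hl : Tendsto (fun y => u x y) l (nhds s)) :
    Tendsto (fun y => energy F u x y) l (nhds 0) := by
  obtain ⟨C, hC⟩ := hu.exists_derivBounds
  have hF : Tendsto (fun y => F (u x y)) l (nhds 0) := by
    simpa only [hu.potential_eq_zero hs, Function.comp_def] using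
      (hu.continuous_potential.tendsto s).comp hl
  have hwell : Tendsto (fun y => 4 * C * (1 - |u x y|)) l (nhds 0) := by
    simpa only [hs, sub_self, mul_zero] using (hl.abs.const_sub 1).const_mul (4 * C)
  have hpdx : Tendsto (fun y => pdx u x y ^ 2) l (nhds 0) :=
    squeeze_zero (fun y => sq_nonneg _) (hC.sq_pdx_le hu x) hwell
  have hpdy : Tendsto (fun y => pdy u x y ^ 2) l (nhds 0) :=
    squeeze_zero (fun y => sq_nonneg _) (hC.sq_pdy_le hu x) hwell
  simpa [energy] using ((hpdx.sub hpdy).div_const 2).add hF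

theorem eventually_abs_integral_energy_le (hu : IsFront F c u) (a b : ℝ) {l : Filter ℝ}
    [l.IsCountablyGenerated] {s ε : ℝ} (hs : |s| = 1)
    (hl : ∀ x, Tendsto (fun y => u x y) l (nhds s)) (hε : 0 < ε) :
    ∀ᶠ y in l, |∫ x in a..b, energy F u x y| ≤ ε := by
  obtain ⟨C, hC⟩ := hu.exists_derivBounds
  have hlim : Tendsto (fun y => ∫ x in a..b, energy F u x y) l (nhds (∫ _ in a..b, (0 : ℝ))) :=
    intervalIntegral.tendsto_integral_filter_of_dominated_convergence (fun _ => C ^ 2 + C)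
      (.of_forall fun y =>
        (continuous_slice_fst hu.contDiff_energy.continuous y).aestronglyMeasurable)
      (.of_forall fun y => .of_forall fun x _ => hu.abs_energy_le hC x y)
      intervalIntegrable_const (.of_forall fun x _ => hu.tendsto_energy x hs (hl x))
  simpa using hlim.abs.eventually_le_const (by simpa using hε)

theorem integral_sq_pdy_mono (hu : IsFront F c u) {a b p q a' b' p' q' : ℝ} (ha : a' ≤ a)
    (hab : a ≤ b) (hb : b ≤ b') (hp : p' ≤ p) (hpq : p ≤ q) (hq : q ≤ q') :
    ∫ x in a..b, ∫ y in p..q, pdy u x y ^ 2 ≤ ∫ x in a'..b', ∫ y in p'..q', pdy u x y ^ 2 := by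
  have hcont : Continuous (fun p : ℝ × ℝ => pdy u p.1 p.2 ^ 2) :=
    hu.contDiff_one_pdy.continuous.pow 2
  have hinner : ∀ r s : ℝ, Continuous fun x => ∫ y in r..s, pdy u x y ^ 2 := fun r s =>
    intervalIntegral.continuous_parametric_intervalIntegral_of_continuous' hcont r s
  calc ∫ x in a..b, ∫ y in p..q, pdy u x y ^ 2
      ≤ ∫ x in a..b, ∫ y in p'..q', pdy u x y ^ 2 :=
        intervalIntegral.integral_mono_on hab ((hinner _ _).intervalIntegrable _ _)
          ((hinner _ _).intervalIntegrable _ _) fun x _ =>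
            intervalIntegral.integral_mono_interval hp hpq hq (.of_forall fun y => sq_nonneg _)
              ((continuous_slice_snd (f := fun x y => pdy u x y ^ 2) hcont
                x).intervalIntegrable _ _)
    _ ≤ ∫ x in a'..b', ∫ y in p'..q', pdy u x y ^ 2 :=
        intervalIntegral.integral_mono_interval ha hab hb
          (.of_forall fun x => intervalIntegral.integral_nonneg (hp.trans (hpq.trans hq))
            fun y _ => sq_nonneg _) ((hinner _ _).intervalIntegrable _ _)

theorem integral_sq_pdy_le (hu : IsFront F c u) (hC : DerivBounds F u C) {a b p q : ℝ}
    (hab : a ≤ b) (hpq : p ≤ q) :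
    c * ∫ x in a..b, ∫ y in p..q, pdy u x y ^ 2 ≤ 2 + 4 * C := by
  obtain ⟨q', henergy_q, hq⟩ := ((hu.eventually_abs_integral_energy_le a b (by simp)
    hu.tendsto_atTop one_pos).and (eventually_ge_atTop q)).exists
  obtain ⟨p', henergy_p, hp⟩ := ((hu.eventually_abs_integral_energy_le a b (by simp)
    hu.tendsto_atBot one_pos).and (eventually_le_atBot p)).exists
  have hp'q' : p' ≤ q' := hp.trans (hpq.trans hq)
  have hmono := mul_le_mul_of_nonneg_left (hu.integral_sq_pdy_mono le_rfl hab le_rfl hp hpq hq)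
    hu.speed_pos.le
  have hflux_a := abs_le.1 (hu.abs_integral_flux_le hC a hp'q')
  have hflux_b := abs_le.1 (hu.abs_integral_flux_le hC b hp'q')
  linarith [hu.integral_energy_sub a b p' q', (abs_le.1 henergy_q).2, (abs_le.1 henergy_p).1]

theorem integral_energy_le (hu : IsFront F c u) (hC : DerivBounds F u C) {a b : ℝ} (hab : a ≤ b)
    (y : ℝ) : ∫ x in a..b, energy F u x y ≤ 3 + 8 * C := by
  obtain ⟨p, henergy, hp⟩ := ((hu.eventually_abs_integral_energy_le a b (by simp)
    hu.tendsto_atBot one_pos).and (eventually_le_atBot y)).exists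
  have hflux_a := abs_le.1 (hu.abs_integral_flux_le hC a hp)
  have hflux_b := abs_le.1 (hu.abs_integral_flux_le hC b hp)
  linarith [hu.integral_energy_sub a b p y, hu.integral_sq_pdy_le hC hab hp,
    (abs_le.1 henergy).2]

/-! ### Decay of `uᵧ` and `uₓᵧ` -/

theorem integrable_sq_pdy (hu : IsFront F c u) :
    Integrable (fun z : ℝ × ℝ => pdy u z.1 z.2 ^ 2) := by
  obtain ⟨C, hC⟩ := hu.exists_derivBounds
  have hcont : Continuous (fun p : ℝ × ℝ => pdy u p.1 p.2 ^ 2) :=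
    hu.contDiff_one_pdy.continuous.pow 2
  have hint_sq : ∀ r : ℝ, IntegrableOn (fun p : ℝ × ℝ => pdy u p.1 p.2 ^ 2) (closedBall 0 r) :=
    fun r => hcont.continuousOn.integrableOn_compact (isCompact_closedBall 0 r)
  refine (aecover_closedBall (x := (0 : ℝ × ℝ)) tendsto_id).integrable_of_integral_norm_bounded
    ((2 + 4 * C) / c) hint_sq ?_
  filter_upwards [eventually_ge_atTop 0] with r hr
  have hr' : -r ≤ r := by linarith
  have hsquare : closedBall (0 : ℝ × ℝ) r = Set.Icc (-r) r ×ˢ Set.Icc (-r) r := by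
    rw [Prod.zero_eq_mk, ← closedBall_prod_same, Real.closedBall_eq_Icc, zero_sub, zero_add]
  simp_rw [Real.norm_eq_abs, abs_sq, le_div_iff₀' hu.speed_pos, id]
  have hintr := hint_sq r
  rw [hsquare] at hintr ⊢
  rw [Measure.volume_eq_prod, setIntegral_prod _ hintr]
  simp_rw [integral_Icc_eq_integral_Ioc, ← intervalIntegral.integral_of_le hr']
  exact hu.integral_sq_pdy_le hC hr' hr'

theorem tendsto_pdy_cocompact (hu : IsFront F c u) :
    Tendsto (fun p : ℝ × ℝ => pdy u p.1 p.2) (cocompact (ℝ × ℝ)) (nhds 0) := by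
  obtain ⟨C, hC⟩ := hu.exists_derivBounds
  exact tendsto_cocompact_zero_of_integrable_norm_pow (μ := volume) (n := 2)
    (uniformContinuous_of_hasDerivAt hu.hasDerivAt_yx hu.hasDerivAt_yy hC.abs_pdy_pdx_le
      hC.abs_pdyy_le) (by simpa using hu.integrable_sq_pdy)

theorem tendsto_pdy_pdx_cocompact (hu : IsFront F c u) :
    Tendsto (fun p : ℝ × ℝ => pdy (pdx u) p.1 p.2) (cocompact (ℝ × ℝ)) (nhds 0) := by
  obtain ⟨C, hC⟩ := hu.exists_derivBounds
  refine tendsto_cocompact_zero_iff.2 fun ε hε => ?_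
  obtain ⟨R, hR⟩ := tendsto_cocompact_zero_iff.1 hu.tendsto_pdy_cocompact (ε / C)
    (div_pos hε hC.pos)
  refine ⟨R + 1, fun x y hxy => ?_⟩
  refine (hC.abs_pdy_pdx_le_mul x y (ε / C) fun x' y' hx hy => ?_).trans_eq
    (mul_div_cancel₀ ε hC.pos.ne')
  exact (le_abs_self _).trans (hR x' y' (le_norm_of_near hxy hx hy))

end IsFront

/-! ### Equipartition at infinity -/

/-- The momentum density `(uₓ² - uᵧ²) / 2 - F(u)`, whose integral over vertical lines is driven by
the friction `-c uₓ uᵧ` and the flux through horizontal lines. -/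
noncomputable def stress (F : ℝ → ℝ) (u : ℝ → ℝ → ℝ) (x y : ℝ) : ℝ :=
  (pdx u x y ^ 2 - pdy u x y ^ 2) / 2 - F (u x y)

/-- The discrepancy `uₓ² / 2 - F(u)`, which would vanish for a one-dimensional heteroclinic profile
in the `x` direction. -/
noncomputable def discrepancy (F : ℝ → ℝ) (u : ℝ → ℝ → ℝ) (x y : ℝ) : ℝ :=
  pdx u x y ^ 2 / 2 - F (u x y)

namespace IsFront

variable {F : ℝ → ℝ} {c : ℝ} {u : ℝ → ℝ → ℝ} {C : ℝ}

theorem contDiff_stress (hu : IsFront F c u) :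
    ContDiff ℝ 1 (fun p : ℝ × ℝ => stress F u p.1 p.2) :=
  (((hu.contDiff_one_pdx.pow 2).sub (hu.contDiff_one_pdy.pow 2)).div_const 2).sub
    ((hu.contDiff_potential.of_le (by norm_num)).comp hu.contDiff_one)

theorem pdx_stress_add_pdy_flux (hu : IsFront F c u) (x y : ℝ) :
    pdx (stress F u) x y + pdy (flux u) x y = -c * flux u x y := by
  have hflux : pdy (flux u) x y = pdy (pdx u) x y * pdy u x y + pdx u x y * pdyy u x y :=
    ((hu.hasDerivAt_xy x y).mul (hu.hasDerivAt_yy x y)).deriv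
  have hstress := ((((hu.hasDerivAt_xx x y).pow 2).sub ((hu.hasDerivAt_yx x y).pow 2)).div_const
    2).sub ((hu.hasDerivAt_potential (u x y)).comp x (hu.hasDerivAt_x x y))
  rw [hflux, show pdx (stress F u) x y = _ from hstress.deriv, ← hu.pde, flux]
  ring

theorem integral_stress_sub (hu : IsFront F c u) (a b p q : ℝ) :
    (∫ y in p..q, stress F u b y) - ∫ y in p..q, stress F u a y =
      -c * (∫ x in a..b, ∫ y in p..q, flux u x y) -
        ((∫ x in a..b, flux u x q) - ∫ x in a..b, flux u x p) := by
  have hdiv := integral_divergence hu.contDiff_stress hu.contDiff_flux a b p q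
  simp_rw [hu.pdx_stress_add_pdy_flux, intervalIntegral.integral_const_mul] at hdiv
  linarith

theorem hasDerivAt_discrepancy (hu : IsFront F c u) (x y : ℝ) :
    HasDerivAt (fun t => discrepancy F u x t)
      (pdx u x y * pdy (pdx u) x y - deriv F (u x y) * pdy u x y) y :=
  ((((hu.hasDerivAt_xy x y).pow 2).div_const 2).sub
    ((hu.hasDerivAt_potential (u x y)).comp y (hu.hasDerivAt_y x y))).congr_deriv
    (by norm_num; ring)

theorem abs_flux_le (hu : IsFront F c u) (hC : DerivBounds F u C) {e x y : ℝ}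
    (he : pdy u x y ≤ e) : |flux u x y| ≤ C * e := by
  rw [flux, abs_mul, abs_of_pos (hu.pdy_pos x y)]
  exact mul_le_mul (hC.abs_pdx_le x y) he (hu.pdy_pos x y).le hC.pos.le

theorem sq_pdy_le_of_le (hu : IsFront F c u) {e x y : ℝ} (he : pdy u x y ≤ e) (he1 : e ≤ 1) :
    pdy u x y ^ 2 ≤ e :=
  (pow_le_of_le_one (hu.pdy_pos x y).le (he.trans he1) two_ne_zero).trans he

theorem abs_discrepancy_sub_le (hu : IsFront F c u) (hC : DerivBounds F u C) {e x a b : ℝ}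
    (he : ∀ y ∈ Set.uIcc a b, pdy u x y ≤ e ∧ |pdy (pdx u) x y| ≤ e) :
    |discrepancy F u x b - discrepancy F u x a| ≤ 2 * C * e * |b - a| := by
  refine abs_sub_le_of_hasDerivAt (fun y _ => hu.hasDerivAt_discrepancy x y) fun y hy => ?_
  have hy0 := hu.pdy_pos x y
  have hC0 := hC.pos.le
  calc |pdx u x y * pdy (pdx u) x y - deriv F (u x y) * pdy u x y|
      ≤ |pdx u x y * pdy (pdx u) x y| + |deriv F (u x y) * pdy u x y| := abs_sub _ _
    _ = |pdx u x y| * |pdy (pdx u) x y| + |deriv F (u x y)| * pdy u x y := by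
      rw [abs_mul, abs_mul, abs_of_pos hy0]
    _ ≤ C * e + C * e := by
      gcongr
      exacts [hC.abs_pdx_le x y, (he y hy).2, hC.abs_deriv_le _ (hu.mem_Icc x y), (he y hy).1]
    _ = 2 * C * e := by ring

theorem abs_integral_stress_sub_discrepancy_le (hu : IsFront F c u) (hC : DerivBounds F u C)
    {e x y₀ : ℝ} (he1 : e ≤ 1)
    (he : ∀ y ∈ Set.Icc y₀ (y₀ + 1), pdy u x y ≤ e ∧ |pdy (pdx u) x y| ≤ e) :
    |(∫ y in y₀..(y₀ + 1), stress F u x y) - discrepancy F u x y₀| ≤ 2 * C * e + e / 2 := by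
  have hy₀ : y₀ ≤ y₀ + 1 := by linarith
  have hpoint : ∀ y ∈ Set.uIoc y₀ (y₀ + 1),
      ‖stress F u x y - discrepancy F u x y₀‖ ≤ 2 * C * e + e / 2 := fun y hy => by
    rw [Set.uIoc_of_le hy₀] at hy
    have hdisc := hu.abs_discrepancy_sub_le hC (x := x) (a := y₀) (b := y) fun t ht => by
      rw [Set.uIcc_of_le hy.1.le] at ht
      exact he t ⟨ht.1, ht.2.trans hy.2⟩
    have hpdy := (he y ⟨hy.1.le, hy.2⟩).1
    have hlen : |y - y₀| ≤ 1 := abs_le.2 ⟨by linarith [hy.1], by linarith [hy.2]⟩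
    have he0 : 0 ≤ e := (hu.pdy_pos x y).le.trans hpdy
    have hCe : 0 ≤ 2 * C * e := by have := hC.pos; positivity
    have hstress : stress F u x y = discrepancy F u x y - pdy u x y ^ 2 / 2 := by
      unfold stress discrepancy
      ring
    have hdisc' := abs_le.1 (hdisc.trans (mul_le_of_le_one_right hCe hlen))
    rw [Real.norm_eq_abs, hstress, abs_le]
    constructor <;> linarith [hu.sq_pdy_le_of_le hpdy he1, sq_nonneg (pdy u x y)]
  have hstress_int := (continuous_slice_snd hu.contDiff_stress.continuous x).intervalIntegrable
    (μ := volume) y₀ (y₀ + 1)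
  have havg := intervalIntegral.norm_integral_le_of_norm_le_const hpoint
  rw [intervalIntegral.integral_sub hstress_int intervalIntegrable_const] at havg
  simpa using havg

theorem abs_integral_stress_sub_le (hu : IsFront F c u) (hC : DerivBounds F u C)
    {e x₀ x₁ y₀ : ℝ} (hx : x₀ ≤ x₁)
    (he : ∀ x ∈ Set.Icc x₀ x₁, ∀ y ∈ Set.Icc y₀ (y₀ + 1), pdy u x y ≤ e) :
    |(∫ y in y₀..(y₀ + 1), stress F u x₁ y) - ∫ y in y₀..(y₀ + 1), stress F u x₀ y| ≤
      (c + 2) * (C * e) * (x₁ - x₀) := by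
  have hc := hu.speed_pos
  have hy₀ : y₀ ≤ y₀ + 1 := by linarith
  have hrow : ∀ y ∈ Set.Icc y₀ (y₀ + 1), |∫ x in x₀..x₁, flux u x y| ≤ C * e * (x₁ - x₀) :=
    fun y hy => by
      rw [← abs_of_nonneg (sub_nonneg.2 hx), ← Real.norm_eq_abs]
      refine intervalIntegral.norm_integral_le_of_norm_le_const fun x hx' => ?_
      rw [Set.uIoc_of_le hx] at hx'
      exact hu.abs_flux_le hC (he x (Set.Ioc_subset_Icc_self hx') y hy)
  have hcolumn : ∀ x ∈ Set.uIoc x₀ x₁, ‖∫ y in y₀..(y₀ + 1), flux u x y‖ ≤ C * e :=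
    fun x hx' => by
      rw [Set.uIoc_of_le hx] at hx'
      refine (intervalIntegral.norm_integral_le_of_norm_le_const fun y hy => ?_).trans_eq
        (by rw [add_sub_cancel_left, abs_one, mul_one])
      rw [Set.uIoc_of_le hy₀] at hy
      exact hu.abs_flux_le hC
        (he x (Set.Ioc_subset_Icc_self hx') y (Set.Ioc_subset_Icc_self hy))
  have hbox := intervalIntegral.norm_integral_le_of_norm_le_const hcolumn
  rw [Real.norm_eq_abs, abs_of_nonneg (sub_nonneg.2 hx)] at hbox
  have hbox' := abs_le.1 hbox
  have htop := abs_le.1 (hrow (y₀ + 1) (Set.right_mem_Icc.2 hy₀))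
  have hbot := abs_le.1 (hrow y₀ (Set.left_mem_Icc.2 hy₀))
  rw [hu.integral_stress_sub, abs_le]
  constructor <;> nlinarith

theorem exists_energy_le (hu : IsFront F c u) (hC : DerivBounds F u C) {L : ℝ} (hL : 0 < L)
    (x₀ y : ℝ) : ∃ x₁ ∈ Set.Icc x₀ (x₀ + L), energy F u x₁ y ≤ (4 + 8 * C) / L := by
  by_contra! hno
  have hlower : ∫ _ in x₀..(x₀ + L), (4 + 8 * C) / L ≤ ∫ x in x₀..(x₀ + L), energy F u x y :=
    intervalIntegral.integral_mono_on (by linarith) intervalIntegrable_const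
      ((continuous_slice_fst hu.contDiff_energy.continuous y).intervalIntegrable _ _)
      fun x hx => (hno x hx).le
  have hupper := hu.integral_energy_le hC (show x₀ ≤ x₀ + L by linarith) y
  rw [intervalIntegral.integral_const, add_sub_cancel_left, smul_eq_mul,
    mul_div_cancel₀ _ hL.ne'] at hlower
  linarith

theorem abs_discrepancy_le (hu : IsFront F c u) (x y : ℝ) :
    |discrepancy F u x y| ≤ energy F u x y + pdy u x y ^ 2 / 2 := by
  have hF := hu.potential_nonneg (hu.mem_Icc x y)
  unfold discrepancy energy
  exact abs_le.2 ⟨by linarith [sq_nonneg (pdx u x y)], by linarith⟩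

-- Momentum balance propagates the smallness of the discrepancy from a column of small energy.
theorem abs_discrepancy_le_of_pdy_le (hu : IsFront F c u) (hC : DerivBounds F u C)
    {e L x₀ y₀ : ℝ} (hL : 0 < L) (he1 : e ≤ 1)
    (he : ∀ x ∈ Set.Icc x₀ (x₀ + L), ∀ y ∈ Set.Icc y₀ (y₀ + 1),
      pdy u x y ≤ e ∧ |pdy (pdx u) x y| ≤ e) :
    |discrepancy F u x₀ y₀| ≤ (4 + 8 * C) / L + (2 + 4 * C + (c + 2) * C * L) * e := by
  obtain ⟨x₁, hx₁, henergy⟩ := hu.exists_energy_le hC hL x₀ y₀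
  have hx₀ : x₀ ∈ Set.Icc x₀ (x₀ + L) := Set.left_mem_Icc.2 (by linarith)
  have hpdy := (he x₁ hx₁ y₀ (Set.left_mem_Icc.2 (by linarith))).1
  have he0 : 0 ≤ e := (hu.pdy_pos x₁ y₀).le.trans hpdy
  have hdisc := abs_le.1 (hu.abs_discrepancy_le x₁ y₀)
  have hcol₀ := abs_le.1 (hu.abs_integral_stress_sub_discrepancy_le hC he1 (he x₀ hx₀))
  have hcol₁ := abs_le.1 (hu.abs_integral_stress_sub_discrepancy_le hC he1 (he x₁ hx₁))
  have hstress := abs_le.1 (hu.abs_integral_stress_sub_le hC hx₁.1 fun x hx y hy =>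
    (he x ⟨hx.1, hx.2.trans hx₁.2⟩ y hy).1)
  have hlen : (c + 2) * (C * e) * (x₁ - x₀) ≤ (c + 2) * (C * e) * L := by
    have hc := hu.speed_pos
    have hC0 := hC.pos
    gcongr
    linarith [hx₁.2]
  have hsq := hu.sq_pdy_le_of_le hpdy he1
  rw [abs_le]
  constructor <;> linarith

theorem tendsto_discrepancy_cocompact (hu : IsFront F c u) :
    Tendsto (fun p : ℝ × ℝ => discrepancy F u p.1 p.2) (cocompact (ℝ × ℝ)) (nhds 0) := by
  obtain ⟨C, hC⟩ := hu.exists_derivBounds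
  refine tendsto_cocompact_zero_iff.2 fun ε hε => ?_
  have hC0 := hC.pos
  have hc := hu.speed_pos
  obtain ⟨L, hL, hLε⟩ : ∃ L > 0, (4 + 8 * C) / L = ε / 2 :=
    ⟨2 * (4 + 8 * C) / ε, by positivity, by field_simp⟩
  obtain ⟨e, he, he1, heε⟩ : ∃ e > 0, e ≤ 1 ∧ (2 + 4 * C + (c + 2) * C * L) * e ≤ ε / 2 :=
    ⟨min 1 (ε / 2 / (2 + 4 * C + (c + 2) * C * L)), by positivity, min_le_left _ _,
      (le_div_iff₀' (by positivity)).1 (min_le_right _ _)⟩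
  obtain ⟨R₁, hR₁⟩ := tendsto_cocompact_zero_iff.1 hu.tendsto_pdy_cocompact e he
  obtain ⟨R₂, hR₂⟩ := tendsto_cocompact_zero_iff.1 hu.tendsto_pdy_pdx_cocompact e he
  refine ⟨max R₁ R₂ + (L + 1), fun x y hxy => ?_⟩
  refine (hu.abs_discrepancy_le_of_pdy_le hC hL he1 fun x' hx' y' hy' => ?_).trans (by linarith)
  have hfar : max R₁ R₂ ≤ ‖(x', y')‖ := le_norm_of_near hxy
    (abs_le.2 ⟨by linarith [hx'.1], by linarith [hx'.2]⟩)
    (abs_le.2 ⟨by linarith [hy'.1], by linarith [hy'.2]⟩)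
  exact ⟨(le_abs_self _).trans (hR₁ x' y' ((le_max_left _ _).trans hfar)),
    hR₂ x' y' ((le_max_right _ _).trans hfar)⟩

theorem exists_le_abs_pdx (hu : IsFront F c u) {δ : ℝ} (hδ : 0 < δ) :
    ∃ κ > 0, ∃ R, ∀ x y, R ≤ ‖(x, y)‖ → |u x y| ≤ 1 - δ → κ ≤ |pdx u x y| := by
  rcases lt_or_ge 1 δ with hδ1 | hδ1
  · exact ⟨1, one_pos, 0, fun x y _ hband => by linarith [abs_nonneg (u x y)]⟩
  obtain ⟨s, hs, hmin⟩ := (isCompact_Icc (a := -1 + δ) (b := 1 - δ)).exists_isMinOn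
    ⟨0, by constructor <;> linarith⟩ hu.continuous_potential.continuousOn
  have hpos : 0 < F s := hu.potential_pos s ⟨by linarith [hs.1], by linarith [hs.2]⟩
  obtain ⟨R, hR⟩ := tendsto_cocompact_zero_iff.1 hu.tendsto_discrepancy_cocompact (F s / 2)
    (half_pos hpos)
  refine ⟨√(F s), Real.sqrt_pos.2 hpos, R, fun x y hxy hband =>
    Real.sqrt_le_iff.2 ⟨abs_nonneg _, ?_⟩⟩
  have hband' := abs_le.1 hband
  have hlower : F s ≤ F (u x y) := hmin ⟨by linarith [hband'.1], hband'.2⟩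
  have hdisc := (abs_le.1 (hR x y hxy)).1
  rw [discrepancy] at hdisc
  rw [sq_abs]
  linarith

end IsFront

/-! ### The sign of `uₓ` far to the right -/

theorem forall_pos_or_forall_neg_of_isPreconnected {α : Type*} [TopologicalSpace α] {s : Set α}
    (hs : IsPreconnected s) {f : α → ℝ} (hf : ContinuousOn f s) (hne : ∀ a ∈ s, f a ≠ 0) :
    (∀ a ∈ s, 0 < f a) ∨ ∀ a ∈ s, f a < 0 := by
  by_contra! h
  obtain ⟨⟨a, ha, hfa⟩, b, hb, hfb⟩ := h
  obtain ⟨z, hz, hfz⟩ := hs.intermediate_value ha hb hf ⟨hfa, hfb⟩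
  exact hne z hz hfz

/-- The cost `∫₋₁ˢ √(2 F)` of the one-dimensional profile between the well `-1` and the value
`s`. -/
noncomputable def profileCost (F : ℝ → ℝ) (s : ℝ) : ℝ := ∫ t in (-1 : ℝ)..s, √(2 * F t)

theorem DerivBounds.abs_pdx_le_of_le_abs {F : ℝ → ℝ} {c : ℝ} {u : ℝ → ℝ → ℝ} {C η x y : ℝ}
    (hC : DerivBounds F u C) (hu : IsFront F c u) (hη : 0 ≤ η)
    (hwell : 1 - η ^ 2 / (4 * C) ≤ |u x y|) : |pdx u x y| ≤ η := by
  have hC0 : 0 < 4 * C := by linarith [hC.pos]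
  refine abs_le_of_sq_le_sq ((hC.sq_pdx_le hu x y).trans ?_) hη
  rw [← le_div_iff₀' hC0]
  linarith

namespace IsFront

variable {F : ℝ → ℝ} {c : ℝ} {u : ℝ → ℝ → ℝ}

theorem exists_eq (hu : IsFront F c u) (x : ℝ) {s : ℝ} (hs : s ∈ Set.Ioo (-1) 1) :
    ∃ y, u x y = s := by
  obtain ⟨a, ha⟩ := ((hu.tendsto_atBot x).eventually_lt_const hs.1).exists
  obtain ⟨b, hb⟩ := ((hu.tendsto_atTop x).eventually_const_lt hs.2).exists
  exact mem_range_of_exists_le_of_exists_ge (continuous_slice_snd hu.continuous x) ⟨a, ha.le⟩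
    ⟨b, hb.le⟩

theorem isOpenMap_prodMk (hu : IsFront F c u) :
    IsOpenMap fun p : ℝ × ℝ => (p.1, u p.1 p.2) := by
  refine isOpenMap_iff_nhds_le.2 fun p => ?_
  have hdiff := (hu.contDiff_one.contDiffAt (x := p)).hasStrictFDerivAt one_ne_zero
  have hpdy := hu.pdy_pos p.1 p.2
  rw [pdy_eq_fderiv (f := u) hdiff.hasFDerivAt.differentiableAt] at hpdy
  refine (HasStrictFDerivAt.map_nhds_eq_of_surj (hasStrictFDerivAt_fst.prodMk hdiff)
    (LinearMap.range_eq_top.2 fun v => ?_)).ge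
  set D := fderiv ℝ (fun q : ℝ × ℝ => u q.1 q.2) p
  have hsplit : ∀ k, D (v.1, k) = D (v.1, 0) + k * D (0, 1) := fun k => by
    rw [← smul_eq_mul, ← map_smul, ← map_add]
    simp
  refine ⟨(v.1, (v.2 - D (v.1, 0)) / D (0, 1)), Prod.ext rfl ?_⟩
  change D _ = _
  rw [hsplit]
  field_simp
  ring

-- In the coordinates `(x, u x y)` the region below is a product of two intervals.
theorem isPreconnected_setOf_abs_le (hu : IsFront F c u) (B : ℝ) {r : ℝ} (hr : r < 1) :
    IsPreconnected {p : ℝ × ℝ | B ≤ p.1 ∧ |u p.1 p.2| ≤ r} := by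
  have hinj : Function.Injective fun p : ℝ × ℝ => (p.1, u p.1 p.2) := by
    rintro ⟨x, y⟩ ⟨x', y'⟩ h
    obtain ⟨hx, huy⟩ := Prod.mk.inj h
    obtain rfl : x = x' := hx
    exact Prod.ext rfl ((hu.strictMono x).injective huy)
  have hpre : IsPreconnected (Set.Ici B ×ˢ Set.Icc (-r) r) :=
    isPreconnected_Ici.prod isPreconnected_Icc
  convert hpre.preimage_of_isOpenMap hinj hu.isOpenMap_prodMk fun p hp => ?_ using 1
  · ext p
    simp [abs_le]
  · obtain ⟨y, hy⟩ := hu.exists_eq p.1 (s := p.2) ⟨by linarith [hp.2.1], by linarith [hp.2.2]⟩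
    exact ⟨(p.1, y), Prod.ext rfl hy⟩

theorem exists_le_pdx_or_pdx_le_neg (hu : IsFront F c u) {δ : ℝ} (hδ : 0 < δ) :
    ∃ κ > 0, ∃ B, (∀ x y, B ≤ x → |u x y| ≤ 1 - δ → κ ≤ pdx u x y) ∨
      ∀ x y, B ≤ x → |u x y| ≤ 1 - δ → pdx u x y ≤ -κ := by
  obtain ⟨κ, hκ, R, hR⟩ := hu.exists_le_abs_pdx hδ
  have hlower : ∀ x y, R ≤ x → |u x y| ≤ 1 - δ → κ ≤ |pdx u x y| := fun x y hx =>
    hR x y ((hx.trans (le_abs_self x)).trans (norm_fst_le (x, y)))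
  refine ⟨κ, hκ, R, ?_⟩
  rcases forall_pos_or_forall_neg_of_isPreconnected
    (hu.isPreconnected_setOf_abs_le R (sub_lt_self 1 hδ))
    (hu.contDiff_one_pdx.continuous.continuousOn)
    (fun p hp => abs_pos.1 (hκ.trans_le (hlower p.1 p.2 hp.1 hp.2))) with hpos | hneg
  · exact Or.inl fun x y hx hy =>
      (hlower x y hx hy).trans_eq (abs_of_pos (hpos (x, y) ⟨hx, hy⟩))
  · exact Or.inr fun x y hx hy =>
      le_neg.2 ((hlower x y hx hy).trans_eq (abs_of_neg (hneg (x, y) ⟨hx, hy⟩)))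

theorem tendsto_abs_pdx_sub_sqrt_cocompact (hu : IsFront F c u) :
    Tendsto (fun p : ℝ × ℝ => |pdx u p.1 p.2| - √(2 * F (u p.1 p.2))) (cocompact (ℝ × ℝ))
      (nhds 0) := by
  refine (tendsto_cocompact_zero_iff
    (f := fun x y => |pdx u x y| - √(2 * F (u x y)))).2 fun ε hε => ?_
  obtain ⟨R, hR⟩ := tendsto_cocompact_zero_iff.1 hu.tendsto_discrepancy_cocompact (ε ^ 2 / 2)
    (by positivity)
  refine ⟨R, fun x y hxy => abs_le_of_sq_le_sq ?_ hε.le⟩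
  have hroot := Real.sq_sqrt (mul_nonneg zero_le_two (hu.potential_nonneg (hu.mem_Icc x y)))
  have hroot0 := Real.sqrt_nonneg (2 * F (u x y))
  have hpdx := abs_nonneg (pdx u x y)
  have hdisc := abs_le.1 (hR x y hxy)
  rw [discrepancy, ← sq_abs (pdx u x y)] at hdisc
  rcases le_total |pdx u x y| √(2 * F (u x y)) with h | h <;> nlinarith

theorem continuous_sqrt_potential (hu : IsFront F c u) : Continuous fun s => √(2 * F s) :=
  (hu.continuous_potential.const_mul 2).sqrt

theorem hasDerivAt_profileCost (hu : IsFront F c u) (s : ℝ) :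
    HasDerivAt (profileCost F) √(2 * F s) s :=
  hu.continuous_sqrt_potential.integral_hasStrictDerivAt (-1) s |>.hasDerivAt

theorem monotone_profileCost (hu : IsFront F c u) : Monotone (profileCost F) :=
  monotone_of_hasDerivAt_nonneg hu.hasDerivAt_profileCost fun _ => Real.sqrt_nonneg _

theorem continuous_profileCost (hu : IsFront F c u) : Continuous (profileCost F) :=
  continuous_iff_continuousAt.2 fun s => (hu.hasDerivAt_profileCost s).continuousAt

theorem continuous_sqrt_add_mul_pdy (hu : IsFront F c u) (x k : ℝ) :
    Continuous fun y => (√(2 * F (u x y)) + k) * pdy u x y :=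
  ((hu.continuous_sqrt_potential.comp (continuous_slice_snd hu.continuous x)).add_const k).mul
    (continuous_slice_snd hu.contDiff_one_pdy.continuous x)

theorem integral_sqrt_add_mul_pdy (hu : IsFront F c u) (x p q k : ℝ) :
    ∫ y in p..q, (√(2 * F (u x y)) + k) * pdy u x y =
      profileCost F (u x q) - profileCost F (u x p) + k * (u x q - u x p) := by
  have hderiv : ∀ y, HasDerivAt (fun y => profileCost F (u x y) + k * u x y)
      ((√(2 * F (u x y)) + k) * pdy u x y) y := fun y =>
    (((hu.hasDerivAt_profileCost (u x y)).comp y (hu.hasDerivAt_y x y)).add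
      ((hu.hasDerivAt_y x y).const_mul k)).congr_deriv (by ring)
  rw [intervalIntegral.integral_eq_sub_of_hasDerivAt (fun y _ => hderiv y)
    ((hu.continuous_sqrt_add_mul_pdy x k).intervalIntegrable _ _)]
  ring

theorem integral_flux_le (hu : IsFront F c u) {x k p q : ℝ} (hk : 0 ≤ k) (hpq : p ≤ q)
    (hpdx : ∀ y, pdx u x y ≤ √(2 * F (u x y)) + k) :
    ∫ y in p..q, flux u x y ≤ profileCost F (u x q) - profileCost F (u x p) + 2 * k := by
  have hmono : ∫ y in p..q, flux u x y ≤ ∫ y in p..q, (√(2 * F (u x y)) + k) * pdy u x y :=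
    intervalIntegral.integral_mono_on hpq
      ((continuous_slice_snd hu.contDiff_flux.continuous x).intervalIntegrable _ _)
      ((hu.continuous_sqrt_add_mul_pdy x k).intervalIntegrable _ _)
      fun y _ => mul_le_mul_of_nonneg_right (hpdx y) (hu.pdy_pos x y).le
  rw [hu.integral_sqrt_add_mul_pdy] at hmono
  nlinarith [hu.lt_one x q, hu.neg_one_lt x p]

theorem le_integral_flux (hu : IsFront F c u) {x k p q : ℝ} (hk : 0 ≤ k) (hpq : p ≤ q)
    (hpdx : ∀ y, √(2 * F (u x y)) ≤ pdx u x y + k) :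
    profileCost F (u x q) - profileCost F (u x p) - 2 * k ≤ ∫ y in p..q, flux u x y := by
  have hmono : ∫ y in p..q, (√(2 * F (u x y)) + -k) * pdy u x y ≤ ∫ y in p..q, flux u x y :=
    intervalIntegral.integral_mono_on hpq
      ((hu.continuous_sqrt_add_mul_pdy x (-k)).intervalIntegrable _ _)
      ((continuous_slice_snd hu.contDiff_flux.continuous x).intervalIntegrable _ _)
      fun y _ => mul_le_mul_of_nonneg_right (by linarith [hpdx y]) (hu.pdy_pos x y).le
  rw [hu.integral_sqrt_add_mul_pdy] at hmono
  nlinarith [hu.lt_one x q, hu.neg_one_lt x p]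

theorem integral_sq_pdy_le_of_pdx_bounds (hu : IsFront F c u) {a b p q k : ℝ} (hk : 0 ≤ k)
    (hab : a ≤ b) (hpq : p ≤ q) (ha : ∀ y, pdx u a y ≤ √(2 * F (u a y)) + k)
    (hb : ∀ y, √(2 * F (u b y)) ≤ pdx u b y + k) :
    c * ∫ x in a..b, ∫ y in p..q, pdy u x y ^ 2 ≤ 4 * k := by
  refine le_of_forall_pos_le_add fun ε hε => ?_
  have hε' : 0 < ε / 4 := by positivity
  obtain ⟨q', ⟨henergy_q, hcost_q⟩, hq⟩ := (((hu.eventually_abs_integral_energy_le a b (by simp)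
    hu.tendsto_atTop hε').and (((hu.continuous_profileCost.tendsto 1).comp
    (hu.tendsto_atTop b)).eventually_const_lt (sub_lt_self _ hε'))).and
    (eventually_ge_atTop q)).exists
  obtain ⟨p', ⟨henergy_p, hcost_p⟩, hp⟩ := (((hu.eventually_abs_integral_energy_le a b (by simp)
    hu.tendsto_atBot hε').and (((hu.continuous_profileCost.tendsto (-1)).comp
    (hu.tendsto_atBot b)).eventually_lt_const (lt_add_of_pos_right _ hε'))).and
    (eventually_le_atBot p)).exists
  rw [Function.comp_apply] at hcost_q hcost_p
  have hp'q' : p' ≤ q' := hp.trans (hpq.trans hq)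
  have hmono := mul_le_mul_of_nonneg_left (hu.integral_sq_pdy_mono le_rfl hab le_rfl hp hpq hq)
    hu.speed_pos.le
  have hcost_a : profileCost F (u a q') - profileCost F (u a p') ≤
      profileCost F 1 - profileCost F (-1) :=
    sub_le_sub (hu.monotone_profileCost (hu.lt_one a q').le)
      (hu.monotone_profileCost (hu.neg_one_lt a p').le)
  linarith [hu.integral_energy_sub a b p' q', hu.integral_flux_le hk hp'q' ha,
    hu.le_integral_flux hk hp'q' hb, (abs_le.1 henergy_q).2, (abs_le.1 henergy_p).1]

theorem integral_sq_pdy_pos (hu : IsFront F c u) :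
    0 < ∫ x in (0 : ℝ)..1, ∫ y in (0 : ℝ)..1, pdy u x y ^ 2 := by
  have hcont : Continuous (fun p : ℝ × ℝ => pdy u p.1 p.2 ^ 2) :=
    hu.contDiff_one_pdy.continuous.pow 2
  have hinner : Continuous fun x => ∫ y in (0 : ℝ)..1, pdy u x y ^ 2 :=
    intervalIntegral.continuous_parametric_intervalIntegral_of_continuous' hcont 0 1
  refine intervalIntegral.intervalIntegral_pos_of_pos (hinner.intervalIntegrable _ _)
    (fun x => ?_) one_pos
  exact intervalIntegral.intervalIntegral_pos_of_pos
    ((continuous_slice_snd (f := fun x y => pdy u x y ^ 2) hcont x).intervalIntegrable _ _)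
    (fun y => pow_pos (hu.pdy_pos x y) 2) one_pos

theorem exists_sqrt_le_pdx_add (hu : IsFront F c u)
    (hinc : ∀ δ > 0, ∃ B, ∀ x y, B ≤ x → |u x y| ≤ 1 - δ → 0 ≤ pdx u x y) {ε : ℝ} (hε : 0 < ε) :
    ∃ B, ∀ x y, B ≤ x → √(2 * F (u x y)) ≤ pdx u x y + ε := by
  obtain ⟨C, hC⟩ := hu.exists_derivBounds
  have hC0 := hC.pos
  have hε' : 0 < ε / 3 := by positivity
  obtain ⟨R, hR⟩ := (tendsto_cocompact_zero_iff (f := fun x y => |pdx u x y| - √(2 * F (u x y)))).1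
    hu.tendsto_abs_pdx_sub_sqrt_cocompact _ hε'
  obtain ⟨B, hB⟩ := hinc ((ε / 3) ^ 2 / (4 * C)) (by positivity)
  refine ⟨max R B, fun x y hx => ?_⟩
  have hroot := (abs_le.1 (hR x y
    ((le_of_max_le_left hx).trans ((le_abs_self x).trans (norm_fst_le (x, y)))))).1
  rcases le_total |u x y| (1 - (ε / 3) ^ 2 / (4 * C)) with hband | hwell
  · rw [abs_of_nonneg (hB x y (le_of_max_le_right hx) hband)] at hroot
    linarith
  · have hpdx := hC.abs_pdx_le_of_le_abs hu hε'.le hwell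
    linarith [neg_abs_le (pdx u x y)]

-- Equal fluxes through two far vertical lines would leave no room for the friction `c uᵧ²`.
theorem not_eventually_pdx_nonneg (hu : IsFront F c u) :
    ¬ ∀ δ > 0, ∃ B, ∀ x y, B ≤ x → |u x y| ≤ 1 - δ → 0 ≤ pdx u x y := fun hinc => by
  have hmass := mul_pos hu.speed_pos hu.integral_sq_pdy_pos
  set m := c * ∫ x in (0 : ℝ)..1, ∫ y in (0 : ℝ)..1, pdy u x y ^ 2
  obtain ⟨R, hR⟩ := (tendsto_cocompact_zero_iff (f := fun x y => |pdx u x y| - √(2 * F (u x y)))).1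
    hu.tendsto_abs_pdx_sub_sqrt_cocompact (m / 8) (by positivity)
  obtain ⟨B, hB⟩ := hu.exists_sqrt_le_pdx_add hinc (show 0 < m / 8 by positivity)
  have hleft : ∀ y, pdx u (min (-R) 0) y ≤ √(2 * F (u (min (-R) 0) y)) + m / 8 := fun y => by
    have hfar : R ≤ ‖(min (-R) 0, y)‖ :=
      (le_neg_of_le_neg (min_le_left (-R) 0)).trans
        ((neg_le_abs _).trans (norm_fst_le (min (-R) 0, y)))
    linarith [(abs_le.1 (hR _ y hfar)).2, le_abs_self (pdx u (min (-R) 0) y)]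
  have hsmall := hu.integral_sq_pdy_le_of_pdx_bounds (show 0 ≤ m / 8 by positivity)
    (show min (-R) 0 ≤ max B 1 from (min_le_right _ _).trans (zero_le_one.trans (le_max_right _ _)))
    zero_le_one hleft fun y => hB (max B 1) y (le_max_left _ _)
  have hlarge := mul_le_mul_of_nonneg_left (hu.integral_sq_pdy_mono (min_le_right (-R) 0)
    zero_le_one (le_max_right B 1) le_rfl zero_le_one le_rfl) hu.speed_pos.le
  linarith

theorem exists_pdx_le_neg (hu : IsFront F c u) {δ : ℝ} (hδ : 0 < δ) :
    ∃ κ > 0, ∃ B, ∀ x y, B ≤ x → |u x y| ≤ 1 - δ → pdx u x y ≤ -κ := by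
  have hnot := hu.not_eventually_pdx_nonneg
  push Not at hnot
  obtain ⟨δ', hδ', hdec⟩ := hnot
  obtain ⟨κ, hκ, B, hinc | hneg⟩ := hu.exists_le_pdx_or_pdx_le_neg (lt_min hδ hδ')
  · obtain ⟨x, y, hx, hband, hpdx⟩ := hdec B
    linarith [hinc x y hx (hband.trans (by linarith [min_le_right δ δ']))]
  · exact ⟨κ, hκ, B, fun x y hx hband => hneg x y hx (by linarith [min_le_left δ δ'])⟩

end IsFront

/-! ### Profiles of horizontal slices -/

theorem exists_forall_lt_of_isCompact {X : Type*} [TopologicalSpace X] {f : X → ℝ → ℝ} {K : Set X}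
    {m : ℝ} (hK : IsCompact K) (hcont : ∀ y, Continuous fun x => f x y)
    (hmono : ∀ x, Monotone (f x)) (hex : ∀ x ∈ K, ∃ y, f x y < m) :
    ∃ Y, ∀ x ∈ K, ∀ y ≤ Y, f x y < m := by
  obtain ⟨Y, hY⟩ := hK.elim_directed_cover (fun y => {x | f x y < m})
    (fun y => isOpen_lt (hcont y) continuous_const)
    (fun x hx => Set.mem_iUnion.2 (hex x hx))
    (fun a b => ⟨min a b, fun x hx => (hmono x (min_le_left a b)).trans_lt hx,
      fun x hx => (hmono x (min_le_right a b)).trans_lt hx⟩)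
  exact ⟨Y, fun x hx y hy => (hmono x hy).trans_lt (hY hx)⟩

/-- Outside the vertical strip `|x| < B`, wherever `|u| ≤ 1 - δ` the horizontal slices of `u`
decrease on the right and increase on the left, with slope at least `κ` in absolute value. -/
structure SteepOutside (u : ℝ → ℝ → ℝ) (δ κ B : ℝ) : Prop where
  slope_pos : 0 < κ
  radius_nonneg : 0 ≤ B
  pdx_le_neg : ∀ x y, B ≤ x → |u x y| ≤ 1 - δ → pdx u x y ≤ -κ
  le_pdx : ∀ x y, x ≤ -B → |u x y| ≤ 1 - δ → κ ≤ pdx u x y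

namespace SteepOutside

variable {F : ℝ → ℝ} {c : ℝ} {u : ℝ → ℝ → ℝ} {δ κ B : ℝ}

theorem mirror (h : SteepOutside u δ κ B) : SteepOutside (fun x y => u (-x) y) δ κ B where
  slope_pos := h.slope_pos
  radius_nonneg := h.radius_nonneg
  pdx_le_neg x y hx hband := by
    rw [pdx_comp_neg]
    exact neg_le_neg (h.le_pdx (-x) y (neg_le_neg hx) hband)
  le_pdx x y hx hband := by
    rw [pdx_comp_neg]
    exact le_neg.2 (h.pdx_le_neg (-x) y (le_neg.2 hx) hband)

theorem slice_le (h : SteepOutside u δ κ B) (hu : IsFront F c u) {x x' y s : ℝ} (hx : B ≤ x)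
    (hx' : x ≤ x') (hs : |s| ≤ 1 - δ) (hle : u x y ≤ s) : u x' y ≤ s :=
  image_le_of_deriv_right_lt_deriv_boundary (f := fun t => u t y)
    (f' := fun t => pdx u t y) (B := fun _ => s) (B' := fun _ => 0)
    (continuous_slice_fst hu.continuous y).continuousOn
    (fun t _ => (hu.hasDerivAt_x t y).hasDerivWithinAt) hle (fun t => hasDerivAt_const t s)
    (fun t ht (hts : u t y = s) => (h.pdx_le_neg t y (hx.trans ht.1) (by rwa [hts])).trans_lt
      (neg_lt_zero.2 h.slope_pos)) ⟨hx', le_rfl⟩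

theorem slice_lt (h : SteepOutside u δ κ B) (hu : IsFront F c u) {x x' y s : ℝ} (hx : B ≤ x)
    (hx' : x ≤ x') (hs : |s| ≤ 1 - δ) (hlt : u x y < s) : u x' y < s := by
  refine lt_of_le_of_ne (h.slice_le hu hx hx' hs hlt.le) fun heq => ?_
  have hxx' : x < x' := lt_of_le_of_ne hx' (by rintro rfl; exact hlt.ne heq)
  have hmax : IsLocalMax (fun t => u t y) x' := by
    filter_upwards [lt_mem_nhds hxx'] with t ht
    rw [heq]
    exact h.slice_le hu hx ht.le hs hlt.le
  have hzero := hmax.hasDerivAt_eq_zero (hu.hasDerivAt_x x' y)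
  linarith [h.pdx_le_neg x' y (hx.trans hx') (by rwa [heq]), h.slope_pos]

theorem slice_le_sub (h : SteepOutside u δ κ B) (hu : IsFront F c u) (hδ : δ ≤ 1) {a x y : ℝ}
    (ha : B ≤ a) (hax : a ≤ x) (hlow : -1 + δ ≤ u x y) (hhigh : u a y ≤ 1 - δ) :
    u x y ≤ u a y - κ * (x - a) := by
  have hband : ∀ t ∈ Set.Icc a x, |u t y| ≤ 1 - δ := fun t ht => by
    refine abs_le.2 ⟨?_, h.slice_le hu ha ht.1 (abs_le.2 ⟨by linarith, le_rfl⟩) hhigh⟩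
    by_contra! hlt
    linarith [h.slice_lt hu (ha.trans ht.1) ht.2 (s := -1 + δ)
      (abs_le.2 ⟨by linarith, by linarith⟩) (by linarith)]
  refine image_le_of_deriv_right_le_deriv_boundary (f := fun t => u t y)
    (f' := fun t => pdx u t y) (B := fun t => u a y - κ * (t - a)) (B' := fun _ => -κ)
    (continuous_slice_fst hu.continuous y).continuousOn
    (fun t _ => (hu.hasDerivAt_x t y).hasDerivWithinAt) (by simp) (by fun_prop) (fun t _ => ?_)
    (fun t ht => h.pdx_le_neg t y (ha.trans ht.1) (hband t ⟨ht.1, ht.2.le⟩)) ⟨hax, le_rfl⟩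
  exact (((((hasDerivAt_id t).sub_const a).const_mul κ).const_sub (u a y)).congr_deriv
    (by simp)).hasDerivWithinAt

theorem slice_le_sub_left (h : SteepOutside u δ κ B) (hu : IsFront F c u) (hδ : δ ≤ 1)
    {a x y : ℝ} (ha : a ≤ -B) (hax : x ≤ a) (hlow : -1 + δ ≤ u x y) (hhigh : u a y ≤ 1 - δ) :
    u x y ≤ u a y - κ * (a - x) := by
  have hmirror := h.mirror.slice_le_sub hu.mirror hδ (a := -a) (x := -x) (y := y) (le_neg.2 ha)
    (neg_le_neg hax) (by rwa [neg_neg]) (by rwa [neg_neg])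
  simp only [neg_neg] at hmirror
  linarith

end SteepOutside

namespace IsFront

variable {F : ℝ → ℝ} {c : ℝ} {u : ℝ → ℝ → ℝ} {δ : ℝ}

theorem exists_steepOutside (hu : IsFront F c u) (hδ : 0 < δ) : ∃ κ B, SteepOutside u δ κ B := by
  obtain ⟨κ₁, hκ₁, B₁, hright⟩ := hu.exists_pdx_le_neg hδ
  obtain ⟨κ₂, hκ₂, B₂, hleft⟩ := hu.mirror.exists_pdx_le_neg hδ
  refine ⟨min κ₁ κ₂, max (max B₁ B₂) 0, lt_min hκ₁ hκ₂, le_max_right _ _, fun x y hx hband => ?_,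
    fun x y hx hband => ?_⟩
  · exact (hright x y (le_of_max_le_left (le_of_max_le_left hx)) hband).trans
      (neg_le_neg (min_le_left _ _))
  · have hpdx := hleft (-x) y (le_of_max_le_right (le_of_max_le_left (le_neg.2 hx)))
      (by rwa [neg_neg])
    rw [pdx_comp_neg, neg_neg] at hpdx
    exact (min_le_right _ _).trans (neg_le_neg_iff.1 hpdx)

theorem exists_lt_on_strip (hu : IsFront F c u) (R : ℝ) (hδ : 0 < δ) :
    ∃ Y, ∀ x y, |x| ≤ R → y ≤ Y → u x y < -1 + δ := by
  obtain ⟨Y, hY⟩ := exists_forall_lt_of_isCompact (isCompact_Icc (a := -R) (b := R))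
    (continuous_slice_fst hu.continuous) (fun x => (hu.strictMono x).monotone) fun x _ =>
      ((hu.tendsto_atBot x).eventually_lt_const (lt_add_of_pos_right _ hδ)).exists
  exact ⟨Y, fun x y hx => hY x (abs_le.1 hx) y⟩

theorem exists_gt_on_strip (hu : IsFront F c u) (R : ℝ) (hδ : 0 < δ) :
    ∃ Y, ∀ x y, |x| ≤ R → Y ≤ y → 1 - δ < u x y := by
  obtain ⟨Y, hY⟩ := exists_forall_lt_of_isCompact (f := fun x y => -u x (-y)) (m := -(1 - δ))
    (isCompact_Icc (a := -R) (b := R)) (fun y => (continuous_slice_fst hu.continuous (-y)).neg)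
    (fun x y y' hyy' => neg_le_neg ((hu.strictMono x).monotone (neg_le_neg hyy'))) fun x _ => by
      obtain ⟨y, hy⟩ := ((hu.tendsto_atTop x).eventually_const_lt (sub_lt_self 1 hδ)).exists
      exact ⟨-y, by rwa [neg_neg, neg_lt_neg_iff]⟩
  refine ⟨-Y, fun x y hx hy => ?_⟩
  have hneg := hY x (abs_le.1 hx) (-y) (neg_le.1 hy)
  rwa [neg_neg, neg_lt_neg_iff] at hneg

theorem tendsto_slice_atTop (hu : IsFront F c u) (y : ℝ) :
    Tendsto (fun x => u x y) atTop (nhds (-1)) := by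
  refine tendsto_order.2 ⟨fun a ha => .of_forall fun x => ha.trans (hu.neg_one_lt x y),
    fun a ha => ?_⟩
  obtain ⟨d, hd, hd1, hda⟩ : ∃ d > 0, d ≤ 1 ∧ -1 + 2 * d ≤ a :=
    ⟨min 1 ((a + 1) / 2), lt_min one_pos (by linarith), min_le_left _ _,
      by linarith [min_le_right 1 ((a + 1) / 2)]⟩
  obtain ⟨κ, B, hsteep⟩ := hu.exists_steepOutside hd
  obtain ⟨y₁, hlow, hy⟩ := (((hu.tendsto_atBot B).eventually_lt_const
    (lt_add_of_pos_right (-1) hd)).and (eventually_lt_atBot y)).exists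
  have hy' : 0 < y - y₁ := sub_pos.2 hy
  obtain ⟨R, hR⟩ := tendsto_cocompact_zero_iff.1 hu.tendsto_pdy_cocompact (d / (y - y₁))
    (div_pos hd hy')
  filter_upwards [eventually_ge_atTop B, eventually_ge_atTop R] with x hxB hxR
  have hbase := hsteep.slice_lt hu le_rfl hxB (abs_le.2 ⟨by linarith, by linarith⟩) hlow
  have hrise := abs_sub_le_of_hasDerivAt (fun t _ => hu.hasDerivAt_y x t)
    fun t (_ : t ∈ Set.uIcc y₁ y) => hR x t ((hxR.trans (le_abs_self x)).trans (norm_fst_le (x, t)))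
  rw [abs_of_pos hy', div_mul_cancel₀ _ hy'.ne'] at hrise
  linarith [(abs_le.1 hrise).2]

theorem exists_forall_lt (hu : IsFront F c u) (hδ : 0 < δ) :
    ∃ Y, ∀ x y, y ≤ Y → u x y < -1 + δ := by
  obtain ⟨κ, B, hsteep⟩ := hu.exists_steepOutside (lt_min one_pos hδ)
  have hB := hsteep.radius_nonneg
  obtain ⟨Y, hY⟩ := hu.exists_lt_on_strip B (lt_min one_pos hδ)
  refine ⟨Y, fun x y hy => lt_of_lt_of_le ?_ (add_le_add_right (min_le_right 1 δ) (-1))⟩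
  have hlevel : |-1 + min 1 δ| ≤ 1 - min 1 δ :=
    abs_le.2 ⟨by linarith, by linarith [min_le_left 1 δ]⟩
  rcases le_total B x with hx | hx
  · exact hsteep.slice_lt hu le_rfl hx hlevel (hY B y (abs_of_nonneg hB).le hy)
  rcases le_total (-B) x with hx' | hx'
  · exact hY x y (abs_le.2 ⟨hx', hx⟩) hy
  · have hleft := hsteep.mirror.slice_lt hu.mirror (x' := -x) le_rfl (le_neg.2 hx') hlevel
      (hY (-B) y (by rw [abs_neg, abs_of_nonneg hB]) hy)
    rwa [neg_neg] at hleft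

theorem exists_pdx_nonneg_of_le_right (hu : IsFront F c u) (hδ : 0 < δ) (hδ1 : δ ≤ 1) :
    ∃ R, ∀ x x' y, R ≤ ‖(x, y)‖ → x < x' → u x y ≤ u x' y → |u x y| ≤ 1 - δ →
      0 ≤ pdx u x y := by
  obtain ⟨κ, B, hsteep⟩ := hu.exists_steepOutside hδ
  obtain ⟨Y₁, hY₁⟩ := hu.exists_lt_on_strip B hδ
  obtain ⟨Y₂, hY₂⟩ := hu.exists_gt_on_strip B hδ
  refine ⟨max (B + 1) (max (-Y₁) Y₂), fun x x' y hfar hx hle hband => ?_⟩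
  have hband' := abs_le.1 hband
  rcases le_total B x with hBx | hxB
  · have hdrop := hsteep.slice_le_sub hu hδ1 hBx hx.le (by linarith) hband'.2
    linarith [mul_pos hsteep.slope_pos (sub_pos.2 hx)]
  rcases le_total x (-B) with hxB' | hBx'
  · exact hsteep.slope_pos.le.trans (hsteep.le_pdx x y hxB' hband)
  have hxabs : |x| ≤ B := abs_le.2 ⟨hBx', hxB⟩
  exfalso
  rcases le_max_iff.1 hfar with hfar | hfar
  · have hfar' : B + 1 ≤ |x| := le_of_max_le_left hfar
    linarith
  · have hfar' : max (-Y₁) Y₂ ≤ |y| := le_of_max_le_right hfar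
    rcases le_total 0 y with hy | hy
    · rw [abs_of_nonneg hy] at hfar'
      linarith [hY₂ x y hxabs (le_of_max_le_right hfar')]
    · rw [abs_of_nonpos hy] at hfar'
      linarith [hY₁ x y hxabs (by linarith [le_of_max_le_left hfar'])]

theorem exists_pdx_bounds_of_le_right (hu : IsFront F c u) (hδ : 0 < δ) :
    ∃ κ > 0, ∀ η > 0, ∃ R, ∀ x x' y, R ≤ ‖(x, y)‖ → x < x' → u x y ≤ u x' y →
      -η ≤ pdx u x y ∧ (|u x y| ≤ 1 - δ → κ ≤ pdx u x y) := by
  obtain ⟨C, hC⟩ := hu.exists_derivBounds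
  have hC0 := hC.pos
  obtain ⟨κ, hκ, R₁, hR₁⟩ := hu.exists_le_abs_pdx hδ
  refine ⟨κ, hκ, fun η hη => ?_⟩
  obtain ⟨d, hd, hd1, hdδ, hdη⟩ : ∃ d > 0, d ≤ 1 ∧ d ≤ δ ∧ d ≤ η ^ 2 / (4 * C) :=
    ⟨min 1 (min δ (η ^ 2 / (4 * C))), by positivity, min_le_left _ _,
      (min_le_right _ _).trans (min_le_left _ _), (min_le_right _ _).trans (min_le_right _ _)⟩
  obtain ⟨R₂, hR₂⟩ := hu.exists_pdx_nonneg_of_le_right hd hd1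
  refine ⟨max R₁ R₂, fun x x' y hfar hx hle => ⟨?_, fun hband => ?_⟩⟩
  · rcases le_total |u x y| (1 - d) with hband | hwell
    · linarith [hR₂ x x' y (le_of_max_le_right hfar) hx hle hband]
    · exact (abs_le.1 (hC.abs_pdx_le_of_le_abs hu hη.le (by linarith))).1
  · have hnonneg := hR₂ x x' y (le_of_max_le_right hfar) hx hle (by linarith)
    simpa only [abs_of_nonneg hnonneg] using hR₁ x y (le_of_max_le_left hfar) hband

end IsFront

/-! ### Propagation of positivity along horizontal lines -/

/-- A barrier for the strong minimum principle: positive for `x < ℓ` and `|y| < r`, vanishing for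
`x = ℓ` and for `|y| = r`, and for large `β` a strict subsolution of `Δ + c ∂ᵧ - Λ` in between. -/
noncomputable def stripBarrier (β r ℓ x y : ℝ) : ℝ :=
  (r ^ 2 - y ^ 2) ^ 2 * (Real.exp (-β * x) - Real.exp (-β * ℓ))

section StripBarrier

variable {c Λ β r ℓ x y : ℝ}

theorem stripBarrier_zero_le (hβ : 0 ≤ β) (hℓ : 0 ≤ ℓ) (hy : y ^ 2 ≤ r ^ 2) :
    stripBarrier β r ℓ 0 y ≤ r ^ 4 := by
  have hexp : Real.exp (-β * ℓ) ≤ 1 := Real.exp_le_one_iff.2 (by nlinarith)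
  calc stripBarrier β r ℓ 0 y = (r ^ 2 - y ^ 2) ^ 2 * (1 - Real.exp (-β * ℓ)) := by
        simp [stripBarrier]
    _ ≤ (r ^ 2) ^ 2 * 1 := by
        gcongr
        · exact sub_le_self _ (sq_nonneg y)
        · exact sub_le_self _ (Real.exp_pos _).le
    _ = r ^ 4 := by ring

theorem stripBarrier_pos (hβ : 0 < β) (hx : x < ℓ) (hr : 0 < r) : 0 < stripBarrier β r ℓ x 0 := by
  have hexp : Real.exp (-β * ℓ) < Real.exp (-β * x) := Real.exp_lt_exp.2 (by nlinarith)
  have hheight : 0 < (r ^ 2 - 0 ^ 2) ^ 2 := by simp [hr]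
  exact mul_pos hheight (sub_pos.2 hexp)

theorem hasDriftLaplacian_stripBarrier : HasDriftLaplacian c (stripBarrier β r ℓ) x y
    ((r ^ 2 - y ^ 2) ^ 2 * (β ^ 2 * Real.exp (-β * x)) +
      (Real.exp (-β * x) - Real.exp (-β * ℓ)) * (8 * y ^ 2 - 4 * (r ^ 2 - y ^ 2)) +
      c * ((Real.exp (-β * x) - Real.exp (-β * ℓ)) * (-4 * y * (r ^ 2 - y ^ 2)))) := by
  have hexp (t : ℝ) : HasDerivAt (fun t => Real.exp (-β * t)) (-β * Real.exp (-β * t)) t :=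
    ((hasDerivAt_id t).const_mul (-β)).exp.congr_deriv (by simp; ring)
  have hsq (t : ℝ) : HasDerivAt (fun t => r ^ 2 - t ^ 2) (-2 * t) t :=
    ((hasDerivAt_pow 2 t).const_sub (r ^ 2)).congr_deriv (by norm_num)
  have hlin : HasDerivAt (fun t : ℝ => -4 * t) (-4) y :=
    ((hasDerivAt_id y).const_mul (-4)).congr_deriv (by simp)
  have hx : HasJet2 (fun t => Real.exp (-β * t) - Real.exp (-β * ℓ)) x
      (-β * Real.exp (-β * x)) (β ^ 2 * Real.exp (-β * x)) :=
    .of_hasDerivAt (d := fun t => -β * Real.exp (-β * t)) (fun t => (hexp t).sub_const _)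
      (((hexp x).const_mul (-β)).congr_deriv (by ring))
  have hy : HasJet2 (fun t => (r ^ 2 - t ^ 2) ^ 2) y (-4 * y * (r ^ 2 - y ^ 2))
      (8 * y ^ 2 - 4 * (r ^ 2 - y ^ 2)) :=
    .of_hasDerivAt (d := fun t => -4 * t * (r ^ 2 - t ^ 2))
      (fun t => ((hsq t).pow 2).congr_deriv (by norm_num; ring))
      ((hlin.mul (hsq y)).congr_deriv (by ring))
  refine ⟨_, _, _, _, hx.const_mul _, ?_, rfl⟩
  simpa only [stripBarrier, mul_comm] using
    hy.const_mul (Real.exp (-β * x) - Real.exp (-β * ℓ))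

theorem exists_lt_hasDriftLaplacian_stripBarrier (hr : 0 < r) (hΛ : 0 ≤ Λ) (hβ : 0 < β)
    (hβr : β * r = 12 + 4 * |c| * r + Λ * r ^ 2) (hx : x < ℓ) (hy : |y| ≤ r) :
    ∃ l > Λ * stripBarrier β r ℓ x y, HasDriftLaplacian c (stripBarrier β r ℓ) x y l := by
  refine ⟨_, ?_, hasDriftLaplacian_stripBarrier⟩
  have hsq : y ^ 2 ≤ r ^ 2 := sq_le_sq' (abs_le.1 hy).1 (abs_le.1 hy).2
  have hE : 0 < Real.exp (-β * x) - Real.exp (-β * ℓ) :=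
    sub_pos.2 (Real.exp_lt_exp.2 (by nlinarith))
  have hexp : Real.exp (-β * x) - Real.exp (-β * ℓ) ≤ Real.exp (-β * x) :=
    sub_le_self _ (Real.exp_pos _).le
  have hg : 0 ≤ r ^ 2 - y ^ 2 := sub_nonneg.2 hsq
  have hyg : y ^ 2 = r ^ 2 - (r ^ 2 - y ^ 2) := by ring
  rw [stripBarrier]
  generalize Real.exp (-β * x) - Real.exp (-β * ℓ) = E at hE hexp ⊢
  generalize hgdef : r ^ 2 - y ^ 2 = g at hg hyg ⊢
  have hdrift : -(4 * |c| * r * g) ≤ -4 * c * y * g := by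
    have hcy : c * y ≤ |c| * r := (le_abs_self _).trans (by rw [abs_mul]; gcongr)
    nlinarith
  have hzeroth : Λ * g ^ 2 ≤ Λ * r ^ 2 * g := by
    have : g ≤ r ^ 2 := by linarith [sq_nonneg y]
    calc Λ * g ^ 2 = Λ * g * g := by ring
      _ ≤ Λ * r ^ 2 * g := by gcongr
  have hbracket : 0 < g ^ 2 * β ^ 2 + (8 * y ^ 2 - 4 * g) - 4 * c * y * g - Λ * g ^ 2 := by
    have hg12 : g * (β * r) = 12 * g + 4 * |c| * r * g + Λ * r ^ 2 * g := by rw [hβr]; ring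
    nlinarith [sq_nonneg (g * β - r / 2), pow_pos hr 2]
  have hlead : g ^ 2 * (β ^ 2 * E) ≤ g ^ 2 * (β ^ 2 * Real.exp (-β * x)) := by gcongr
  linarith [mul_pos hE hbracket]

end StripBarrier

section PositivityPropagation

variable {c Λ p q ℓ y : ℝ} {f : ℝ → ℝ → ℝ}

theorem exists_pos_forall_half_lt {g : ℝ → ℝ} (hg : ContinuousAt g 0) (h0 : 0 < g 0) :
    ∃ r > 0, ∀ y, |y| ≤ r → g 0 / 2 < g y := by
  obtain ⟨r, hr, h⟩ :=
    nhds_basis_closedBall.eventually_iff.1 (hg.eventually (lt_mem_nhds (half_lt_self h0)))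
  exact ⟨r, hr, fun y hy => h (mem_closedBall_zero_iff.2 hy)⟩

theorem pos_of_pos_zero (hf : Continuous (fun p : ℝ × ℝ => f p.1 p.2)) (hΛ : 0 ≤ Λ)
    (hnonneg : ∀ x y, 0 ≤ x → x ≤ ℓ → 0 ≤ f x y)
    (hsuper : ∀ x y, 0 < x → x < ℓ → ∃ l ≤ Λ * f x y, HasDriftLaplacian c f x y l)
    (hq : 0 < q) (hqℓ : q < ℓ) (hpos : 0 < f 0 0) : 0 < f q 0 := by
  obtain ⟨r, hr, hrf⟩ :=
    exists_pos_forall_half_lt (continuous_slice_snd hf 0).continuousAt hpos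
  obtain ⟨β, hβ, hβr⟩ : ∃ β > 0, β * r = 12 + 4 * |c| * r + Λ * r ^ 2 :=
    ⟨(12 + 4 * |c| * r + Λ * r ^ 2) / r, by positivity, div_mul_cancel₀ _ hr.ne'⟩
  obtain ⟨ε, hε, hεr⟩ : ∃ ε > 0, ε * r ^ 4 = f 0 0 / 2 :=
    ⟨f 0 0 / 2 / r ^ 4, by positivity, div_mul_cancel₀ _ (by positivity)⟩
  have hcont : Continuous (fun p : ℝ × ℝ => f p.1 p.2 - ε * stripBarrier β r ℓ p.1 p.2) := by
    simp only [stripBarrier]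
    fun_prop
  suffices h : 0 ≤ f q 0 - ε * stripBarrier β r ℓ q 0 by
    linarith [mul_pos hε (stripBarrier_pos hβ hqℓ hr)]
  refine nonneg_of_driftLaplacian_neg_of_isCompact (c := c)
    (f := fun x y => f x y - ε * stripBarrier β r ℓ x y)
    ((isCompact_Icc (a := 0) (b := ℓ)).prod (isCompact_Icc (a := -r) (b := r))) hcont.continuousOn
    (fun x y ⟨⟨hx0, hxℓ⟩, hyr⟩ hneg => ?_) ⟨⟨hq.le, hqℓ.le⟩, neg_nonpos.2 hr.le, hr.le⟩
  have hy : |y| ≤ r := abs_le.2 hyr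
  have hbarrier : 0 < ε * stripBarrier β r ℓ x y := by linarith [hnonneg x y hx0 hxℓ]
  have hx_pos : 0 < x := by
    refine hx0.lt_of_ne fun h => ?_
    subst h
    have hle := stripBarrier_zero_le hβ.le hxℓ (sq_le_sq' hyr.1 hyr.2)
    linarith [hrf y hy, mul_le_mul_of_nonneg_left hle hε.le]
  have hx_lt : x < ℓ := by
    refine hxℓ.lt_of_ne fun (h : x = ℓ) => hbarrier.ne' ?_
    simp [stripBarrier, h]
  have hy_lt : |y| < r := by
    refine hy.lt_of_ne fun h => hbarrier.ne' ?_
    simp [stripBarrier, ← h]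
  refine ⟨prod_mem_nhds (Icc_mem_nhds hx_pos hx_lt)
    (Icc_mem_nhds (abs_lt.1 hy_lt).1 (abs_lt.1 hy_lt).2), ?_⟩
  obtain ⟨l, hl, hfl⟩ := hsuper x y hx_pos hx_lt
  obtain ⟨m, hm, hbm⟩ := exists_lt_hasDriftLaplacian_stripBarrier hr hΛ hβ hβr hx_lt hy
  refine ⟨l - ε * m, ?_, hfl.sub (hbm.const_mul ε)⟩
  calc l - ε * m < Λ * f x y - ε * (Λ * stripBarrier β r ℓ x y) :=
        by linarith [mul_lt_mul_of_pos_left hm hε]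
    _ = Λ * (f x y - ε * stripBarrier β r ℓ x y) := by ring
    _ ≤ 0 := mul_nonpos_of_nonneg_of_nonpos hΛ hneg.le

theorem pos_of_pos_left (hf : Continuous (fun p : ℝ × ℝ => f p.1 p.2)) (hΛ : 0 ≤ Λ)
    (hnonneg : ∀ x y, p ≤ x → x ≤ ℓ → 0 ≤ f x y)
    (hsuper : ∀ x y, p < x → x < ℓ → ∃ l ≤ Λ * f x y, HasDriftLaplacian c f x y l)
    (hpq : p < q) (hqℓ : q < ℓ) (hpos : 0 < f p y) : 0 < f q y := by
  have h := pos_of_pos_zero (c := c) (ℓ := ℓ - p) (q := q - p) (f := fun s t => f (s + p) (t + y))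
    (hf.comp (by fun_prop : Continuous fun z : ℝ × ℝ => (z.1 + p, z.2 + y))) hΛ
    (fun s t h₁ h₂ => hnonneg _ _ (by linarith) (by linarith))
    (fun s t h₁ h₂ => ?_) (by linarith) (by linarith) (by simpa using hpos)
  · simpa using h
  · obtain ⟨l, hl, hl'⟩ := hsuper (s + p) (t + y) (by linarith) (by linarith)
    exact ⟨l, hl, hl'.translate p y⟩

theorem pos_of_pos_right (hf : Continuous (fun p : ℝ × ℝ => f p.1 p.2)) (hΛ : 0 ≤ Λ)
    (hnonneg : ∀ x y, ℓ ≤ x → x ≤ p → 0 ≤ f x y)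
    (hsuper : ∀ x y, ℓ < x → x < p → ∃ l ≤ Λ * f x y, HasDriftLaplacian c f x y l)
    (hℓq : ℓ < q) (hqp : q < p) (hpos : 0 < f p y) : 0 < f q y := by
  have h := pos_of_pos_zero (c := c) (ℓ := p - ℓ) (q := p - q) (f := fun s t => f (p - s) (t + y))
    (hf.comp (by fun_prop : Continuous fun z : ℝ × ℝ => (p - z.1, z.2 + y))) hΛ
    (fun s t h₁ h₂ => hnonneg _ _ (by linarith) (by linarith))
    (fun s t h₁ h₂ => ?_) (by linarith) (by linarith) (by simpa using hpos)
  · simpa using h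
  · obtain ⟨l, hl, hl'⟩ := hsuper (p - s) (t + y) (by linarith) (by linarith)
    exact ⟨l, hl, hl'.reflect p y⟩

end PositivityPropagation

/-! ### The sliding method -/

section Sliding

variable {α : Type*} [TopologicalSpace α] {g : ℝ → α → ℝ} {K D : Set α} {T : ℝ}

/- At the largest parameter for which `g` is nonpositive somewhere on `K`, the family is nonnegative
on `K` and touches zero there. -/
theorem nonneg_of_sliding_of_isCompact (hK : IsCompact K)
    (hg : Continuous (fun z : ℝ × α => g z.1 z.2)) (hT : ∀ τ, T ≤ τ → ∀ q ∈ K, 0 < g τ q)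
    (hcontact : ∀ τ > 0, (∀ q ∈ K, 0 ≤ g τ q) → ∀ q ∈ K, g τ q ≠ 0) {τ : ℝ} (hτ : 0 < τ) :
    ∀ q ∈ K, 0 ≤ g τ q := by
  intro q hq
  by_contra! hneg
  have hle_T {σ : ℝ} {q : α} (hq : q ∈ K) (h : g σ q ≤ 0) : σ ≤ T := by
    by_contra! hlt
    exact h.not_gt (hT σ hlt.le q hq)
  obtain ⟨⟨τ₀, q₀⟩, ⟨⟨⟨hττ₀, -⟩, hq₀⟩, hg₀⟩, hmax⟩ :=
    ((isCompact_Icc.prod hK).inter_right (isClosed_le hg continuous_const)).exists_isMaxOn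
      ⟨(τ, q), ⟨⟨le_rfl, hle_T hq hneg.le⟩, hq⟩, hneg.le⟩ continuous_fst.continuousOn
  have hnonneg : ∀ q ∈ K, 0 ≤ g τ₀ q := by
    intro q hq
    by_contra! hlt
    have hslice : Continuous fun σ => g σ q := hg.comp (Continuous.prodMk_left q)
    have hnear : ∀ᶠ σ in nhdsWithin τ₀ (Set.Ioi τ₀), g σ q < 0 :=
      ((hslice.tendsto τ₀).eventually (gt_mem_nhds hlt)).filter_mono nhdsWithin_le_nhds
    obtain ⟨σ, hσneg, hσ⟩ := (hnear.and self_mem_nhdsWithin).exists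
    have hσle : σ ≤ τ₀ := hmax (a := (σ, q))
      ⟨⟨⟨hττ₀.trans (Set.mem_Ioi.1 hσ).le, hle_T hq hσneg.le⟩, hq⟩, hσneg.le⟩
    exact hσle.not_gt hσ
  exact hcontact τ₀ (hτ.trans_le hττ₀) hnonneg q₀ hq₀ (le_antisymm hg₀ (hnonneg q₀ hq₀))

theorem nonneg_of_sliding (hK : IsCompact K) (hg : Continuous (fun z : ℝ × α => g z.1 z.2))
    (hT : ∀ τ, T ≤ τ → ∀ q ∈ K, 0 < g τ q)
    (hextend : ∀ τ > 0, (∀ q ∈ K, 0 ≤ g τ q) → ∀ q ∈ D, 0 ≤ g τ q)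
    (hcontact : ∀ τ > 0, (∀ q ∈ D, 0 ≤ g τ q) → ∀ q ∈ K, g τ q ≠ 0) :
    ∀ q ∈ D, 0 ≤ g 0 q := by
  intro q hq
  have hslice : Continuous fun τ => g τ q := hg.comp (Continuous.prodMk_left q)
  refine ge_of_tendsto ((hslice.tendsto 0).mono_left (nhdsWithin_le_nhds (s := Set.Ioi 0))) ?_
  filter_upwards [self_mem_nhdsWithin] with τ hτ
  exact hextend τ hτ (nonneg_of_sliding_of_isCompact hK hg hT
    (fun σ hσ h => hcontact σ hσ (hextend σ hσ h)) hτ) q hq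

end Sliding

/-! ### Comparison of a front with its reflections -/

/-- `F` is uniformly convex near its wells: `F'' ≥ μ` within distance `2 δ` of `±1` inside
`[-1, 1]`. The factor `2` leaves room to compare two values both of which are close to a well. -/
structure ConvexNearWells (F : ℝ → ℝ) (δ μ : ℝ) : Prop where
  radius_pos : 0 < δ
  radius_le : δ ≤ 1 / 4
  modulus_pos : 0 < μ
  modulus_le : ∀ s, 1 - 2 * δ ≤ |s| → |s| ≤ 1 → μ ≤ deriv (deriv F) s

theorem ConvexNearWells.mono {F : ℝ → ℝ} {δ δ' μ : ℝ} (hF : ConvexNearWells F δ μ) (hδ : 0 < δ')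
    (hle : δ' ≤ δ) : ConvexNearWells F δ' μ :=
  ⟨hδ, hle.trans hF.radius_le, hF.modulus_pos, fun s hs => hF.modulus_le s (by linarith)⟩

theorem DerivBounds.abs_deriv_sub_le {F : ℝ → ℝ} {c : ℝ} {u : ℝ → ℝ → ℝ} {C r s : ℝ}
    (hC : DerivBounds F u C) (hu : IsFront F c u) (hr : r ∈ Set.Icc (-1 : ℝ) 1)
    (hs : s ∈ Set.Icc (-1 : ℝ) 1) : |deriv F s - deriv F r| ≤ C * |s - r| :=
  abs_sub_le_of_hasDerivAt (fun t _ => hu.hasDerivAt_deriv t) fun t ht =>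
    hC.abs_deriv2_le t (Set.uIcc_subset_Icc hr hs ht)

namespace IsFront

variable {F : ℝ → ℝ} {c : ℝ} {u : ℝ → ℝ → ℝ} {δ μ : ℝ}

theorem exists_convexNearWells (hu : IsFront F c u) : ∃ δ μ, ConvexNearWells F δ μ := by
  have hlower {s : ℝ} (hs : 0 < deriv (deriv F) s) :
      ∃ r > 0, ∀ t, |t - s| ≤ r → deriv (deriv F) s / 2 < deriv (deriv F) t := by
    obtain ⟨r, hr, h⟩ := nhds_basis_closedBall.eventually_iff.1
      (hu.continuous_deriv2.continuousAt.eventually (lt_mem_nhds (half_lt_self hs)))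
    exact ⟨r, hr, fun t ht => h (by rwa [mem_closedBall, Real.dist_eq])⟩
  obtain ⟨r₁, hr₁, h₁⟩ := hlower hu.deriv2_potential_neg_one_pos
  obtain ⟨r₂, hr₂, h₂⟩ := hlower hu.deriv2_potential_one_pos
  have hm := hu.deriv2_potential_neg_one_pos
  have hp := hu.deriv2_potential_one_pos
  obtain ⟨δ, hδ, hδ4, hδ₁, hδ₂⟩ : ∃ δ > 0, δ ≤ 1 / 4 ∧ δ ≤ r₁ / 2 ∧ δ ≤ r₂ / 2 :=
    ⟨min (1 / 4) (min (r₁ / 2) (r₂ / 2)), by positivity, min_le_left _ _,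
      (min_le_right _ _).trans (min_le_left _ _), (min_le_right _ _).trans (min_le_right _ _)⟩
  refine ⟨δ, min (deriv (deriv F) (-1) / 2) (deriv (deriv F) 1 / 2), hδ, hδ4, by positivity,
    fun s hs hs1 => ?_⟩
  rcases abs_cases s with ⟨habs, -⟩ | ⟨habs, -⟩
  · exact (min_le_right _ _).trans (h₂ s (abs_le.2 ⟨by linarith, by linarith⟩)).le
  · exact (min_le_left _ _).trans (h₁ s (abs_le.2 ⟨by linarith, by linarith⟩)).le

theorem mul_sub_le_deriv_sub (hu : IsFront F c u) (hF : ConvexNearWells F δ μ) {r s : ℝ}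
    (hr : -1 ≤ r) (hrs : r ≤ s) (hs : s ≤ 1) (hwell : s ≤ -1 + 2 * δ ∨ 1 - 2 * δ ≤ r) :
    μ * (s - r) ≤ deriv F s - deriv F r := by
  refine (convex_Icc r s).mul_sub_le_image_sub_of_le_deriv hu.continuous_deriv.continuousOn
    (fun t _ => (hu.hasDerivAt_deriv t).differentiableAt.differentiableWithinAt) (fun t ht => ?_)
    r ⟨le_rfl, hrs⟩ s ⟨hrs, le_rfl⟩ hrs
  obtain ⟨hrt, hts⟩ := interior_subset ht
  refine hF.modulus_le t ?_ (abs_le.2 ⟨hr.trans hrt, hts.trans hs⟩)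
  rcases hwell with h | h
  · exact le_abs.2 (.inr (by linarith))
  · exact le_abs.2 (.inl (by linarith))

theorem hasDriftLaplacian (hu : IsFront F c u) (x y : ℝ) :
    HasDriftLaplacian c u x y (deriv F (u x y)) := by
  rw [← hu.pde]
  exact .of_contDiff hu.contDiff_two x y

theorem continuous_reflect (hu : IsFront F c u) (l τ : ℝ) :
    Continuous (fun p : ℝ × ℝ => u (2 * l - p.1) (p.2 + τ)) :=
  hu.continuous.comp (by fun_prop : Continuous fun p : ℝ × ℝ => (2 * l - p.1, p.2 + τ))

/- Where `w < u`, both values lie near the same well, so convexity of `F` turns the difference of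
the two equations into `(Δ + c ∂ᵧ - μ) (w - u) ≤ 0`. -/
theorem le_of_supersolution_near_wells (hu : IsFront F c u) (hF : ConvexNearWells F δ μ)
    {D : Set (ℝ × ℝ)} (hD : IsClosed D) {w : ℝ → ℝ → ℝ}
    (hw : Continuous (fun p : ℝ × ℝ => w p.1 p.2)) (hlow : ∀ x y, -1 ≤ w x y)
    (hsuper : ∀ x y, (x, y) ∈ D → w x y < u x y → D ∈ nhds (x, y) ∧
      (u x y ≤ -1 + 2 * δ ∨ 1 - 2 * δ ≤ w x y) ∧
      ∃ l ≤ deriv F (w x y), HasDriftLaplacian c w x y l)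
    {x y : ℝ} (hxy : (x, y) ∈ D) : u x y ≤ w x y := by
  refine sub_nonneg.1 (nonneg_of_driftLaplacian_le_of_isClosed (c := c) (μ := μ) (m := -2)
    (f := fun x y => w x y - u x y) hD (hw.sub hu.continuous).continuousOn
    (fun x y _ => by linarith [hlow x y, hu.lt_one x y]) hF.modulus_pos
    (fun x y hmem hneg => ?_) hxy)
  have hlt : w x y < u x y := sub_neg.1 hneg
  obtain ⟨hnhds, hwell, l, hl, hwl⟩ := hsuper x y hmem hlt
  refine ⟨hnhds, _, ?_, hwl.sub (hu.hasDriftLaplacian x y)⟩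
  linarith [hu.mul_sub_le_deriv_sub hF (hlow x y) hlt.le (hu.lt_one x y).le hwell]

theorem lt_reflect_of_lt (hu : IsFront F c u) {l τ p q y : ℝ}
    (hle : ∀ x y, l ≤ x → u x y ≤ u (2 * l - x) (y + τ)) (hp : l ≤ p) (hq : l < q)
    (hlt : u p y < u (2 * l - p) (y + τ)) : u q y < u (2 * l - q) (y + τ) := by
  obtain ⟨C, hC⟩ := hu.exists_derivBounds
  let gap : ℝ → ℝ → ℝ := fun x y => u (2 * l - x) (y + τ) - u x y
  have hcont : Continuous (fun p : ℝ × ℝ => gap p.1 p.2) :=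
    (hu.continuous_reflect l τ).sub hu.continuous
  have hnonneg (x y : ℝ) (hx : l ≤ x) : 0 ≤ gap x y := sub_nonneg.2 (hle x y hx)
  have hsuper (x y : ℝ) (hx : l ≤ x) : ∃ r ≤ C * gap x y, HasDriftLaplacian c gap x y r := by
    refine ⟨_, ?_, ((hu.hasDriftLaplacian _ _).reflect (2 * l) τ).sub (hu.hasDriftLaplacian x y)⟩
    calc deriv F (u (2 * l - x) (y + τ)) - deriv F (u x y) ≤ C * |gap x y| :=
          (le_abs_self _).trans (hC.abs_deriv_sub_le hu (hu.mem_Icc x y) (hu.mem_Icc _ _))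
      _ = C * gap x y := by rw [abs_of_nonneg (hnonneg x y hx)]
  refine sub_pos.1 (show 0 < gap q y from ?_)
  have hpos : 0 < gap p y := sub_pos.2 hlt
  rcases lt_trichotomy p q with hpq | rfl | hqp
  · exact pos_of_pos_left hcont hC.pos.le (fun x y hx _ => hnonneg x y (hp.trans hx))
      (fun x y hx _ => hsuper x y (hp.trans hx.le)) hpq (lt_add_one q) hpos
  · exact hpos
  · exact pos_of_pos_right hcont hC.pos.le (fun x y hx _ => hnonneg x y hx)
      (fun x y hx _ => hsuper x y hx.le) hq hqp hpos

theorem isCompact_setOf_le (hu : IsFront F c u) (hδ : 0 < δ) (l Y : ℝ) :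
    IsCompact {p : ℝ × ℝ | l ≤ p.1 ∧ p.2 ≤ Y ∧ -1 + δ ≤ u p.1 p.2} := by
  obtain ⟨Y₁, hY₁⟩ := hu.exists_forall_lt hδ
  obtain ⟨X, hX⟩ := eventually_atTop.1
    ((hu.tendsto_slice_atTop Y).eventually_lt_const (lt_add_of_pos_right (-1) hδ))
  refine (isCompact_Icc.prod isCompact_Icc).of_isClosed_subset
    (s := Set.Icc l X ×ˢ Set.Icc Y₁ Y) ?_ ?_
  · exact (isClosed_le continuous_const continuous_fst).inter
      ((isClosed_le continuous_snd continuous_const).inter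
        (isClosed_le continuous_const hu.continuous))
  · rintro ⟨x, y⟩ ⟨hx, hy, hlow⟩
    refine ⟨⟨hx, ?_⟩, ?_, hy⟩
    · by_contra! hlt
      exact ((hu.strictMono x).monotone hy |>.trans_lt (hX x hlt.le)).not_ge hlow
    · by_contra! hlt
      exact (hY₁ x y hlt.le).not_ge hlow

theorem exists_forall_lt_shift (hu : IsFront F c u) {K : Set (ℝ × ℝ)} (hK : IsCompact K)
    {X : ℝ × ℝ → ℝ} (hX : Continuous X) :
    ∃ T, ∀ τ, T ≤ τ → ∀ q ∈ K, u q.1 q.2 < u (X q) (q.2 + τ) := by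
  rcases K.eq_empty_or_nonempty with rfl | hne
  · exact ⟨0, fun _ _ q hq => absurd hq (Set.notMem_empty q)⟩
  obtain ⟨q₀, -, hmax⟩ := hK.exists_isMaxOn hne hu.continuous.continuousOn
  obtain ⟨R, hR⟩ := hK.exists_bound_of_continuousOn hX.continuousOn
  obtain ⟨R', hR'⟩ := hK.exists_bound_of_continuousOn (f := Prod.snd) continuous_snd.continuousOn
  obtain ⟨Y, hY⟩ := hu.exists_gt_on_strip R (sub_pos.2 (hu.lt_one q₀.1 q₀.2))
  refine ⟨Y + R', fun τ hτ q hq => (hmax hq).trans_lt ?_⟩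
  have hheight : -R' ≤ q.2 := (abs_le.1 (hR' q hq)).1
  simpa only [sub_sub_cancel] using hY (X q) (q.2 + τ) (hR q hq) (by linarith)

theorem le_reflect_shift_of_le_on (hu : IsFront F c u) (hF : ConvexNearWells F δ μ) {l Y τ : ℝ}
    (hτ : 0 < τ)
    (hhigh : ∀ x y, Y ≤ y → l < x → u (2 * l - x) y < u x y → u (2 * l - x) y ≤ 1 - δ →
      u x y < -1 + δ)
    (hK : ∀ x y, l ≤ x → y ≤ Y → -1 + δ ≤ u x y → u x y ≤ u (2 * l - x) (y + τ)) {x y : ℝ}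
    (hx : l ≤ x) : u x y ≤ u (2 * l - x) (y + τ) := by
  have hδ := hF.radius_pos
  refine hu.le_of_supersolution_near_wells hF (D := {p : ℝ × ℝ | l ≤ p.1})
    (w := fun x y => u (2 * l - x) (y + τ)) (isClosed_le continuous_const continuous_fst)
    (hu.continuous_reflect l τ) (fun x y => (hu.neg_one_lt _ _).le)
    (fun x y (hx : l ≤ x) hlt => ?_) hx
  have hlx : l < x := hx.lt_of_ne fun h => by
    rw [← h, show 2 * l - l = l by ring] at hlt
    exact hlt.not_gt (hu.strictMono l (lt_add_of_pos_right y hτ))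
  refine ⟨mem_of_superset ((isOpen_lt continuous_const continuous_fst).mem_nhds hlx)
    fun p hp => (show l < p.1 from hp).le, ?_, _, le_rfl,
    (hu.hasDriftLaplacian _ _).reflect (2 * l) τ⟩
  have hle : u (2 * l - x) y ≤ u (2 * l - x) (y + τ) :=
    (hu.strictMono _).monotone (by linarith)
  by_contra! hno
  rcases le_total y Y with hy | hy
  · exact hlt.not_ge (hK x y hx hy (by linarith))
  · linarith [hhigh x y hy hlx (hle.trans_lt hlt) (by linarith)]

theorem le_reflect_of_high (hu : IsFront F c u) (hF : ConvexNearWells F δ μ) {l Y : ℝ}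
    (hhigh : ∀ x y, Y ≤ y → l < x → u (2 * l - x) y < u x y → u (2 * l - x) y ≤ 1 - δ →
      u x y < -1 + δ) {x y : ℝ} (hx : l ≤ x) : u x y ≤ u (2 * l - x) y := by
  have hK := hu.isCompact_setOf_le hF.radius_pos l Y
  obtain ⟨T, hT⟩ := hu.exists_forall_lt_shift hK (X := fun q => 2 * l - q.1) (by fun_prop)
  have hcont : Continuous fun z : ℝ × (ℝ × ℝ) =>
      u (2 * l - z.2.1) (z.2.2 + z.1) - u z.2.1 z.2.2 :=
    (hu.continuous.comp (by fun_prop : Continuous fun z : ℝ × (ℝ × ℝ) =>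
      (2 * l - z.2.1, z.2.2 + z.1))).sub (hu.continuous.comp continuous_snd)
  have hslide := nonneg_of_sliding (D := {p : ℝ × ℝ | l ≤ p.1}) hK hcont
    (fun τ hτ q hq => sub_pos.2 (hT τ hτ q hq))
    (fun τ hτ hnonneg q hq => sub_nonneg.2 (hu.le_reflect_shift_of_le_on hF hτ hhigh
      (fun x y hx hy hlow => sub_nonneg.1 (hnonneg (x, y) ⟨hx, hy, hlow⟩)) hq))
    (fun τ hτ hnonneg q hq => ?_) (x, y) hx
  · simpa using hslide
  have haxis : u l q.2 < u (2 * l - l) (q.2 + τ) := by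
    rw [show 2 * l - l = l by ring]
    exact hu.strictMono l (lt_add_of_pos_right _ hτ)
  rcases hq.1.eq_or_lt with h | h
  · rw [← h]
    exact (sub_pos.2 haxis).ne'
  · exact (sub_pos.2 (hu.lt_reflect_of_lt (fun x y hx => sub_nonneg.1 (hnonneg (x, y) hx)) le_rfl h
      haxis)).ne'

end IsFront

/-! ### Sheared reflections -/

/-- The height-dependent axis of a sheared reflection: it passes through `l` at height `n` and
approaches `l + s` far below. -/
noncomputable def shearedAxis (s k l n y : ℝ) : ℝ :=
  l + s * (1 - Real.exp (k * (y - n)))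

/-- The reflection of `u` in `shearedAxis s k l n`, translated down by `τ` and raised by `d` at
height `n`, the rise decaying at the same exponential rate `k` as the shear. -/
noncomputable def shearedReflection (u : ℝ → ℝ → ℝ) (d s k l n τ x y : ℝ) : ℝ :=
  u (2 * shearedAxis s k l n y - x) (y + τ) + d * Real.exp (k * (y - n))

/-- The region below height `n` to the right of the sheared axis. -/
def shearedQuadrant (s k l n : ℝ) : Set (ℝ × ℝ) :=
  {p | p.2 ≤ n ∧ shearedAxis s k l n p.2 ≤ p.1}

section ShearedGeometry

variable {d s k l n y : ℝ}

theorem shearedAxis_self (s k l n : ℝ) : shearedAxis s k l n n = l := by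
  simp [shearedAxis]

theorem le_shearedAxis (hs : 0 ≤ s) (hk : 0 ≤ k) (hy : y ≤ n) : l ≤ shearedAxis s k l n y :=
  le_add_of_nonneg_right (mul_nonneg hs (sub_nonneg.2
    (Real.exp_le_one_iff.2 (mul_nonpos_of_nonneg_of_nonpos hk (by linarith)))))

theorem shearedAxis_lt (hs : 0 < s) (k l n y : ℝ) : shearedAxis s k l n y < l + s := by
  have hexp : 0 < s * Real.exp (k * (y - n)) := by positivity
  unfold shearedAxis
  linarith

theorem continuous_shearedAxis (s k l n : ℝ) : Continuous (shearedAxis s k l n) := by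
  unfold shearedAxis
  fun_prop

theorem isClosed_shearedQuadrant (s k l n : ℝ) : IsClosed (shearedQuadrant s k l n) :=
  (isClosed_le continuous_snd continuous_const).inter
    (isClosed_le ((continuous_shearedAxis s k l n).comp continuous_snd) continuous_fst)

theorem shearedQuadrant_mem_nhds {x : ℝ} (hy : y < n) (hx : shearedAxis s k l n y < x) :
    shearedQuadrant s k l n ∈ nhds (x, y) := by
  have hopen : IsOpen {p : ℝ × ℝ | p.2 < n ∧ shearedAxis s k l n p.2 < p.1} :=
    (isOpen_lt continuous_snd continuous_const).inter
      (isOpen_lt ((continuous_shearedAxis s k l n).comp continuous_snd) continuous_fst)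
  exact mem_of_superset (hopen.mem_nhds ⟨hy, hx⟩) fun p hp => ⟨hp.1.le, hp.2.le⟩

theorem tendsto_exp_mul_sub_atTop (hk : 0 < k) (y : ℝ) :
    Tendsto (fun n => Real.exp (k * (y - n))) atTop (nhds 0) :=
  tendsto_exp_atBot.comp
    ((tendsto_const_nhds.add_atBot tendsto_neg_atTop_atBot : Tendsto (fun n => y + -n) _ _)
      |>.const_mul_atBot hk)

theorem hasDerivAt_exp_mul_sub (k n t : ℝ) :
    HasDerivAt (fun t => Real.exp (k * (t - n))) (k * Real.exp (k * (t - n))) t :=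
  ((((hasDerivAt_id t).sub_const n).const_mul k).exp).congr_deriv (by simp [mul_comm])

theorem hasDerivAt_shearedAxis (s k l n t : ℝ) :
    HasDerivAt (shearedAxis s k l n) (-(s * k) * Real.exp (k * (t - n))) t :=
  (((hasDerivAt_exp_mul_sub k n t).const_sub 1).const_mul s |>.const_add l).congr_deriv (by ring)

end ShearedGeometry

namespace IsFront

variable {F : ℝ → ℝ} {c : ℝ} {u : ℝ → ℝ → ℝ}

theorem continuous_shearedReflection (hu : IsFront F c u) (d s k l n : ℝ) :
    Continuous fun z : ℝ × (ℝ × ℝ) => shearedReflection u d s k l n z.1 z.2.1 z.2.2 := by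
  have haxis := continuous_shearedAxis s k l n
  exact (hu.continuous.comp (by fun_prop : Continuous fun z : ℝ × (ℝ × ℝ) =>
    (2 * shearedAxis s k l n z.2.2 - z.2.1, z.2.2 + z.1))).add (by fun_prop)

theorem neg_one_lt_shearedReflection (hu : IsFront F c u) {d : ℝ} (hd : 0 < d)
    (s k l n τ x y : ℝ) : -1 < shearedReflection u d s k l n τ x y :=
  lt_add_of_lt_of_nonneg (hu.neg_one_lt _ _) (by positivity)

theorem tendsto_shearedReflection_atTop (hu : IsFront F c u) {k : ℝ} (hk : 0 < k)
    (d s l x y : ℝ) : Tendsto (fun n => shearedReflection u d s k l n 0 x y) atTop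
      (nhds (u (2 * (l + s) - x) y)) := by
  have hexp := tendsto_exp_mul_sub_atTop hk y
  have haxis : Tendsto (fun n => (2 * shearedAxis s k l n y - x, y + 0)) atTop
      (nhds (2 * (l + s) - x, y)) := by
    refine Tendsto.prodMk_nhds ?_ (by simp)
    simpa [shearedAxis] using
      ((((hexp.const_sub 1).const_mul s).const_add l).const_mul 2).sub_const x
  simpa [shearedReflection, Function.comp_def] using
    ((hu.continuous.tendsto _).comp haxis).add (hexp.const_mul d)

theorem hasDriftLaplacian_shear (hu : IsFront F c u) {S S' : ℝ → ℝ} {S'' : ℝ} (τ x y : ℝ)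
    (hS : ∀ t, HasDerivAt S (S' t) t) (hS' : HasDerivAt S' S'' y) :
    HasDriftLaplacian c (fun x y => u (S y - x) (y + τ)) x y
      (deriv F (u (S y - x) (y + τ)) + S' y ^ 2 * pdxx u (S y - x) (y + τ) +
        2 * S' y * pdy (pdx u) (S y - x) (y + τ) + (S'' + c * S' y) * pdx u (S y - x) (y + τ)) := by
  have hA : ∀ t, HasDerivAt (fun t => S t - x) (S' t) t := fun t => (hS t).sub_const x
  have hB : ∀ t, HasDerivAt (fun t => t + τ) 1 t := fun t => (hasDerivAt_id t).add_const τ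
  have hx : HasJet2 (fun t => u (S y - t) (y + τ)) x _ _ :=
    HasJet2.comp_const_sub (g := fun t => u t (y + τ)) (S y)
      (.of_hasDerivAt (fun t => hu.hasDerivAt_x t (y + τ)) (hu.hasDerivAt_xx _ _))
  have hy : HasJet2 (fun t => u (S t - x) (t + τ)) y _ _ := .of_hasDerivAt
    (d := fun t => S' t * pdx u (S t - x) (t + τ) + 1 * pdy u (S t - x) (t + τ))
    (fun t => hasDerivAt_comp_curve (hu.contDiff_one.differentiable one_ne_zero _) (hA t) (hB t))
    ((hS'.mul (hasDerivAt_comp_curve (hu.contDiff_one_pdx.differentiable one_ne_zero _)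
      (hA y) (hB y))).add ((hasDerivAt_comp_curve
        (hu.contDiff_one_pdy.differentiable one_ne_zero _) (hA y) (hB y)).const_mul 1))
  refine ⟨_, _, _, _, hx, hy, ?_⟩
  rw [← hu.pde (S y - x) (y + τ), pdx_pdy_comm hu.contDiff_two]
  simp only [pdxx, pdyy, pdx, pdy]
  ring

theorem hasDriftLaplacian_shearedReflection (hu : IsFront F c u) {d s k l n τ x y X e σ : ℝ}
    (hX : X = 2 * shearedAxis s k l n y - x) (he : e = d * Real.exp (k * (y - n)))
    (hσ : σ = 2 * s * Real.exp (k * (y - n))) :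
    HasDriftLaplacian c (shearedReflection u d s k l n τ) x y
      (deriv F (u X (y + τ)) + (k * σ) ^ 2 * pdxx u X (y + τ) -
        2 * (k * σ) * pdy (pdx u) X (y + τ) -
        (k ^ 2 + c * k) * (σ * pdx u X (y + τ) - e)) := by
  have hshear := hu.hasDriftLaplacian_shear τ x y
    (fun t => (hasDerivAt_shearedAxis s k l n t).const_mul 2)
    (((hasDerivAt_exp_mul_sub k n y).const_mul _).const_mul 2)
  have hraise : HasDriftLaplacian c (fun _ y => d * Real.exp (k * (y - n))) x y _ :=
    ⟨_, _, _, _, HasJet2.const _, (HasJet2.of_hasDerivAt (fun t => hasDerivAt_exp_mul_sub k n t)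
      ((hasDerivAt_exp_mul_sub k n y).const_mul k)).const_mul d, rfl⟩
  have hsum : HasDriftLaplacian c (shearedReflection u d s k l n τ) x y _ := hshear.add hraise
  convert hsum using 1
  rw [← hX, he, hσ]
  ring

end IsFront

/-- Constants for which the sheared reflection of amplitude `d`, rate `k` and horizontal
displacement `M d / 2` is a strict supersolution. A front satisfies `uₓ ≥ κ` away from the wells,
where the shear must beat the Lipschitz constant `C` of `F'`, and `uₓ ≥ -η` near the wells, where
convexity `μ` of `F` must beat all the error terms; `ε` bounds the mixed derivative `uₓᵧ`. -/
structure ShearParameters (c C δ κ μ d M k η ε : ℝ) : Prop where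
  amplitude_pos : 0 < d
  amplitude_le : d ≤ δ
  ratio_pos : 0 < M
  rate_pos : 0 < k
  slope_error_pos : 0 < η
  mixed_error_pos : 0 < ε
  growth_le : k ^ 2 + c * k ≤ μ / 4
  growth_mul_slope : (k ^ 2 + c * k) * M * κ = C + μ
  growth_mul_slope_error : (k ^ 2 + c * k) * M * η = μ / 8
  mixed_error_eq : 2 * M * k * ε = μ / 16
  second_order_error_le : M ^ 2 * k ^ 2 * C * d ≤ μ / 8

theorem exists_shearParameters {c C δ κ μ : ℝ} (hc : 0 < c) (hC : 0 < C) (hδ : 0 < δ) (hκ : 0 < κ)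
    (hμ : 0 < μ) : ∃ d M k η ε, ShearParameters c C δ κ μ d M k η ε := by
  obtain ⟨k, hk, hkμ⟩ : ∃ k > 0, k ^ 2 + c * k ≤ μ / 4 := by
    obtain ⟨k, hk, hk1, hkμ⟩ : ∃ k > 0, k ≤ 1 ∧ k ≤ μ / (4 * (1 + c)) :=
      ⟨min 1 (μ / (4 * (1 + c))), by positivity, min_le_left _ _, min_le_right _ _⟩
    rw [le_div_iff₀ (by positivity)] at hkμ
    exact ⟨k, hk, by nlinarith⟩
  obtain ⟨θ, hθ⟩ : ∃ θ, θ = k ^ 2 + c * k := ⟨_, rfl⟩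
  have hθ0 : 0 < θ := hθ ▸ by positivity
  obtain ⟨M, hM, hMκ⟩ : ∃ M > 0, θ * M * κ = C + μ :=
    ⟨(C + μ) / (θ * κ), by positivity, by field_simp⟩
  obtain ⟨d, hd, hdδ, hdμ⟩ : ∃ d > 0, d ≤ δ ∧ d ≤ μ / (8 * (M ^ 2 * k ^ 2 * C)) :=
    ⟨min δ (μ / (8 * (M ^ 2 * k ^ 2 * C))), by positivity, min_le_left _ _, min_le_right _ _⟩
  rw [le_div_iff₀ (by positivity)] at hdμ
  exact ⟨d, M, k, μ / (8 * (θ * M)), μ / (32 * (M * k)),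
    { amplitude_pos := hd
      amplitude_le := hdδ
      ratio_pos := hM
      rate_pos := hk
      slope_error_pos := by positivity
      mixed_error_pos := by positivity
      growth_le := hkμ
      growth_mul_slope := hθ ▸ hMκ
      growth_mul_slope_error := by rw [← hθ]; field_simp
      mixed_error_eq := by field_simp; norm_num
      second_order_error_le := by linarith }⟩

namespace ShearParameters

variable {F : ℝ → ℝ} {c : ℝ} {u : ℝ → ℝ → ℝ} {C δ κ μ d M k η ε U e p : ℝ}

theorem deriv_sub_mul_le (h : ShearParameters c C δ κ μ d M k η ε) (hu : IsFront F c u)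
    (hC : DerivBounds F u C) (hF : ConvexNearWells F δ μ) (he : 0 < e) (hed : e ≤ d)
    (hU : -1 ≤ U) (hUe : U + e ≤ 1) (hp : -η ≤ p) (hband : |U| ≤ 1 - δ → κ ≤ p) :
    deriv F U - (k ^ 2 + c * k) * M * e * p ≤ deriv F (U + e) - 7 / 8 * μ * e := by
  have hk := h.rate_pos
  have hM := h.ratio_pos
  have hc := hu.speed_pos
  by_cases hwell : |U| ≤ 1 - δ
  · have hslope : (C + μ) * e ≤ (k ^ 2 + c * k) * M * e * p := by
      calc (C + μ) * e = (k ^ 2 + c * k) * M * e * κ := by rw [← h.growth_mul_slope]; ring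
        _ ≤ _ := by gcongr; exact hband hwell
    have hlip := (abs_le.1 (hC.abs_deriv_sub_le hu (r := U) (s := U + e)
      ⟨hU, by linarith⟩ ⟨by linarith, hUe⟩)).1
    rw [add_sub_cancel_left, abs_of_pos he] at hlip
    linarith [mul_pos hF.modulus_pos he]
  · have hslope : -(μ / 8 * e) ≤ (k ^ 2 + c * k) * M * e * p := by
      calc -(μ / 8 * e) = (k ^ 2 + c * k) * M * e * (-η) := by
            rw [← h.growth_mul_slope_error]; ring
        _ ≤ _ := by gcongr
    have hconvex := hu.mul_sub_le_deriv_sub hF hU (le_add_of_nonneg_right he.le) hUe (by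
      have heδ := hed.trans h.amplitude_le
      rcases lt_abs.1 (not_le.1 hwell) with hlt | hlt
      · exact .inr (by linarith)
      · exact .inl (by linarith))
    rw [add_sub_cancel_left] at hconvex
    linarith

theorem source_lt (h : ShearParameters c C δ κ μ d M k η ε) (hC : 0 ≤ C) (hμ : 0 < μ)
    (he : 0 < e) (hed : e ≤ d) {f g a b : ℝ} (ha : a ≤ C) (hb : -ε ≤ b)
    (hfg : f - (k ^ 2 + c * k) * M * e * p ≤ g - 7 / 8 * μ * e) :
    f + (k * (M * e)) ^ 2 * a - 2 * (k * (M * e)) * b -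
      (k ^ 2 + c * k) * (M * e * p - e) < g := by
  have hk := h.rate_pos
  have hM := h.ratio_pos
  have hsecond : (k * (M * e)) ^ 2 * a ≤ μ / 8 * e :=
    calc (k * (M * e)) ^ 2 * a ≤ (k * (M * e)) ^ 2 * C := by gcongr
      _ = M ^ 2 * k ^ 2 * C * e * e := by ring
      _ ≤ M ^ 2 * k ^ 2 * C * d * e := by gcongr
      _ ≤ μ / 8 * e := by gcongr; exact h.second_order_error_le
  have hmixed : -(μ / 16 * e) ≤ 2 * (k * (M * e)) * b :=
    calc -(μ / 16 * e) = 2 * (k * (M * e)) * (-ε) := by rw [← h.mixed_error_eq]; ring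
      _ ≤ 2 * (k * (M * e)) * b := by gcongr
  have hzeroth : (k ^ 2 + c * k) * e ≤ μ / 4 * e := by gcongr; exact h.growth_le
  linarith [mul_pos hμ he]

end ShearParameters

/-- Below height `n` and to the right of its axis, every sheared reflection with `l ≥ l₀` is a
strict supersolution of the equation for `u` wherever it does not exceed `u`. -/
structure ShearSupersolution (F : ℝ → ℝ) (c : ℝ) (u : ℝ → ℝ → ℝ) (d s k l₀ : ℝ) : Prop where
  amplitude_pos : 0 < d
  displacement_pos : 0 < s
  rate_pos : 0 < k
  exists_lt : ∀ l n τ x y, l₀ ≤ l → 0 ≤ τ → y ≤ n → shearedAxis s k l n y < x →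
    shearedReflection u d s k l n τ x y ≤ u x y →
    ∃ r < deriv F (shearedReflection u d s k l n τ x y),
      HasDriftLaplacian c (shearedReflection u d s k l n τ) x y r

namespace IsFront

variable {F : ℝ → ℝ} {c : ℝ} {u : ℝ → ℝ → ℝ} {δ μ : ℝ}

theorem exists_le_norm_of_lt (hu : IsFront F c u) (R : ℝ) :
    ∃ l₀, ∀ X Y x y, l₀ ≤ X + x → y ≤ Y → u X Y < u x y → R ≤ ‖(X, Y)‖ := by
  obtain ⟨q, -, hmin⟩ := (isCompact_closedBall (0 : ℝ × ℝ) |R|).exists_isMinOn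
    ⟨0, mem_closedBall_self (abs_nonneg R)⟩ hu.continuous.continuousOn
  obtain ⟨X₁, hX₁⟩ := eventually_atTop.1
    ((hu.tendsto_slice_atTop R).eventually_lt_const (hu.neg_one_lt q.1 q.2))
  refine ⟨X₁ + R, fun X Y x y hXx hyY hlt => ?_⟩
  by_contra! hnorm
  have hX : X ≤ R := (le_abs_self X).trans ((norm_fst_le (X, Y)).trans hnorm.le)
  have hY : Y ≤ R := (le_abs_self Y).trans ((norm_snd_le (X, Y)).trans hnorm.le)
  refine hlt.not_ge ?_
  calc u x y ≤ u x R := (hu.strictMono x).monotone (hyY.trans hY)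
    _ ≤ u q.1 q.2 := (hX₁ x (by linarith)).le
    _ ≤ u X Y := hmin (mem_closedBall_zero_iff.2 (hnorm.le.trans (le_abs_self R)))

theorem exists_shearSupersolution (hu : IsFront F c u) (hF : ConvexNearWells F δ μ) :
    ∃ d s k l₀, ShearSupersolution F c u d s k l₀ := by
  obtain ⟨C, hC⟩ := hu.exists_derivBounds
  obtain ⟨κ, hκ, hslope⟩ := hu.exists_pdx_bounds_of_le_right hF.radius_pos
  obtain ⟨d, M, k, η, ε, h⟩ :=
    exists_shearParameters hu.speed_pos hC.pos hF.radius_pos hκ hF.modulus_pos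
  obtain ⟨R₁, hR₁⟩ := hslope η h.slope_error_pos
  obtain ⟨R₂, hR₂⟩ := tendsto_cocompact_zero_iff.1 hu.tendsto_pdy_pdx_cocompact ε h.mixed_error_pos
  obtain ⟨L, hL⟩ := hu.exists_le_norm_of_lt (max R₁ R₂)
  have hd := h.amplitude_pos
  have hs : 0 < M * d / 2 := by have := h.ratio_pos; positivity
  refine ⟨d, M * d / 2, k, L / 2, hd, hs, h.rate_pos,
    fun l n τ x y hl hτ hy hx hle => ?_⟩
  obtain ⟨X, hX⟩ : ∃ X, X = 2 * shearedAxis (M * d / 2) k l n y - x := ⟨_, rfl⟩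
  obtain ⟨e, he⟩ : ∃ e, e = d * Real.exp (k * (y - n)) := ⟨_, rfl⟩
  have he0 : 0 < e := he ▸ by positivity
  have hed : e ≤ d := he ▸ mul_le_of_le_one_right hd.le
    (Real.exp_le_one_iff.2 (mul_nonpos_of_nonneg_of_nonpos h.rate_pos.le (by linarith)))
  refine ⟨_, ?_, hu.hasDriftLaplacian_shearedReflection (σ := M * e) hX he (by rw [he]; ring)⟩
  rw [shearedReflection, ← hX, ← he] at hle ⊢
  have hmono : u x y ≤ u x (y + τ) := (hu.strictMono x).monotone (by linarith)
  have hfar : max R₁ R₂ ≤ ‖(X, y + τ)‖ := by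
    have haxis : l ≤ shearedAxis (M * d / 2) k l n y := le_shearedAxis hs.le h.rate_pos.le hy
    exact hL X (y + τ) x y (by linarith) (by linarith) (by linarith)
  obtain ⟨hpx, hpx_band⟩ := hR₁ X x (y + τ) ((le_max_left _ _).trans hfar) (by linarith)
    (by linarith)
  exact h.source_lt hC.pos.le hF.modulus_pos he0 hed (abs_le.1 (hC.abs_pdxx_le X (y + τ))).2
    (abs_le.1 (hR₂ X (y + τ) ((le_max_right _ _).trans hfar))).1
    (h.deriv_sub_mul_le hu hC hF he0 hed (hu.neg_one_lt _ _).le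
      (hle.trans (hu.lt_one x y).le) hpx hpx_band)

end IsFront

namespace ShearSupersolution

variable {F : ℝ → ℝ} {c : ℝ} {u : ℝ → ℝ → ℝ} {δ μ d s k l₀ l n τ x y : ℝ}

theorem lt_of_shearedReflection_le (h : ShearSupersolution F c u d s k l₀) (hu : IsFront F c u)
    (htop : ∀ x, l < x → u x n < u (2 * l - x) n + d) (hτ : 0 < τ)
    (hxy : (x, y) ∈ shearedQuadrant s k l n)
    (hle : shearedReflection u d s k l n τ x y ≤ u x y) :
    y < n ∧ shearedAxis s k l n y < x := by
  obtain ⟨hy : y ≤ n, hx : shearedAxis s k l n y ≤ x⟩ := hxy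
  have hraise : 0 < d * Real.exp (k * (y - n)) := by have := h.amplitude_pos; positivity
  have hx' : shearedAxis s k l n y < x := by
    refine hx.lt_of_ne fun hax => hle.not_gt ?_
    rw [shearedReflection, hax, show 2 * x - x = x by ring]
    linarith [hu.strictMono x (lt_add_of_pos_right y hτ)]
  refine ⟨hy.lt_of_ne fun hyn => hle.not_gt ?_, hx'⟩
  rw [hyn, shearedAxis_self] at hx'
  rw [shearedReflection, hyn, shearedAxis_self, sub_self, mul_zero, Real.exp_zero, mul_one]
  linarith [htop x hx', hu.strictMono (2 * l - x) (lt_add_of_pos_right n hτ)]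

theorem le_shearedReflection_of_le_on (h : ShearSupersolution F c u d s k l₀) (hu : IsFront F c u)
    (hF : ConvexNearWells F δ μ) (hl : l₀ ≤ l)
    (htop : ∀ x, l < x → u x n < u (2 * l - x) n + d) (hτ : 0 < τ)
    (hK : ∀ x y, (x, y) ∈ shearedQuadrant s k l n → -1 + δ ≤ u x y →
      u x y ≤ shearedReflection u d s k l n τ x y)
    (hxy : (x, y) ∈ shearedQuadrant s k l n) :
    u x y ≤ shearedReflection u d s k l n τ x y := by
  have hcont := (hu.continuous_shearedReflection d s k l n).comp
    (by fun_prop : Continuous fun p : ℝ × ℝ => (τ, p))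
  refine hu.le_of_supersolution_near_wells hF (w := shearedReflection u d s k l n τ)
    (isClosed_shearedQuadrant s k l n) hcont
    (fun x y => (hu.neg_one_lt_shearedReflection h.amplitude_pos s k l n τ x y).le)
    (fun x y hmem hlt => ?_) hxy
  obtain ⟨hy, hx⟩ := h.lt_of_shearedReflection_le hu htop hτ hmem hlt.le
  obtain ⟨r, hr, hdrift⟩ := h.exists_lt l n τ x y hl hτ.le hy.le hx hlt.le
  have hlow : u x y < -1 + δ := not_le.1 fun hno => hlt.not_ge (hK x y hmem hno)
  exact ⟨shearedQuadrant_mem_nhds hy hx, .inl (by linarith [hF.radius_pos]), r, hr.le, hdrift⟩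

theorem ne_shearedReflection (h : ShearSupersolution F c u d s k l₀) (hu : IsFront F c u)
    (hl : l₀ ≤ l) (htop : ∀ x, l < x → u x n < u (2 * l - x) n + d) (hτ : 0 < τ)
    (hle : ∀ x y, (x, y) ∈ shearedQuadrant s k l n → u x y ≤ shearedReflection u d s k l n τ x y)
    (hxy : (x, y) ∈ shearedQuadrant s k l n) :
    shearedReflection u d s k l n τ x y ≠ u x y := by
  intro heq
  obtain ⟨hy, hx⟩ := h.lt_of_shearedReflection_le hu htop hτ hxy heq.le
  obtain ⟨r, hr, hdrift⟩ := h.exists_lt l n τ x y hl hτ.le hy.le hx heq.le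
  have hmin : IsLocalMin (fun p : ℝ × ℝ =>
      shearedReflection u d s k l n τ p.1 p.2 - u p.1 p.2) (x, y) := by
    filter_upwards [shearedQuadrant_mem_nhds hy hx] with p hp
    rw [heq, sub_self]
    exact sub_nonneg.2 (hle p.1 p.2 hp)
  have hnonneg := (hdrift.sub (hu.hasDriftLaplacian x y)).nonneg_of_isLocalMin hmin
  rw [heq] at hr
  linarith

theorem le_shearedReflection (h : ShearSupersolution F c u d s k l₀) (hu : IsFront F c u)
    (hF : ConvexNearWells F δ μ) (hl : l₀ ≤ l)
    (htop : ∀ x, l < x → u x n < u (2 * l - x) n + d) (hxy : (x, y) ∈ shearedQuadrant s k l n) :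
    u x y ≤ shearedReflection u d s k l n 0 x y := by
  set D := shearedQuadrant s k l n
  have hK : IsCompact (D ∩ {p | -1 + δ ≤ u p.1 p.2}) :=
    (hu.isCompact_setOf_le hF.radius_pos l n).of_isClosed_subset
      ((isClosed_shearedQuadrant s k l n).inter (isClosed_le continuous_const hu.continuous))
      fun p hp => ⟨(le_shearedAxis h.displacement_pos.le h.rate_pos.le hp.1.1).trans hp.1.2,
        hp.1.1, hp.2⟩
  have haxis := continuous_shearedAxis s k l n
  obtain ⟨T, hT⟩ := hu.exists_forall_lt_shift hK
    (X := fun p => 2 * shearedAxis s k l n p.2 - p.1) (by fun_prop)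
  have hgap : Continuous fun z : ℝ × (ℝ × ℝ) =>
      shearedReflection u d s k l n z.1 z.2.1 z.2.2 - u z.2.1 z.2.2 :=
    (hu.continuous_shearedReflection d s k l n).sub (hu.continuous.comp continuous_snd)
  have hslide := nonneg_of_sliding (D := D) hK hgap
    (fun τ hτ p hp => sub_pos.2 (lt_add_of_lt_of_nonneg (hT τ hτ p hp)
      (mul_pos h.amplitude_pos (Real.exp_pos _)).le))
    (fun τ hτ hnonneg p hp => sub_nonneg.2 (h.le_shearedReflection_of_le_on hu hF hl htop hτ
      (fun x y hmem hlow => sub_nonneg.1 (hnonneg (x, y) ⟨hmem, hlow⟩)) hp))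
    (fun τ hτ hnonneg p hp => sub_ne_zero.2 (h.ne_shearedReflection hu hl htop hτ
      (fun x y hmem => sub_nonneg.1 (hnonneg (x, y) hmem)) hp.1))
  exact sub_nonneg.1 (hslide (x, y) hxy)

theorem le_reflect_of_frequently (h : ShearSupersolution F c u d s k l₀) (hu : IsFront F c u)
    (hF : ConvexNearWells F δ μ) (hl : l₀ ≤ l)
    (htop : ∃ᶠ n in atTop, ∀ x, l < x → u x n < u (2 * l - x) n + d) (hx : l + s < x) :
    u x y ≤ u (2 * (l + s) - x) y := by
  refine ge_of_tendsto_of_frequently (hu.tendsto_shearedReflection_atTop h.rate_pos d s l x y) ?_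
  refine (htop.and_eventually (eventually_ge_atTop y)).mono fun n ⟨hn, hyn⟩ => ?_
  exact h.le_shearedReflection hu hF hl hn
    ⟨hyn, ((shearedAxis_lt h.displacement_pos k l n y).trans hx).le⟩

end ShearSupersolution

/-! ### Starting the moving planes -/

namespace SteepOutside

variable {F : ℝ → ℝ} {c : ℝ} {u : ℝ → ℝ → ℝ} {δ κ B x y z : ℝ}

theorem lt_neg_radius_of_lt (h : SteepOutside u δ κ B) (hu : IsFront F c u) (hδ : δ ≤ 1)
    (hstrip : ∀ t, |t| ≤ B → 1 - δ < u t y) (hzx : z < x) (hlt : u z y < u x y)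
    (hz : u z y ≤ 1 - δ) (hx : -1 + δ ≤ u x y) : z < -B := by
  by_contra! hBz
  rcases le_total z B with hzB | hzB
  · exact (hstrip z (abs_le.2 ⟨hBz, hzB⟩)).not_ge hz
  · linarith [h.slice_le_sub hu hδ hzB hzx.le hx hz, mul_pos h.slope_pos (sub_pos.2 hzx)]

theorem radius_lt_of_lt (h : SteepOutside u δ κ B) (hu : IsFront F c u) (hδ : δ ≤ 1)
    (hstrip : ∀ t, |t| ≤ B → 1 - δ < u t y) (hxz : x < z) (hlt : u z y < u x y)
    (hz : u z y ≤ 1 - δ) (hx : -1 + δ ≤ u x y) : B < z := by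
  by_contra! hzB
  rcases le_total (-B) z with hBz | hBz
  · exact (hstrip z (abs_le.2 ⟨hBz, hzB⟩)).not_ge hz
  · linarith [h.slice_le_sub_left hu hδ hBz hxz.le hx hz, mul_pos h.slope_pos (sub_pos.2 hxz)]

/- At height `y`, the values of `u` strictly between the wells occupy one window of width less than
`2 / κ` on each side of the strip. The inequality at `x` places the midpoint of the two windows to
the right of `l`, the one at `z` to the left of `m`, up to those widths. -/
theorem lt_of_reflect_lt_of_lt_reflect (h : SteepOutside u δ κ B) (hu : IsFront F c u) (hδ : δ ≤ 1)
    (hstrip : ∀ t, |t| ≤ B → 1 - δ < u t y) {l m : ℝ} (hml : 1 < κ * (l - m))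
    (hlx : l < x) (hx : u (2 * l - x) y < u x y) (hx_high : u (2 * l - x) y ≤ 1 - δ)
    (hx_low : -1 + δ ≤ u x y)
    (hmz : m < z) (hz : u z y < u (2 * m - z) y) (hz_high : u z y ≤ 1 - δ) :
    u (2 * m - z) y < -1 + δ := by
  by_contra! hz_low
  have hleft : 2 * l - x < -B :=
    h.lt_neg_radius_of_lt hu hδ hstrip (by linarith) hx hx_high hx_low
  have hright : B < z := h.radius_lt_of_lt hu hδ hstrip (by linarith) hz hz_high hz_low
  rcases le_total z x with hzx | hxz
  · have hright_fall := h.slice_le_sub hu hδ hright.le hzx hx_low hz_high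
    have hcross : 2 * l - x < 2 * m - z := by
      by_contra! hle
      linarith [h.slice_le_sub_left hu hδ hleft.le hle hz_low hx_high,
        mul_nonneg h.slope_pos.le (sub_nonneg.2 hle), mul_nonneg h.slope_pos.le (sub_nonneg.2 hzx)]
    have hwide : κ * (2 * (l - m)) ≤ κ * (x - z) :=
      mul_le_mul_of_nonneg_left (by linarith) h.slope_pos.le
    linarith [hu.lt_one z y, hu.neg_one_lt x y]
  · have hwide : κ * (2 * (l - m)) ≤ κ * (2 * l - x - (2 * m - z)) :=
      mul_le_mul_of_nonneg_left (by linarith) h.slope_pos.le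
    have hcross : 2 * m - z ≤ 2 * l - x :=
      sub_nonneg.1 (nonneg_of_mul_nonneg_right (by linarith) h.slope_pos)
    linarith [h.slice_le_sub_left hu hδ hleft.le hcross hz_low hx_high, hu.lt_one (2 * l - x) y,
      hu.neg_one_lt (2 * m - z) y]

end SteepOutside

namespace IsFront

variable {F : ℝ → ℝ} {c : ℝ} {u : ℝ → ℝ → ℝ}

theorem exists_reflect_lt (hu : IsFront F c u) (y : ℝ) :
    ∃ l x, l < x ∧ u (2 * l - x) y < u x y := by
  obtain ⟨X, hlt, hX⟩ := (((hu.mirror.tendsto_slice_atTop y).eventually_lt_const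
    (hu.neg_one_lt 0 y)).and (eventually_gt_atTop 0)).exists
  exact ⟨-X / 2, 0, by linarith, by rwa [show 2 * (-X / 2) - 0 = -X by ring]⟩

theorem exists_frequently_lt_reflect_add (hu : IsFront F c u) {d : ℝ} (hd : 0 < d) :
    ∃ l₀, ∀ l, l₀ ≤ l → ∃ᶠ n in atTop, ∀ x, l < x → u x n < u (2 * l - x) n + d := by
  by_contra! hviolated
  obtain ⟨δ₁, μ, hF₁⟩ := hu.exists_convexNearWells
  set δ := min δ₁ d
  have hδ : 0 < δ := lt_min hF₁.radius_pos hd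
  have hδd : δ ≤ d := min_le_right _ _
  have hF : ConvexNearWells F δ μ := hF₁.mono hδ (min_le_left _ _)
  have hδ1 : δ ≤ 1 := by linarith [hF.radius_le]
  obtain ⟨κ, B, hsteep⟩ := hu.exists_steepOutside hδ
  obtain ⟨Y, hY⟩ := hu.exists_gt_on_strip B hδ
  obtain ⟨l, x, hlx, hlt⟩ := hu.mirror.exists_reflect_lt 0
  obtain ⟨r, hr, hev⟩ := hviolated (-l + 2 / κ)
  obtain ⟨N, hN⟩ := eventually_atTop.1 hev
  have hfar : 1 < κ * (r - -l) := calc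
    1 < κ * (2 / κ) := by rw [mul_div_cancel₀ _ hsteep.slope_pos.ne']; norm_num
    _ ≤ κ * (r - -l) := mul_le_mul_of_nonneg_left (by linarith) hsteep.slope_pos.le
  refine hlt.not_ge (hu.mirror.le_reflect_of_high hF (Y := max Y N)
    (fun x y hy hx hxlt hhigh => ?_) hlx.le)
  obtain ⟨p, hp, hpd⟩ := hN y (le_of_max_le_right hy)
  have hz : 2 * -l - -(2 * l - x) = -x := by ring
  rw [← hz] at hxlt ⊢
  exact hsteep.lt_of_reflect_lt_of_lt_reflect hu hδ1 (fun t ht => hY t y ht (le_of_max_le_left hy))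
    hfar hp (by linarith) (by linarith [hu.lt_one p y]) (by linarith [hu.neg_one_lt (2 * r - p) y])
    (by linarith) hxlt hhigh

theorem exists_forall_le_reflect (hu : IsFront F c u) :
    ∃ l₁, ∀ l, l₁ < l → ∀ x y, l ≤ x → u x y ≤ u (2 * l - x) y := by
  obtain ⟨δ, μ, hF⟩ := hu.exists_convexNearWells
  obtain ⟨d, s, k, l₀, hshear⟩ := hu.exists_shearSupersolution hF
  obtain ⟨l₂, htop⟩ := hu.exists_frequently_lt_reflect_add hshear.amplitude_pos
  refine ⟨max l₀ l₂ + s, fun l hl x y hx => ?_⟩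
  rcases hx.eq_or_lt with rfl | hx
  · rw [two_mul, add_sub_cancel_right]
  · have hle := hshear.le_reflect_of_frequently hu hF (l := l - s) (x := x) (y := y)
      (by linarith [le_max_left l₀ l₂]) (htop _ (by linarith [le_max_right l₀ l₂])) (by linarith)
    rwa [sub_add_cancel] at hle

/- If equality held for one `l`, then `x ↦ u x y` would be symmetric about `l`. Combined with the
inequality for a slightly smaller `m`, it would be nondecreasing along steps of `2 (l - m)`. -/
theorem lt_reflect_of_forall_le (hu : IsFront F c u) {l₁ l x y : ℝ}
    (hle : ∀ l, l₁ < l → ∀ x y, l ≤ x → u x y ≤ u (2 * l - x) y) (hl : l₁ < l) (hx : l < x) :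
    u x y < u (2 * l - x) y := by
  by_contra! hge
  have hsymm : ∀ q, l ≤ q → u (2 * l - q) y ≤ u q y := by
    intro q hq
    by_contra! hlt
    have hstrict := hu.lt_reflect_of_lt (τ := 0) (by simpa only [add_zero] using hle l hl) hq hx
      (by rwa [add_zero])
    rw [add_zero] at hstrict
    exact hstrict.not_ge hge
  set m := (l₁ + l) / 2 with hm
  set P := 2 * (l - m) with hP
  have hP_pos : 0 < P := by linarith
  have hstep : ∀ t, m ≤ t → u t y ≤ u (t + P) y := fun t ht => calc
    u t y ≤ u (2 * m - t) y := hle m (by linarith) t y ht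
    _ = u (2 * l - (t + P)) y := by rw [hP]; ring_nf
    _ ≤ u (t + P) y := hsymm _ (by linarith)
  have hiter : ∀ n : ℕ, u m y ≤ u (m + n * P) y := by
    intro n
    induction n with
    | zero => simp
    | succ n ih =>
      refine ih.trans ((hstep _ (by linarith [mul_nonneg n.cast_nonneg hP_pos.le])).trans_eq ?_)
      push_cast
      ring_nf
  have hlim : Tendsto (fun n : ℕ => u (m + n * P) y) atTop (nhds (-1)) :=
    (hu.tendsto_slice_atTop y).comp
      (tendsto_atTop_add_const_left _ m (tendsto_natCast_atTop_atTop.atTop_mul_const hP_pos))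
  exact (hu.neg_one_lt m y).not_ge (ge_of_tendsto' hlim hiter)

end IsFront

theorem moving_plane_starts_general {F : ℝ → ℝ} {c : ℝ} {u : ℝ → ℝ → ℝ} (hu : IsFront F c u) :
    ∃ lam₁ : ℝ, ∀ lam : ℝ, lam₁ < lam → ∀ x y : ℝ, lam < x → u x y < u (2 * lam - x) y := by
  obtain ⟨l₁, hle⟩ := hu.exists_forall_le_reflect
  exact ⟨l₁, fun _ hl _ _ hx => hu.lt_reflect_of_forall_le hle hl hx⟩

/-- Starting the moving plane: for all sufficiently large `λ`, the reflection
`u(2λ - x, y)` dominates `u(x, y)` on the half-plane `x > λ` (Lemma 2.9). -/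
theorem moving_plane_starts
    (F : ℝ → ℝ) (hF : BalancedDoubleWell F) (c : ℝ) (hc : 0 < c)
    (u : ℝ → ℝ → ℝ) (hu : IsTravelingWave F c u) :
    ∃ lam₁ : ℝ, ∀ lam : ℝ, lam₁ < lam →
      ∀ x y : ℝ, lam < x → u x y < u (2 * lam - x) y :=
  moving_plane_starts_general (hu.isFront hF hc)
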